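/- There is a constant c > 0 such that R(x) > c·x^{−1/2}·log log log x for arbitrarily large x, and R(x) < −c·x^{−1/2}·log log log x for arbitrarily large x. (That is, R(x) = Ω_±( x^{−1/2} log log log x ), unconditionally.) -/

import Mathlib

open Filter

/-- `R(x) = ∑_{n ≤ x} Λ(n)/n - log x + γ`. -/
noncomputable def Rfun (x : ℝ) : ℝ :=
  (∑ n ∈ Finset.Icc 1 ⌊x⌋₊, ArithmeticFunction.vonMangoldt n / n) -
    Real.log x + Real.eulerMascheroniConstant

/-!
Write `r u = exp (u / 2) * R (exp u)`, and suppose that `r u` (or `-r u`) is at most a small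
multiple of `log log u` for large `u`. The Laplace transform of `r` is a quotient involving the
logarithmic derivative of `ζ`, and by Landau's theorem on Laplace transforms of nonnegative
functions the one-sided bound makes it analytic in `0 < re z`; thus the hypothesis already implies
the Riemann hypothesis.

Testing against a tent function cut off at height `T` gives an explicit formula: a weighted mean
of `r` near `v` equals, up to a bounded error, the difference of an archimedean integral and `π`
times a sum over the zeros of ordinate at most `T`. For `|v| ≤ 1` this mean is bounded, but at
`v = ±1/T` the archimedean integral is of size `log T`, with either sign, and hence so is the
sum over the zeros. There are `O(T^2)` of these zeros, so Dirichlet's simultaneous approximation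
gives an almost period `τ` of their sum with `log log τ ≪ log T`. At `v + τ` the archimedean
integral is bounded, so the mean of `r` is of size `log T`, with the sign that contradicts the
assumed bound.
-/

namespace RfunOmega

open MeasureTheory Topology Set ProbabilityTheory

section Landau

variable {Ω : Type*} [MeasurableSpace Ω] {μ : Measure Ω} {X : Ω → ℝ}

lemma hasSum_integral_pow_mul_exp {H : ℝ → ℝ} {q : FormalMultilinearSeries ℝ ℝ ℝ} {b y : ℝ}
    {r : ENNReal} (hb : b ∈ interior (integrableExpSet X μ)) (hq : HasFPowerSeriesOnBall H q b r)
    (hH : H =ᶠ[𝓝 b] mgf X μ) (hy : y ∈ Metric.eball (0 : ℝ) r) :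
    HasSum (fun n : ℕ ↦ (∫ ω, X ω ^ n * Real.exp (b * X ω) ∂μ) / n.factorial * y ^ n)
      (H (b + y)) := by
  have hsum := hq.hasSum hy
  rw [hq.hasFPowerSeriesAt.eq_formalMultilinearSeries
    ((hasFPowerSeriesAt_mgf hb).congr hH.symm)] at hsum
  simpa only [FormalMultilinearSeries.ofScalars_apply_eq, smul_eq_mul] using hsum

lemma integrable_exp_add_mul_of_summable (hX : AEMeasurable X μ) (hX0 : 0 ≤ᵐ[μ] X) {b y : ℝ}
    (hy : 0 ≤ y) (hint : ∀ n : ℕ, Integrable (fun ω ↦ X ω ^ n * Real.exp (b * X ω)) μ)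
    (hsum : Summable fun n : ℕ ↦
      (∫ ω, X ω ^ n * Real.exp (b * X ω) ∂μ) / n.factorial * y ^ n) :
    Integrable (fun ω ↦ Real.exp ((b + y) * X ω)) μ := by
  set F : ℕ → Ω → ℝ := fun n ω ↦ X ω ^ n * Real.exp (b * X ω) / n.factorial * y ^ n with hF
  have hF_int (n : ℕ) : Integrable (F n) μ := ((hint n).div_const _).mul_const _
  have hF_integral (n : ℕ) : ∫ ω, F n ω ∂μ =
      (∫ ω, X ω ^ n * Real.exp (b * X ω) ∂μ) / n.factorial * y ^ n := by
    rw [← integral_div, ← integral_mul_const]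
  have hF_nonneg : ∀ᵐ ω ∂μ, ∀ n, 0 ≤ F n ω := by
    filter_upwards [hX0] with ω hω n
    have : 0 ≤ X ω := hω
    positivity
  have hF_hasSum (ω : Ω) : HasSum (F · ω) (Real.exp ((b + y) * X ω)) := by
    have hexp := NormedSpace.expSeries_div_hasSum_exp (𝔸 := ℝ) (X ω * y)
    rw [← Real.exp_eq_exp_ℝ] at hexp
    rw [show (b + y) * X ω = X ω * y + b * X ω by ring, Real.exp_add]
    refine (hexp.mul_right (Real.exp (b * X ω))).congr_fun fun n ↦ ?_
    simp only [hF, mul_pow]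
    ring
  have hlint : ∫⁻ ω, ENNReal.ofReal (Real.exp ((b + y) * X ω)) ∂μ =
      ∑' n, ENNReal.ofReal (∫ ω, F n ω ∂μ) := by
    calc ∫⁻ ω, ENNReal.ofReal (Real.exp ((b + y) * X ω)) ∂μ
        = ∫⁻ ω, ∑' n, ENNReal.ofReal (F n ω) ∂μ := by
          refine lintegral_congr_ae ?_
          filter_upwards [hF_nonneg] with ω hω
          rw [← ENNReal.ofReal_tsum_of_nonneg hω (hF_hasSum ω).summable, (hF_hasSum ω).tsum_eq]
      _ = ∑' n, ∫⁻ ω, ENNReal.ofReal (F n ω) ∂μ :=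
          lintegral_tsum fun n ↦ (hF_int n).1.aemeasurable.ennreal_ofReal
      _ = ∑' n, ENNReal.ofReal (∫ ω, F n ω ∂μ) := tsum_congr fun n ↦
          (ofReal_integral_eq_lintegral_ofReal (hF_int n) (hF_nonneg.mono fun _ h ↦ h n)).symm
  refine ⟨by fun_prop, ?_⟩
  rw [hasFiniteIntegral_iff_ofReal (Eventually.of_forall fun ω ↦ (Real.exp_pos _).le), hlint]
  simp_rw [hF_integral]
  exact hsum.tsum_ofReal_lt_top

lemma integrable_exp_mul_of_le (hX : AEMeasurable X μ) (hX0 : 0 ≤ᵐ[μ] X) {s t : ℝ} (hst : s ≤ t)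
    (ht : Integrable (fun ω ↦ Real.exp (t * X ω)) μ) :
    Integrable (fun ω ↦ Real.exp (s * X ω)) μ := by
  refine ht.mono' (by fun_prop) ?_
  filter_upwards [hX0] with ω hω
  rw [Real.norm_eq_abs, Real.abs_exp]
  exact Real.exp_le_exp.2 (mul_le_mul_of_nonneg_right hst hω)

lemma exists_gt_integrable_exp_mul_of_analyticAt (hX : AEMeasurable X μ) (hX0 : 0 ≤ᵐ[μ] X)
    {H : ℝ → ℝ} {a : ℝ} (hH : AnalyticAt ℝ H a)
    (hint : ∀ t < a, Integrable (fun ω ↦ Real.exp (t * X ω)) μ)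
    (heq : ∀ t < a, mgf X μ t = H t) :
    ∃ a' > a, Integrable (fun ω ↦ Real.exp (a' * X ω)) μ := by
  obtain ⟨p, r, hp⟩ := hH
  obtain ⟨ρ, hρ, hρr⟩ : ∃ ρ : NNReal, 0 < ρ ∧ (ρ : ENNReal) < r :=
    ENNReal.lt_iff_exists_nnreal_btwn.1 hp.r_pos |>.imp fun _ h ↦ ⟨by exact_mod_cast h.1, h.2⟩
  have : (0 : ℝ) < ρ := hρ
  -- The power series of `H` at `b = a - ρ/4` still converges at `b + ρ/2 > a`.
  set b : ℝ := a + -(ρ / 4) with hb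
  have hba : b < a := by linarith
  have hnorm : ‖-(ρ / 4 : ℝ)‖₊ = ρ / 4 := by ext; simp
  have hpb := (hp.mono (by exact_mod_cast hρ) hρr.le).changeOrigin (y := -(ρ / 4 : ℝ)) (by
    rw [hnorm]; exact_mod_cast div_lt_self hρ (by norm_num))
  have hbint : b ∈ interior (integrableExpSet X μ) :=
    interior_maximal hint isOpen_Iio hba
  have hmem : (ρ / 2 : ℝ) ∈ Metric.eball (0 : ℝ) ((ρ : ENNReal) - ‖-(ρ / 4 : ℝ)‖₊) := by
    rw [hnorm, ← ENNReal.coe_sub, Metric.mem_eball, edist_zero_right, enorm_eq_nnnorm,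
      ENNReal.coe_lt_coe, ← NNReal.coe_lt_coe,
      NNReal.coe_sub (div_le_self (by positivity) (by norm_num)), coe_nnnorm, Real.norm_eq_abs,
      abs_of_pos (by positivity)]
    push_cast
    linarith
  have hHb : H =ᶠ[𝓝 b] mgf X μ := by
    filter_upwards [Iio_mem_nhds hba] with t ht using (heq t ht).symm
  refine ⟨b + ρ / 2, by linarith, ?_⟩
  exact integrable_exp_add_mul_of_summable hX hX0 (by positivity)
    (integrable_pow_mul_exp_of_mem_interior_integrableExpSet hbint)
    (hasSum_integral_pow_mul_exp hbint hpb hHb hmem).summable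

/-- **Landau's theorem**, in the language of moment generating functions. -/
theorem integrable_exp_mul_of_analyticOnNhd (hX : AEMeasurable X μ) (hX0 : 0 ≤ᵐ[μ] X)
    {H : ℝ → ℝ} {b c : ℝ} (hH : AnalyticOnNhd ℝ H (Iio c))
    (hint : ∀ t < b, Integrable (fun ω ↦ Real.exp (t * X ω)) μ)
    (heq : ∀ t < b, mgf X μ t = H t) {t : ℝ} (ht : t < c) :
    Integrable (fun ω ↦ Real.exp (t * X ω)) μ := by
  by_contra hnot
  set I : Set ℝ := integrableExpSet X μ
  have hlt : ∀ s ∈ I, s < t := fun s hs ↦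
    lt_of_not_ge fun hts ↦ hnot (integrable_exp_mul_of_le hX hX0 hts hs)
  have hne : I.Nonempty := ⟨b - 1, hint _ (sub_one_lt b)⟩
  have hbdd : BddAbove I := ⟨t, fun s hs ↦ (hlt s hs).le⟩
  have hac : sSup I < c := (csSup_le hne fun s hs ↦ (hlt s hs).le).trans_lt ht
  have hIio : Iio (sSup I) ⊆ I := fun s hs ↦ by
    obtain ⟨u, hu, hsu⟩ := exists_lt_of_lt_csSup hne hs
    exact integrable_exp_mul_of_le hX hX0 hsu.le hu
  have hEq : EqOn (mgf X μ) H (Iio (sSup I)) := by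
    have hmin : min (sSup I) b - 1 < min (sSup I) b := sub_one_lt _
    have hmgf := analyticOnNhd_mgf.mono (interior_maximal hIio isOpen_Iio)
    refine hmgf.eqOn_of_preconnected_of_eventuallyEq
      (hH.mono (Iio_subset_Iio hac.le)) isPreconnected_Iio (hmin.trans_le (min_le_left _ _)) ?_
    filter_upwards [Iio_mem_nhds (hmin.trans_le (min_le_right _ _))] with s hs using heq s hs
  obtain ⟨a', ha', hint'⟩ :=
    exists_gt_integrable_exp_mul_of_analyticAt hX hX0 (hH _ hac) hIio hEq
  exact absurd (le_csSup hbdd hint') ha'.not_ge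

end Landau

section Laplace

/-- The Laplace transform `∫₀^∞ g(u) e^{-zu} du`. -/
noncomputable def laplace (g : ℝ → ℝ) (z : ℂ) : ℂ :=
  ∫ u in Ioi (0 : ℝ), (g u : ℂ) * Complex.exp (-z * u)

/-- Absolute convergence of the Laplace integral of `g` on the line of real part `σ`. -/
def LaplaceIntegrable (g : ℝ → ℝ) (σ : ℝ) : Prop :=
  IntegrableOn (fun u ↦ g u * Real.exp (-σ * u)) (Ioi 0)

variable {f g : ℝ → ℝ} {σ : ℝ} {z : ℂ}

lemma norm_cexp_neg_mul (z : ℂ) (u : ℝ) : ‖Complex.exp (-z * u)‖ = Real.exp (-z.re * u) := by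
  rw [Complex.norm_exp]; simp

namespace LaplaceIntegrable

lemma sub (hf : LaplaceIntegrable f σ) (hg : LaplaceIntegrable g σ) :
    LaplaceIntegrable (fun u ↦ f u - g u) σ := by
  simpa only [LaplaceIntegrable, sub_mul] using! Integrable.sub hf hg

lemma const_mul (hg : LaplaceIntegrable g σ) (c : ℝ) :
    LaplaceIntegrable (fun u ↦ c * g u) σ := by
  simpa only [LaplaceIntegrable, mul_assoc] using! Integrable.const_mul hg c

lemma mono (hg : LaplaceIntegrable g σ) (hf : Measurable f) (h : ∀ u, 0 < u → |f u| ≤ |g u|) :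
    LaplaceIntegrable f σ := by
  refine Integrable.mono hg (by fun_prop) ?_
  filter_upwards [ae_restrict_mem measurableSet_Ioi] with u hu
  rw [norm_mul, norm_mul]
  exact mul_le_mul_of_nonneg_right (h u hu) (norm_nonneg _)

lemma integrableOn (hm : Measurable g) (hg : LaplaceIntegrable g z.re) :
    IntegrableOn (fun u : ℝ ↦ (g u : ℂ) * Complex.exp (-z * u)) (Ioi 0) :=
  Integrable.mono hg (by fun_prop)
    (Eventually.of_forall fun u ↦ by simp [Complex.norm_exp])

end LaplaceIntegrable

lemma laplaceIntegrable_const (c : ℝ) (hσ : 0 < σ) : LaplaceIntegrable (fun _ ↦ c) σ :=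
  (exp_neg_integrableOn_Ioi 0 hσ).const_mul c

lemma laplace_sub (hf : Measurable f) (hg : Measurable g) (hfi : LaplaceIntegrable f z.re)
    (hgi : LaplaceIntegrable g z.re) :
    laplace (fun u ↦ f u - g u) z = laplace f z - laplace g z := by
  simp only [laplace, Complex.ofReal_sub, sub_mul]
  exact integral_sub (hfi.integrableOn hf) (hgi.integrableOn hg)

lemma laplace_const_mul (c : ℝ) (g : ℝ → ℝ) (z : ℂ) :
    laplace (fun u ↦ c * g u) z = c * laplace g z := by
  simp only [laplace, Complex.ofReal_mul, mul_assoc]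
  exact integral_const_mul _ _

lemma laplace_ofReal (g : ℝ → ℝ) (σ : ℝ) :
    laplace g σ = ((∫ u in Ioi (0 : ℝ), g u * Real.exp (-σ * u) : ℝ) : ℂ) := by
  rw [← integral_complex_ofReal]
  simp [laplace]

/-- The measure `g(u) du` on the positive half line, whose moment generating function at `-σ` is the
Laplace transform of `g ≥ 0` at `σ`. -/
noncomputable def halfLineMeasure (g : ℝ → ℝ) : Measure ℝ :=
  (volume.restrict (Ioi 0)).withDensity fun u ↦ ENNReal.ofReal (g u)

lemma zero_le_id_ae_halfLineMeasure (g : ℝ → ℝ) : 0 ≤ᵐ[halfLineMeasure g] id :=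
  (withDensity_absolutelyContinuous _ _).ae_le <|
    (ae_restrict_mem measurableSet_Ioi).mono fun _ hu ↦ le_of_lt hu

lemma neg_mem_integrableExpSet_halfLineMeasure (hg : Measurable g) (hpos : ∀ u, 0 < u → 0 ≤ g u) :
    -σ ∈ integrableExpSet id (halfLineMeasure g) ↔ LaplaceIntegrable g σ := by
  rw [integrableExpSet, mem_ofPred_eq, halfLineMeasure,
    integrable_withDensity_iff_integrable_smul' hg.ennreal_ofReal (by simp)]
  refine integrable_congr ?_
  filter_upwards [ae_restrict_mem measurableSet_Ioi] with u hu
  simp [ENNReal.toReal_ofReal (hpos u hu)]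

lemma complexMGF_halfLineMeasure (hg : Measurable g) (hpos : ∀ u, 0 < u → 0 ≤ g u) (z : ℂ) :
    complexMGF id (halfLineMeasure g) (-z) = laplace g z := by
  rw [complexMGF, halfLineMeasure,
    integral_withDensity_eq_integral_toReal_smul hg.ennreal_ofReal (by simp), laplace]
  refine setIntegral_congr_fun measurableSet_Ioi fun u hu ↦ ?_
  simp [ENNReal.toReal_ofReal (hpos u hu)]

theorem laplaceIntegrable_of_analyticAt (hg : Measurable g) (hpos : ∀ u, 0 < u → 0 ≤ g u)
    {H : ℂ → ℂ} {a b : ℝ} (hH : ∀ s : ℝ, a < s → AnalyticAt ℂ H s)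
    (hint : ∀ s, b < s → LaplaceIntegrable g s) (heq : ∀ s : ℝ, b < s → laplace g s = H s)
    (hσ : a < σ) : LaplaceIntegrable g σ := by
  rw [← neg_mem_integrableExpSet_halfLineMeasure hg hpos]
  refine integrable_exp_mul_of_analyticOnNhd (b := -b) (c := -a) aemeasurable_id
    (zero_le_id_ae_halfLineMeasure g) (H := fun t ↦ (H ((-t : ℝ) : ℂ)).re)
    (fun t ht ↦ ?_) (fun t ht ↦ ?_) (fun t ht ↦ ?_) (neg_lt_neg hσ)
  · exact (hH (-t) (lt_neg_of_lt_neg ht)).re_ofReal.comp_of_eq analyticAt_id.neg rfl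
  · have := (neg_mem_integrableExpSet_halfLineMeasure hg hpos).2 (hint (-t) (lt_neg_of_lt_neg ht))
    rwa [neg_neg] at this
  · rw [← heq (-t) (lt_neg_of_lt_neg ht), ← complexMGF_halfLineMeasure hg hpos,
      ← re_complexMGF_ofReal]
    simp

lemma analyticAt_laplace_of_nonneg (hg : Measurable g) (hpos : ∀ u, 0 < u → 0 ≤ g u) {a : ℝ}
    (hint : ∀ σ, a < σ → LaplaceIntegrable g σ) (hz : a < z.re) :
    AnalyticAt ℂ (laplace g) z := by
  rw [show laplace g = complexMGF id (halfLineMeasure g) ∘ Neg.neg from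
    funext fun w ↦ (complexMGF_halfLineMeasure hg hpos w).symm]
  refine (analyticAt_complexMGF ?_).comp analyticAt_id.neg
  have hsub : Iio (-a) ⊆ integrableExpSet id (halfLineMeasure g) := fun t ht ↦ by
    have := (neg_mem_integrableExpSet_halfLineMeasure hg hpos).2 (hint (-t) (lt_neg_of_lt_neg ht))
    rwa [neg_neg] at this
  exact interior_maximal hsub isOpen_Iio (by simpa using hz)

theorem analyticAt_laplace (hg : Measurable g) {a : ℝ}
    (hint : ∀ σ, a < σ → LaplaceIntegrable g σ) (hz : a < z.re) :
    AnalyticAt ℂ (laplace g) z := by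
  have hpos : Measurable fun u ↦ max (g u) 0 := hg.max measurable_const
  have hneg : Measurable fun u ↦ max (-g u) 0 := hg.neg.max measurable_const
  have hpos_int (σ : ℝ) (hσ : a < σ) : LaplaceIntegrable (fun u ↦ max (g u) 0) σ :=
    (hint σ hσ).mono hpos fun u _ ↦ by
      rw [abs_of_nonneg (le_max_right _ _)]
      exact max_le (le_abs_self _) (abs_nonneg _)
  have hneg_int (σ : ℝ) (hσ : a < σ) : LaplaceIntegrable (fun u ↦ max (-g u) 0) σ :=
    (hint σ hσ).mono hneg fun u _ ↦ by
      rw [abs_of_nonneg (le_max_right _ _)]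
      exact max_le (neg_le_abs _) (abs_nonneg _)
  refine ((analyticAt_laplace_of_nonneg hpos (fun _ _ ↦ le_max_right _ _) hpos_int hz).sub
    (analyticAt_laplace_of_nonneg hneg (fun _ _ ↦ le_max_right _ _) hneg_int hz)).congr ?_
  filter_upwards [(isOpen_lt continuous_const Complex.continuous_re).mem_nhds hz] with w hw
  rw [Pi.sub_apply, ← laplace_sub hpos hneg (hpos_int _ hw) (hneg_int _ hw)]
  congr 1
  ext u
  exact max_zero_sub_eq_self (g u)

lemma one_add_sq_le_const_mul_exp {b : ℝ} (hb : 0 < b) :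
    ∃ C : ℝ, 0 < C ∧ ∀ u : ℝ, 0 ≤ u → (1 + u) ^ 2 ≤ C * Real.exp (b * u) := by
  refine ⟨(max 1 (2 / b)) ^ 2, by positivity, fun u hu ↦ ?_⟩
  have hlin : 1 + u ≤ max 1 (2 / b) * Real.exp (b / 2 * u) := by
    calc 1 + u = 1 + 2 / b * (b / 2 * u) := by field_simp
      _ ≤ max 1 (2 / b) * 1 + max 1 (2 / b) * (b / 2 * u) := by
        gcongr
        · exact (le_max_left _ _).trans_eq (mul_one _).symm
        · exact le_max_right _ _
      _ = max 1 (2 / b) * (b / 2 * u + 1) := by ring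
      _ ≤ max 1 (2 / b) * Real.exp (b / 2 * u) := by gcongr; exact Real.add_one_le_exp _
  calc (1 + u) ^ 2 ≤ (max 1 (2 / b) * Real.exp (b / 2 * u)) ^ 2 := by gcongr
    _ = _ := by rw [mul_pow, ← Real.exp_nat_mul]; congr 2; push_cast; ring

lemma laplaceIntegrable_of_abs_le (hg : Measurable g) {a C : ℝ}
    (hle : ∀ u, 0 < u → |g u| ≤ C * (Real.exp (a * u) * (1 + u) ^ 2)) (hσ : a < σ) :
    LaplaceIntegrable g σ := by
  obtain ⟨D, -, h⟩ := one_add_sq_le_const_mul_exp (b := (σ - a) / 2) (by linarith)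
  refine Integrable.mono' ((exp_neg_integrableOn_Ioi (b := (σ - a) / 2) 0
    (by linarith)).const_mul (|C| * D)) (by fun_prop) ?_
  filter_upwards [ae_restrict_mem measurableSet_Ioi] with u hu
  rw [norm_mul, Real.norm_eq_abs, Real.norm_eq_abs, Real.abs_exp]
  calc |g u| * Real.exp (-σ * u)
      ≤ (|C| * (Real.exp (a * u) * (D * Real.exp ((σ - a) / 2 * u)))) * Real.exp (-σ * u) := by
        refine mul_le_mul_of_nonneg_right ((hle u hu).trans ?_) (Real.exp_pos _).le
        gcongr
        · exact le_abs_self C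
        · exact h u (le_of_lt hu)
    _ = |C| * D * (Real.exp (a * u) * Real.exp ((σ - a) / 2 * u) * Real.exp (-σ * u)) := by ring
    _ = |C| * D * Real.exp (-((σ - a) / 2) * u) := by
        rw [← Real.exp_add, ← Real.exp_add]; congr 2; ring

lemma laplace_one (hz : 0 < z.re) : laplace (fun _ ↦ 1) z = 1 / z := by
  simp only [laplace, Complex.ofReal_one, one_mul]
  rw [integral_exp_mul_complex_Ioi (by simpa using hz)]
  simp only [Complex.ofReal_zero, mul_zero, Complex.exp_zero, neg_div_neg_eq]

lemma laplace_id (hz : 0 < z.re) : laplace (fun u ↦ u) z = 1 / z ^ 2 := by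
  have hone : Measurable fun _ : ℝ ↦ (1 : ℝ) := measurable_const
  have hpos : ∀ u : ℝ, 0 < u → (0 : ℝ) ≤ 1 := fun _ _ ↦ zero_le_one
  have hsub : Iio (0 : ℝ) ⊆ integrableExpSet id (halfLineMeasure fun _ ↦ 1) := fun t ht ↦ by
    simpa using (neg_mem_integrableExpSet_halfLineMeasure hone hpos).2
      (laplaceIntegrable_const 1 (neg_pos.2 ht))
  have hderiv := hasDerivAt_complexMGF (X := id) (μ := halfLineMeasure fun _ ↦ 1) (z := -z)
    (interior_maximal hsub isOpen_Iio (by simpa using hz))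
  have hinv : HasDerivAt (complexMGF id (halfLineMeasure fun _ ↦ 1)) (1 / z ^ 2) (-z) := by
    have hz0 : -z ≠ 0 := neg_ne_zero.2 fun h ↦ by simp [h] at hz
    refine ((hasDerivAt_inv hz0).neg.congr_deriv (by simp)).congr_of_eventuallyEq ?_
    filter_upwards [(isOpen_lt Complex.continuous_re continuous_const).mem_nhds
      (show (-z).re < 0 by simpa using hz)] with w hw
    rw [← neg_neg w, complexMGF_halfLineMeasure hone hpos, laplace_one (by simpa using hw)]
    simp
  rw [← hderiv.unique hinv, halfLineMeasure,
    integral_withDensity_eq_integral_toReal_smul (by fun_prop) (by simp), laplace]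
  simp

lemma laplaceIntegrable_id (hσ : 0 < σ) : LaplaceIntegrable (fun u ↦ u) σ :=
  laplaceIntegrable_of_abs_le measurable_id (a := 0) (C := 1)
    (fun u hu ↦ by
      rw [abs_of_pos hu, zero_mul, Real.exp_zero, one_mul, one_mul]
      nlinarith) hσ

theorem LSeries_eq_mul_laplace {a : ℕ → ℝ} (ha : ∀ n, 0 ≤ a n) {r : ℝ} (hr : 0 ≤ r) (hz : r < z.re)
    (hO : (fun N : ℕ ↦ ∑ n ∈ Finset.Icc 1 N, a n) =O[atTop] fun N ↦ (N : ℝ) ^ r) :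
    LSeries (fun n ↦ (a n : ℂ)) z =
      z * laplace (fun u ↦ ∑ n ∈ Finset.Icc 1 ⌊Real.exp u⌋₊, a n) z := by
  rw [LSeries_eq_mul_integral_of_nonneg a hr hz hO ha, laplace, ← Real.exp_zero,
    ← integral_comp_exp_Ioi
      (fun t : ℝ ↦ (∑ n ∈ Finset.Icc 1 ⌊t⌋₊, (a n : ℂ)) * (t : ℂ) ^ (-(z + 1))) 0]
  congr 1
  refine setIntegral_congr_fun measurableSet_Ioi fun u _ ↦ ?_
  simp only [Complex.real_smul, Complex.ofReal_sum]
  rw [Complex.ofReal_exp, Complex.cpow_def_of_ne_zero (Complex.exp_ne_zero _),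
    ← Complex.ofReal_exp, ← Complex.ofReal_log (Real.exp_pos _).le, Real.log_exp,
    mul_left_comm, Complex.ofReal_exp, ← Complex.exp_add]
  congr 2
  ring

lemma measurable_sum_Icc_floor_exp (a : ℕ → ℝ) :
    Measurable fun u : ℝ ↦ ∑ n ∈ Finset.Icc 1 ⌊Real.exp u⌋₊, a n :=
  (measurable_from_nat (f := fun N ↦ ∑ n ∈ Finset.Icc 1 N, a n)).comp
    (Nat.measurable_floor.comp Real.measurable_exp)

end Laplace

section ZetaHalfPlane

lemma isPreconnected_re_pos : IsPreconnected {s : ℂ | 0 < s.re} :=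
  (convex_halfSpace_re_gt 0).isPreconnected

lemma analyticAt_riemannZeta₁ (s : ℂ) : AnalyticAt ℂ riemannZeta₁ s :=
  differentiable_riemannZeta₁.analyticAt s

lemma riemannZeta₁_eq_of_ne_one {s : ℂ} (hs : s ≠ 1) :
    riemannZeta₁ s = (s - 1) * riemannZeta s := by
  rw [riemannZeta_eq_inv_sub_mul hs, mul_inv_cancel_left₀ (sub_ne_zero.2 hs)]

lemma riemannZeta₁_ne_zero_of_one_le_re {s : ℂ} (hs : 1 ≤ s.re) : riemannZeta₁ s ≠ 0 := by
  rcases eq_or_ne s 1 with rfl | h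
  · simp
  · rw [riemannZeta₁_eq_of_ne_one h]
    exact mul_ne_zero (sub_ne_zero.2 h) (riemannZeta_ne_zero_of_one_le_re hs)

lemma deriv_riemannZeta₁_of_ne_one {s : ℂ} (hs : s ≠ 1) :
    deriv riemannZeta₁ s = riemannZeta s + (s - 1) * deriv riemannZeta s := by
  have heq : riemannZeta₁ =ᶠ[𝓝 s] fun w ↦ (w - 1) * riemannZeta w := by
    filter_upwards [isOpen_ne.mem_nhds hs] with w hw using riemannZeta₁_eq_of_ne_one hw
  rw [heq.deriv_eq]
  refine HasDerivAt.deriv ((((hasDerivAt_id s).sub_const 1).mul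
    (differentiableAt_riemannZeta hs).hasDerivAt).congr_deriv ?_)
  simp

lemma riemannZeta₁_not_eventually_zero (s : ℂ) : ¬ ∀ᶠ w in 𝓝 s, riemannZeta₁ w = 0 := fun h ↦ by
  have := AnalyticOnNhd.eqOn_zero_of_preconnected_of_eventuallyEq_zero (𝕜 := ℂ) (U := univ)
    (fun s _ ↦ analyticAt_riemannZeta₁ s) isPreconnected_univ (mem_univ s) h (mem_univ 1)
  simp at this

lemma measurable_fract_exp : Measurable fun u : ℝ ↦ Int.fract (Real.exp u) :=
  Real.measurable_exp.fract

lemma laplaceIntegrable_fract_exp {σ : ℝ} (hσ : 0 < σ) :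
    LaplaceIntegrable (fun u ↦ Int.fract (Real.exp u)) σ :=
  (laplaceIntegrable_const 1 hσ).mono measurable_fract_exp fun u _ ↦ by
    rw [Int.abs_fract, abs_one]
    exact (Int.fract_lt_one _).le

lemma laplaceIntegrable_exp {a σ : ℝ} (hσ : a < σ) :
    LaplaceIntegrable (fun u ↦ Real.exp (a * u)) σ :=
  laplaceIntegrable_of_abs_le (by fun_prop) (C := 1) (fun u hu ↦ by
    rw [one_mul, Real.abs_exp]
    exact le_mul_of_one_le_right (Real.exp_pos _).le (by nlinarith)) hσ

lemma laplace_exp_mul (a : ℝ) (g : ℝ → ℝ) (z : ℂ) :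
    laplace (fun u ↦ Real.exp (a * u) * g u) (z + a) = laplace g z := by
  simp only [laplace]
  congr! 2 with u
  rw [Complex.ofReal_mul, Complex.ofReal_exp, mul_right_comm, ← Complex.exp_add, mul_comm]
  congr 2
  push_cast
  ring

lemma laplace_floor_exp {s : ℂ} (hs : 1 < s.re) :
    laplace (fun u ↦ ⌊Real.exp u⌋₊) s =
      1 / (s - 1) - laplace (fun u ↦ Int.fract (Real.exp u)) s := by
  have hexp : laplace (fun u ↦ Real.exp (1 * u)) s = 1 / (s - 1) := by
    rw [← laplace_one (by simpa using hs : 0 < (s - 1).re), ← laplace_exp_mul 1 (fun _ ↦ 1)]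
    simp
  rw [← hexp, ← laplace_sub (by fun_prop) measurable_fract_exp (laplaceIntegrable_exp hs)
    (laplaceIntegrable_fract_exp (by linarith))]
  congr 1
  ext u
  rw [one_mul, Int.self_sub_fract, natCast_floor_eq_intCast_floor (Real.exp_pos _).le]

lemma riemannZeta₁_eq_laplace_of_one_lt_re {s : ℂ} (hs : 1 < s.re) :
    riemannZeta₁ s = s - s * (s - 1) * laplace (fun u ↦ Int.fract (Real.exp u)) s := by
  have hs1 : s ≠ 1 := fun h ↦ by simp [h] at hs
  have hζ := LSeries_eq_mul_laplace (a := fun _ ↦ 1) (fun _ ↦ zero_le_one) zero_le_one hs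
    (by simpa using Asymptotics.isBigO_refl _ _)
  have hL : LSeries (fun _ ↦ ((1 : ℝ) : ℂ)) s = riemannZeta s := by
    rw [← LSeries_one_eq_riemannZeta hs]
    exact LSeries_congr (by simp) s
  simp only [hL, Finset.sum_const, Nat.card_Icc, add_tsub_cancel_right, nsmul_eq_mul,
    mul_one, laplace_floor_exp hs] at hζ
  rw [riemannZeta₁_eq_of_ne_one hs1, hζ]
  have := sub_ne_zero.2 hs1
  field_simp

theorem riemannZeta₁_eq_laplace {s : ℂ} (hs : 0 < s.re) :
    riemannZeta₁ s = s - s * (s - 1) * laplace (fun u ↦ Int.fract (Real.exp u)) s := by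
  refine AnalyticOnNhd.eqOn_of_preconnected_of_eventuallyEq (𝕜 := ℂ) (z₀ := 2)
    (g := fun s ↦ s - s * (s - 1) * laplace (fun u ↦ Int.fract (Real.exp u)) s)
    (fun s _ ↦ analyticAt_riemannZeta₁ s) (fun w hw ↦ ?_) isPreconnected_re_pos (by simp) ?_ hs
  · have := analyticAt_laplace measurable_fract_exp (fun _ ↦ laplaceIntegrable_fract_exp) hw
    fun_prop
  · filter_upwards [(isOpen_lt continuous_const Complex.continuous_re).mem_nhds
      (show (1 : ℝ) < (2 : ℂ).re by simp)] with w hw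
    exact riemannZeta₁_eq_laplace_of_one_lt_re hw

theorem riemannZeta₁_ofReal_ne_zero {σ : ℝ} (hσ : 0 < σ) : riemannZeta₁ σ ≠ 0 := by
  rcases le_or_gt 1 σ with h | h
  · exact riemannZeta₁_ne_zero_of_one_le_re (by simpa using h)
  rw [riemannZeta₁_eq_laplace (by simpa using hσ), laplace_ofReal]
  set J := ∫ u in Ioi (0 : ℝ), Int.fract (Real.exp u) * Real.exp (-σ * u)
  have hJ : 0 ≤ J := integral_nonneg fun u ↦ mul_nonneg (Int.fract_nonneg _) (Real.exp_pos _).le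
  have hpos : 0 < σ - σ * (σ - 1) * J := by
    nlinarith [mul_nonneg (mul_nonneg hσ.le (sub_pos.2 h).le) hJ]
  exact_mod_cast hpos.ne'

lemma ne_zero_of_deriv_eventuallyEq_mul {f h : ℂ → ℂ} {s : ℂ} (hf : AnalyticAt ℂ f s)
    (hh : AnalyticAt ℂ h s) (hne : ¬ ∀ᶠ w in 𝓝 s, f w = 0) (heq : deriv f =ᶠ[𝓝 s] f * h) :
    f s ≠ 0 := fun h0 ↦ by
  have horder : analyticOrderAt f s + analyticOrderAt h s + 1 = analyticOrderAt f s := by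
    simpa only [h0, sub_zero, analyticOrderAt_congr heq, analyticOrderAt_mul hf hh] using
      hf.analyticOrderAt_deriv_add_one
  obtain ⟨n, hn⟩ := ENat.ne_top_iff_exists.1 fun h ↦ hne (analyticOrderAt_eq_top.1 h)
  rw [← hn] at horder
  cases hm : analyticOrderAt h s with
  | top => simp [hm] at horder
  | coe m => rw [hm] at horder; norm_cast at horder; omega

end ZetaHalfPlane

section ScaledError

open ArithmeticFunction (vonMangoldt vonMangoldt_nonneg vonMangoldt_le_log)

/-- The error term on its natural scale, `u ↦ e^{u/2} R(e^u)`. -/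
noncomputable def scaledR (u : ℝ) : ℝ := Real.exp (u / 2) * Rfun (Real.exp u)

lemma measurable_scaledR : Measurable scaledR := by
  have hR : Measurable fun u ↦ Rfun (Real.exp u) :=
    ((measurable_sum_Icc_floor_exp fun n ↦ vonMangoldt n / n).sub
      (Real.measurable_log.comp Real.measurable_exp)).add_const _
  exact (by fun_prop : Measurable fun u : ℝ ↦ Real.exp (u / 2)).mul hR

lemma sum_vonMangoldt_div_nonneg (N : ℕ) :
    0 ≤ ∑ n ∈ Finset.Icc 1 N, (vonMangoldt n / n : ℝ) :=
  Finset.sum_nonneg fun _ _ ↦ div_nonneg vonMangoldt_nonneg (Nat.cast_nonneg _)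

lemma sum_vonMangoldt_div_le {x : ℝ} (hx : 1 ≤ x) :
    ∑ n ∈ Finset.Icc 1 ⌊x⌋₊, (vonMangoldt n / n : ℝ) ≤ Real.log x * (1 + Real.log x) := by
  calc ∑ n ∈ Finset.Icc 1 ⌊x⌋₊, (vonMangoldt n / n : ℝ)
      ≤ ∑ n ∈ Finset.Icc 1 ⌊x⌋₊, Real.log x * (n : ℝ)⁻¹ := by
        refine Finset.sum_le_sum fun n hn ↦ ?_
        rw [Finset.mem_Icc] at hn
        rw [div_eq_mul_inv]
        refine mul_le_mul_of_nonneg_right (vonMangoldt_le_log.trans ?_) (by positivity)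
        exact Real.log_le_log (by exact_mod_cast hn.1)
          ((Nat.cast_le.2 hn.2).trans (Nat.floor_le (by linarith)))
    _ ≤ Real.log x * (1 + Real.log x) := by
        rw [← Finset.mul_sum]
        refine mul_le_mul_of_nonneg_left ?_ (Real.log_nonneg hx)
        simpa [harmonic_eq_sum_Icc] using harmonic_floor_le_one_add_log x hx

lemma abs_scaledR_le {u : ℝ} (hu : 0 ≤ u) :
    |scaledR u| ≤ Real.exp (u / 2) * (1 + u) ^ 2 := by
  rw [scaledR, abs_mul, Real.abs_exp]
  refine mul_le_mul_of_nonneg_left ?_ (Real.exp_pos _).le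
  have hle := sum_vonMangoldt_div_le (Real.one_le_exp hu)
  have hnonneg := sum_vonMangoldt_div_nonneg ⌊Real.exp u⌋₊
  have hγ := Real.one_half_lt_eulerMascheroniConstant
  have hγ' := Real.eulerMascheroniConstant_lt_two_thirds
  rw [Real.log_exp] at hle
  rw [Rfun, Real.log_exp, abs_le]
  constructor <;> nlinarith

lemma laplaceIntegrable_scaledR {σ : ℝ} (hσ : 1 / 2 < σ) : LaplaceIntegrable scaledR σ :=
  laplaceIntegrable_of_abs_le measurable_scaledR (a := 1 / 2) (C := 1) (fun u hu ↦ by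
    rw [one_mul, one_div_mul_eq_div]
    exact abs_scaledR_le (le_of_lt hu)) hσ

lemma sum_vonMangoldt_div_isBigO_rpow {r : ℝ} (hr : 0 < r) :
    (fun N : ℕ ↦ ∑ n ∈ Finset.Icc 1 N, (vonMangoldt n / n : ℝ)) =O[atTop]
      fun N : ℕ ↦ (N : ℝ) ^ r := by
  obtain ⟨C, -, h⟩ := one_add_sq_le_const_mul_exp hr
  refine Asymptotics.IsBigO.of_bound C ?_
  filter_upwards [eventually_ge_atTop 1] with N hN
  have hN' : (1 : ℝ) ≤ N := by exact_mod_cast hN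
  have hle := sum_vonMangoldt_div_le hN'
  have hlog := Real.log_nonneg hN'
  rw [Nat.floor_natCast] at hle
  rw [Real.norm_of_nonneg (sum_vonMangoldt_div_nonneg N), Real.norm_of_nonneg (by positivity),
    Real.rpow_def_of_pos (by linarith), mul_comm (Real.log _)]
  nlinarith [h _ hlog]

lemma LSeries_vonMangoldt_div_natCast (w : ℂ) :
    LSeries (fun n ↦ ((vonMangoldt n / n : ℝ) : ℂ)) w =
      LSeries (fun n ↦ (vonMangoldt n : ℂ)) (1 + w) := by
  refine tsum_congr fun n ↦ ?_
  rcases eq_or_ne n 0 with rfl | hn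
  · simp
  rw [LSeries.term_of_ne_zero hn, LSeries.term_of_ne_zero hn,
    Complex.cpow_add _ _ (Nat.cast_ne_zero.2 hn), Complex.cpow_one, Complex.ofReal_div,
    Complex.ofReal_natCast, div_div]

lemma mul_laplace_sum_vonMangoldt_div {w : ℂ} (hw : 0 < w.re) :
    w * laplace (fun u ↦ ∑ n ∈ Finset.Icc 1 ⌊Real.exp u⌋₊, (vonMangoldt n / n : ℝ)) w =
      -deriv riemannZeta (1 + w) / riemannZeta (1 + w) := by
  rw [← ArithmeticFunction.LSeries_vonMangoldt_eq_deriv_riemannZeta_div (by simpa using hw),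
    ← LSeries_vonMangoldt_div_natCast, LSeries_eq_mul_laplace
      (fun n ↦ div_nonneg vonMangoldt_nonneg n.cast_nonneg) (r := w.re / 2) (by linarith)
      (by linarith) (sum_vonMangoldt_div_isBigO_rpow (by linarith))]

lemma laplace_scaledR_add_half {w : ℂ} (hw : 0 < w.re) :
    laplace scaledR (w + 1 / 2) =
      laplace (fun u ↦ ∑ n ∈ Finset.Icc 1 ⌊Real.exp u⌋₊, (vonMangoldt n / n : ℝ)) w -
        1 / w ^ 2 + Real.eulerMascheroniConstant * (1 / w) := by
  set P : ℝ → ℝ := fun u ↦ ∑ n ∈ Finset.Icc 1 ⌊Real.exp u⌋₊, (vonMangoldt n / n : ℝ) with hP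
  have hPm : Measurable P := measurable_sum_Icc_floor_exp _
  have hPi : LaplaceIntegrable P w.re :=
    laplaceIntegrable_of_abs_le hPm (a := 0) (C := 1) (fun u hu ↦ by
      have hle := sum_vonMangoldt_div_le (Real.one_le_exp hu.le)
      rw [Real.log_exp] at hle
      rw [abs_of_nonneg (sum_vonMangoldt_div_nonneg _), zero_mul, Real.exp_zero]
      nlinarith) hw
  have hγ : LaplaceIntegrable (fun _ ↦ Real.eulerMascheroniConstant * 1) w.re :=
    (laplaceIntegrable_const 1 hw).const_mul _
  have hsplit : scaledR = fun u ↦ Real.exp ((1 / 2 : ℝ) * u) *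
      (P u - (u - Real.eulerMascheroniConstant * 1)) := by
    ext u
    simp only [scaledR, Rfun, hP, Real.log_exp]
    ring_nf
  rw [hsplit, show w + 1 / 2 = w + ((1 / 2 : ℝ) : ℂ) by push_cast; rfl, laplace_exp_mul,
    laplace_sub hPm (by fun_prop) hPi ((laplaceIntegrable_id hw).sub hγ),
    laplace_sub (by fun_prop) (by fun_prop) (laplaceIntegrable_id hw) hγ,
    laplace_const_mul _ (fun _ ↦ 1), laplace_id hw, laplace_one hw]
  ring

lemma laplace_scaledR_mul_of_half_lt {z : ℂ} (hz : 1 / 2 < z.re) :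
    (z - 1 / 2) * riemannZeta₁ (1 / 2 + z) * laplace scaledR z =
      Real.eulerMascheroniConstant * riemannZeta₁ (1 / 2 + z) - deriv riemannZeta₁ (1 / 2 + z) := by
  obtain ⟨w, rfl⟩ : ∃ w : ℂ, z = w + 1 / 2 := ⟨z - 1 / 2, by ring⟩
  have hw : 0 < w.re := by
    rw [Complex.add_re] at hz
    norm_num at hz
    exact hz
  have hw0 : w ≠ 0 := fun h ↦ by simp [h] at hw
  have hs1 : 1 + w ≠ 1 := by simpa using hw0
  have hζ : riemannZeta (1 + w) ≠ 0 := riemannZeta_ne_zero_of_one_le_re (by simpa using hw.le)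
  have hL := mul_laplace_sum_vonMangoldt_div hw
  rw [eq_div_iff hζ] at hL
  rw [show (1 / 2 + (w + 1 / 2) : ℂ) = 1 + w by ring, laplace_scaledR_add_half hw,
    deriv_riemannZeta₁_of_ne_one hs1, riemannZeta₁_eq_of_ne_one hs1]
  field_simp
  linear_combination 2 * w ^ 3 * hL

/-- `γ - Z'/Z` for the entire function `Z(s) = (s - 1) ζ(s)`; it vanishes at `1`. -/
noncomputable def eulerSubLogDeriv (s : ℂ) : ℂ :=
  Real.eulerMascheroniConstant - deriv riemannZeta₁ s / riemannZeta₁ s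

lemma eulerSubLogDeriv_one : eulerSubLogDeriv 1 = 0 := by
  simp [eulerSubLogDeriv, riemannZeta₁_one, deriv_riemannZeta₁_one]

lemma analyticAt_eulerSubLogDeriv {s : ℂ} (h : riemannZeta₁ s ≠ 0) :
    AnalyticAt ℂ eulerSubLogDeriv s :=
  analyticAt_const.sub ((analyticAt_riemannZeta₁ s).deriv.div (analyticAt_riemannZeta₁ s) h)

lemma analyticAt_dslope {f : ℂ → ℂ} {a z : ℂ} (ha : AnalyticAt ℂ f a) (hz : AnalyticAt ℂ f z) :
    AnalyticAt ℂ (dslope f a) z := by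
  rcases eq_or_ne z a with rfl | h
  · obtain ⟨p, hp⟩ := ha
    exact hp.has_fpower_series_dslope_fslope.analyticAt
  · have hquot : AnalyticAt ℂ (fun w ↦ (w - a)⁻¹ * (f w - f a)) z :=
      ((analyticAt_id.sub analyticAt_const).inv (sub_ne_zero.2 h)).mul (hz.sub analyticAt_const)
    refine hquot.congr ?_
    filter_upwards [isOpen_ne.mem_nhds h] with w hw
    rw [dslope_of_ne _ hw, slope_def_field, div_eq_inv_mul]

/-- The continuation of the Laplace transform of `scaledR`: the quotient
`(γ - Z'/Z)(1/2 + z) / (z - 1/2)`, with its removable singularity filled in by `dslope`. -/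
noncomputable def laplaceExtension (z : ℂ) : ℂ := dslope eulerSubLogDeriv 1 (1 / 2 + z)

lemma analyticAt_laplaceExtension {z : ℂ} (hz : riemannZeta₁ (1 / 2 + z) ≠ 0) :
    AnalyticAt ℂ laplaceExtension z :=
  (analyticAt_dslope (analyticAt_eulerSubLogDeriv (by simp))
    (analyticAt_eulerSubLogDeriv hz)).comp_of_eq
      (f := fun z : ℂ ↦ 1 / 2 + z) (analyticAt_const.add analyticAt_id) rfl

lemma analyticAt_laplaceExtension_ofReal {σ : ℝ} (hσ : -1 / 2 < σ) :
    AnalyticAt ℂ laplaceExtension σ :=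
  analyticAt_laplaceExtension <| by
    simpa using riemannZeta₁_ofReal_ne_zero (σ := 1 / 2 + σ) (by linarith)

lemma laplaceExtension_eq_laplace {z : ℂ} (hz : 1 / 2 < z.re) :
    laplaceExtension z = laplace scaledR z := by
  have hne : z - 1 / 2 ≠ 0 := fun h ↦ by
    rw [sub_eq_zero.1 h] at hz
    simp at hz
  have hne1 : (1 / 2 + z : ℂ) ≠ 1 := fun h ↦ hne (by linear_combination h)
  have hZ : riemannZeta₁ (1 / 2 + z) ≠ 0 := riemannZeta₁_ne_zero_of_one_le_re (by
    norm_num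
    linarith)
  rw [laplaceExtension, dslope_of_ne _ hne1, slope_def_field, eulerSubLogDeriv_one,
    eulerSubLogDeriv, show (1 / 2 + z - 1 : ℂ) = z - 1 / 2 by ring, div_eq_iff hne, sub_zero,
    sub_eq_iff_eq_add, eq_comm, ← eq_sub_iff_add_eq', div_eq_iff hZ]
  linear_combination laplace_scaledR_mul_of_half_lt hz

end ScaledError

section OneSided

/-- The hypothesis to be refuted: `scaledR` is bounded above (`η = 1`) or below (`η = -1`) by the
slowly growing majorant `A + √u`. -/
structure OneSidedBound (η A : ℝ) : Prop where
  sign : η = 1 ∨ η = -1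
  nonneg : 0 ≤ A
  le : ∀ u, 0 < u → η * scaledR u ≤ A + √u

lemma sqrt_le_one_add {u : ℝ} (hu : 0 ≤ u) : √u ≤ 1 + u :=
  Real.sqrt_le_iff.2 ⟨by linarith, by nlinarith⟩

lemma measurable_add_sqrt (A : ℝ) : Measurable fun u ↦ A + √u := by fun_prop

lemma laplaceIntegrable_add_sqrt (A : ℝ) {σ : ℝ} (hσ : 0 < σ) :
    LaplaceIntegrable (fun u ↦ A + √u) σ := by
  refine laplaceIntegrable_of_abs_le (measurable_add_sqrt A) (a := 0) (C := |A| + 1)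
    (fun u hu ↦ ?_) hσ
  rw [zero_mul, Real.exp_zero, one_mul]
  calc |A + √u| ≤ |A| + √u := (abs_add_le _ _).trans_eq (by rw [abs_of_nonneg (Real.sqrt_nonneg u)])
    _ ≤ |A| * 1 + (1 + u) := by rw [mul_one]; gcongr; exact sqrt_le_one_add hu.le
    _ ≤ |A| * (1 + u) ^ 2 + (1 + u) ^ 2 := by gcongr <;> nlinarith
    _ = (|A| + 1) * (1 + u) ^ 2 := by ring

/-- The nonnegative function to which Landau's theorem is applied. -/
noncomputable def gap (η A u : ℝ) : ℝ := A + √u - η * scaledR u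

variable {η A : ℝ}

lemma measurable_gap (η A : ℝ) : Measurable (gap η A) :=
  (measurable_add_sqrt A).sub (measurable_scaledR.const_mul η)

namespace OneSidedBound

lemma gap_nonneg (h : OneSidedBound η A) {u : ℝ} (hu : 0 < u) : 0 ≤ gap η A u :=
  sub_nonneg.2 (h.le u hu)

lemma laplaceIntegrable_gap (h : OneSidedBound η A) {σ : ℝ} (hσ : 0 < σ) :
    LaplaceIntegrable (gap η A) σ := by
  refine laplaceIntegrable_of_analyticAt (measurable_gap η A) (fun u ↦ h.gap_nonneg)
    (H := fun z ↦ laplace (fun u ↦ A + √u) z - η * laplaceExtension z) (b := 1 / 2)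
    (fun s hs ↦ ?_) (fun s hs ↦ ?_) (fun s hs ↦ ?_) hσ
  · exact (analyticAt_laplace (measurable_add_sqrt A) (fun _ ↦ laplaceIntegrable_add_sqrt A)
      (by simpa using hs)).sub
        (analyticAt_const.mul (analyticAt_laplaceExtension_ofReal (by linarith)))
  · exact (laplaceIntegrable_add_sqrt A (by linarith)).sub
      ((laplaceIntegrable_scaledR hs).const_mul η)
  · have hs' : 1 / 2 < (s : ℂ).re := by simpa using hs
    rw [laplaceExtension_eq_laplace hs', ← laplace_const_mul,
      ← laplace_sub (measurable_add_sqrt A) (measurable_scaledR.const_mul η)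
        (laplaceIntegrable_add_sqrt A (one_half_pos.trans hs'))
        ((laplaceIntegrable_scaledR hs').const_mul η)]
    rfl

lemma abs_sign (h : OneSidedBound η A) : |η| = 1 := by
  rcases h.sign with rfl | rfl <;> norm_num

lemma sq_sign (h : OneSidedBound η A) : η * η = 1 := by
  rcases h.sign with rfl | rfl <;> norm_num

lemma laplaceIntegrable_scaledR (h : OneSidedBound η A) {σ : ℝ} (hσ : 0 < σ) :
    LaplaceIntegrable scaledR σ := by
  convert! ((laplaceIntegrable_add_sqrt A hσ).sub (h.laplaceIntegrable_gap hσ)).const_mul η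
    using 2 with u
  rw [gap, sub_sub_cancel, ← mul_assoc, h.sq_sign, one_mul]

lemma analyticAt_laplace_scaledR (h : OneSidedBound η A) {z : ℂ} (hz : 0 < z.re) :
    AnalyticAt ℂ (laplace scaledR) z :=
  analyticAt_laplace measurable_scaledR (fun _ ↦ h.laplaceIntegrable_scaledR) hz

theorem laplace_scaledR_mul (h : OneSidedBound η A) {z : ℂ} (hz : 0 < z.re) :
    (z - 1 / 2) * riemannZeta₁ (1 / 2 + z) * laplace scaledR z =
      Real.eulerMascheroniConstant * riemannZeta₁ (1 / 2 + z) - deriv riemannZeta₁ (1 / 2 + z) := by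
  have hshift (s : ℂ) : AnalyticAt ℂ (fun z : ℂ ↦ 1 / 2 + z) s := by fun_prop
  have hZ (s : ℂ) : AnalyticAt ℂ (fun z : ℂ ↦ riemannZeta₁ (1 / 2 + z)) s :=
    (analyticAt_riemannZeta₁ _).comp_of_eq (hshift s) rfl
  have hZ' (s : ℂ) : AnalyticAt ℂ (fun z : ℂ ↦ deriv riemannZeta₁ (1 / 2 + z)) s :=
    (analyticAt_riemannZeta₁ _).deriv.comp_of_eq (hshift s) rfl
  refine AnalyticOnNhd.eqOn_of_preconnected_of_eventuallyEq (𝕜 := ℂ) (z₀ := 2)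
    (f := fun z ↦ (z - 1 / 2) * riemannZeta₁ (1 / 2 + z) * laplace scaledR z)
    (g := fun z ↦ Real.eulerMascheroniConstant * riemannZeta₁ (1 / 2 + z) -
      deriv riemannZeta₁ (1 / 2 + z))
    (fun s hs ↦ ?_) (fun s _ ↦ ?_) isPreconnected_re_pos (by simp) ?_ hz
  · exact ((analyticAt_id.sub analyticAt_const).mul (hZ s)).mul (h.analyticAt_laplace_scaledR hs)
  · exact (analyticAt_const.mul (hZ s)).sub (hZ' s)
  · filter_upwards [(isOpen_lt continuous_const Complex.continuous_re).mem_nhds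
      (show (1 / 2 : ℝ) < (2 : ℂ).re by norm_num)] with s hs
    exact laplace_scaledR_mul_of_half_lt hs

theorem riemannZeta₁_ne_zero (h : OneSidedBound η A) {s : ℂ} (hs : 1 / 2 < s.re) :
    riemannZeta₁ s ≠ 0 := by
  have hre {w : ℂ} (hw : 1 / 2 < w.re) : 0 < (w - 1 / 2).re := by norm_num; linarith
  refine ne_zero_of_deriv_eventuallyEq_mul (analyticAt_riemannZeta₁ s)
    (h := fun s ↦ Real.eulerMascheroniConstant - (s - 1) * laplace scaledR (s - 1 / 2)) ?_
    (riemannZeta₁_not_eventually_zero s) ?_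
  · exact analyticAt_const.sub ((analyticAt_id.sub analyticAt_const).mul
      ((h.analyticAt_laplace_scaledR (hre hs)).comp_of_eq (f := fun z : ℂ ↦ z - 1 / 2)
        (analyticAt_id.sub analyticAt_const) rfl))
  · filter_upwards [(isOpen_lt continuous_const Complex.continuous_re).mem_nhds hs] with w hw
    have hw' := h.laplace_scaledR_mul (hre hw)
    rw [add_sub_cancel] at hw'
    rw [Pi.mul_apply]
    linear_combination hw'

theorem laplaceExtension_eq_laplace_scaledR (h : OneSidedBound η A) {z : ℂ} (hz : 0 < z.re) :
    laplaceExtension z = laplace scaledR z := by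
  refine AnalyticOnNhd.eqOn_of_preconnected_of_eventuallyEq (z₀ := 2) (fun s hs ↦ ?_)
    (fun s hs ↦ h.analyticAt_laplace_scaledR hs) isPreconnected_re_pos
    (show (0 : ℝ) < (2 : ℂ).re by norm_num) ?_ hz
  · have hs : 0 < s.re := hs
    exact analyticAt_laplaceExtension (h.riemannZeta₁_ne_zero (by simpa using hs))
  · filter_upwards [(isOpen_lt continuous_const Complex.continuous_re).mem_nhds
      (show (1 / 2 : ℝ) < (2 : ℂ).re by norm_num)] with s hs
    exact laplaceExtension_eq_laplace hs

end OneSidedBound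

end OneSided

section WeightedIntegrability

lemma integral_add_sqrt_mul_exp (A : ℝ) {σ : ℝ} (hσ : 0 < σ) :
    ∫ u in Ioi (0 : ℝ), (A + √u) * Real.exp (-σ * u) =
      A / σ + σ ^ (-(3 / 2) : ℝ) * Real.Gamma (3 / 2) := by
  have hsqrt : ∫ u in Ioi (0 : ℝ), √u * Real.exp (-σ * u) =
      σ ^ (-(3 / 2) : ℝ) * Real.Gamma (3 / 2) := by
    rw [Real.rpow_neg hσ.le, ← Real.inv_rpow hσ.le, ← one_div,
      ← Real.integral_rpow_mul_exp_neg_mul_Ioi (by norm_num) hσ]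
    norm_num [Real.sqrt_eq_rpow]
  have hsqrt_int : LaplaceIntegrable (fun u ↦ √u) σ := by
    simpa using laplaceIntegrable_add_sqrt 0 hσ
  have hexp : ∫ u in Ioi (0 : ℝ), Real.exp (-σ * u) = 1 / σ := by
    rw [integral_exp_mul_Ioi (neg_lt_zero.2 hσ)]
    simp
  simp_rw [add_mul]
  rw [integral_add (laplaceIntegrable_const A hσ) hsqrt_int, hsqrt, integral_const_mul, hexp]
  ring

lemma exists_norm_laplaceExtension_le :
    ∃ B, ∀ σ : ℝ, σ ∈ Icc (0 : ℝ) 1 → ‖laplaceExtension σ‖ ≤ B :=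
  isCompact_Icc.exists_bound_of_continuousOn (f := fun σ : ℝ ↦ laplaceExtension σ) fun σ hσ ↦
    (ContinuousAt.comp (f := fun x : ℝ ↦ (x : ℂ)) (g := laplaceExtension)
      (analyticAt_laplaceExtension_ofReal (by linarith [hσ.1])).continuousAt
      Complex.continuous_ofReal.continuousAt).continuousWithinAt

lemma ofReal_one_add_sq_inv_le_lintegral {u : ℝ} (hu : 0 < u) :
    ENNReal.ofReal (Real.exp (-1) / 2 * ((1 + u) ^ 2)⁻¹) ≤
      ∫⁻ σ in Ioc (0 : ℝ) 1, ENNReal.ofReal (σ * Real.exp (-σ * u)) := by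
  have hu1 : 0 < 1 + u := by linarith
  calc ENNReal.ofReal (Real.exp (-1) / 2 * ((1 + u) ^ 2)⁻¹)
      = ENNReal.ofReal (∫ σ in Ioc (0 : ℝ) (1 + u)⁻¹, σ * Real.exp (-1)) := by
        rw [← intervalIntegral.integral_of_le (by positivity), intervalIntegral.integral_mul_const,
          integral_id]
        congr 1
        field_simp
        ring
    _ = ∫⁻ σ in Ioc (0 : ℝ) (1 + u)⁻¹, ENNReal.ofReal (σ * Real.exp (-1)) := by
        rw [ofReal_integral_eq_lintegral_ofReal]
        · exact (by fun_prop : Continuous fun σ : ℝ ↦ σ * Real.exp (-1)).integrableOn_Ioc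
        · filter_upwards [ae_restrict_mem measurableSet_Ioc] with σ hσ
          exact mul_nonneg hσ.1.le (Real.exp_pos _).le
    _ ≤ ∫⁻ σ in Ioc (0 : ℝ) (1 + u)⁻¹, ENNReal.ofReal (σ * Real.exp (-σ * u)) := by
        refine setLIntegral_mono (by fun_prop) fun σ hσ ↦ ENNReal.ofReal_le_ofReal ?_
        refine mul_le_mul_of_nonneg_left (Real.exp_le_exp.2 ?_) hσ.1.le
        have hσu : σ * (1 + u) ≤ 1 := by
          simpa [hu1.ne'] using mul_le_mul_of_nonneg_right hσ.2 hu1.le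
        linarith [hσ.1]
    _ ≤ _ := lintegral_mono_set (Ioc_subset_Ioc_right (inv_le_one_of_one_le₀ (by linarith)))

variable {g : ℝ → ℝ} {C : ℝ}

lemma lintegral_laplace_lt_top (hpos : ∀ u, 0 < u → 0 ≤ g u)
    (hint : ∀ σ, 0 < σ → LaplaceIntegrable g σ)
    (hle : ∀ σ ∈ Ioc (0 : ℝ) 1,
      ∫ u in Ioi (0 : ℝ), g u * Real.exp (-σ * u) ≤ C * σ ^ (-(3 / 2) : ℝ)) :
    ∫⁻ σ in Ioc (0 : ℝ) 1, ∫⁻ u in Ioi (0 : ℝ),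
      ENNReal.ofReal (g u) * ENNReal.ofReal (σ * Real.exp (-σ * u)) < ⊤ := by
  have hdom : IntegrableOn (fun σ : ℝ ↦ C * σ ^ (-(1 / 2) : ℝ)) (Ioc 0 1) :=
    (intervalIntegrable_iff_integrableOn_Ioc_of_le zero_le_one).1
      ((intervalIntegral.intervalIntegrable_rpow' (by norm_num)).const_mul C)
  refine lt_of_le_of_lt (setLIntegral_mono
    (g := fun σ : ℝ ↦ ENNReal.ofReal (C * σ ^ (-(1 / 2) : ℝ))) (by fun_prop) fun σ hσ ↦ ?_)
    hdom.lintegral_lt_top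
  have hinner :
      ∫⁻ u in Ioi (0 : ℝ), ENNReal.ofReal (g u) * ENNReal.ofReal (σ * Real.exp (-σ * u)) =
        ENNReal.ofReal (σ * ∫ u in Ioi (0 : ℝ), g u * Real.exp (-σ * u)) := by
    rw [← integral_const_mul, ofReal_integral_eq_lintegral_ofReal]
    · refine setLIntegral_congr_fun measurableSet_Ioi fun u hu ↦ ?_
      rw [← ENNReal.ofReal_mul (hpos u hu), mul_left_comm]
    · exact Integrable.const_mul (hint σ hσ.1) σ
    · filter_upwards [ae_restrict_mem measurableSet_Ioi] with u hu
      exact mul_nonneg hσ.1.le (mul_nonneg (hpos u hu) (Real.exp_pos _).le)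
  rw [hinner]
  refine ENNReal.ofReal_le_ofReal ?_
  calc σ * _ ≤ σ * (C * σ ^ (-(3 / 2) : ℝ)) := mul_le_mul_of_nonneg_left (hle σ hσ) hσ.1.le
    _ = C * (σ ^ (1 : ℝ) * σ ^ (-(3 / 2) : ℝ)) := by rw [Real.rpow_one]; ring
    _ = _ := by rw [← Real.rpow_add hσ.1]; norm_num

-- The weight `(1 + u)⁻²` is, up to a constant, an average of `σ e^{-σu}` over `σ ∈ (0, 1]`.
theorem integrableOn_div_one_add_sq (hg : Measurable g) (hpos : ∀ u, 0 < u → 0 ≤ g u)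
    (hint : ∀ σ, 0 < σ → LaplaceIntegrable g σ)
    (hle : ∀ σ ∈ Ioc (0 : ℝ) 1,
      ∫ u in Ioi (0 : ℝ), g u * Real.exp (-σ * u) ≤ C * σ ^ (-(3 / 2) : ℝ)) :
    IntegrableOn (fun u ↦ g u / (1 + u) ^ 2) (Ioi 0) := by
  have hfin := lintegral_laplace_lt_top hpos hint hle
  rw [lintegral_lintegral_swap (by fun_prop)] at hfin
  have hfin' :
      ∫⁻ u in Ioi (0 : ℝ), ENNReal.ofReal (Real.exp (-1) / 2 * (g u / (1 + u) ^ 2)) < ⊤ := by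
    refine lt_of_le_of_lt (setLIntegral_mono' measurableSet_Ioi fun u hu ↦ ?_) hfin
    rw [lintegral_const_mul _ (by fun_prop), show Real.exp (-1) / 2 * (g u / (1 + u) ^ 2) =
      g u * (Real.exp (-1) / 2 * ((1 + u) ^ 2)⁻¹) by ring, ENNReal.ofReal_mul (hpos u hu)]
    gcongr
    exact ofReal_one_add_sq_inv_le_lintegral hu
  have hscaled : IntegrableOn (fun u ↦ Real.exp (-1) / 2 * (g u / (1 + u) ^ 2)) (Ioi 0) := by
    refine ⟨((hg.div (by fun_prop)).const_mul _).aestronglyMeasurable,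
      (hasFiniteIntegral_iff_ofReal ?_).2 hfin'⟩
    filter_upwards [ae_restrict_mem measurableSet_Ioi] with u hu
    have := hpos u hu
    positivity
  refine (hscaled.const_mul (2 * Real.exp 1)).congr (Eventually.of_forall fun u ↦ ?_)
  simp only [Real.exp_neg]
  field_simp

lemma integrableOn_one_add_sq_inv : IntegrableOn (fun u : ℝ ↦ ((1 + u) ^ 2)⁻¹) (Ioi 0) := by
  refine (integrable_one_add_norm (E := ℝ) (μ := volume) (r := 2) (by simp)).integrableOn.congr ?_
  filter_upwards [ae_restrict_mem measurableSet_Ioi] with u (hu : 0 < u)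
  rw [Real.norm_of_nonneg hu.le, Real.rpow_neg (by linarith)]
  norm_cast

lemma integrableOn_sqrt_div_one_add_sq :
    IntegrableOn (fun u : ℝ ↦ √u / (1 + u) ^ 2) (Ioi 0) := by
  refine Integrable.mono' (integrable_one_add_norm (E := ℝ) (μ := volume) (r := 3 / 2)
    (by norm_num)).integrableOn
    (Measurable.div (by fun_prop) (by fun_prop)).aestronglyMeasurable ?_
  filter_upwards [ae_restrict_mem measurableSet_Ioi] with u (hu : 0 < u)
  have hu1 : 0 < 1 + u := by linarith
  rw [Real.norm_of_nonneg hu.le, Real.norm_of_nonneg (by positivity), div_le_iff₀ (by positivity),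
    ← Real.rpow_natCast, ← Real.rpow_add hu1, Real.sqrt_eq_rpow]
  norm_num
  exact Real.rpow_le_rpow hu.le (by linarith) (by norm_num)

namespace OneSidedBound

variable {η A : ℝ}

lemma integral_gap_mul_exp (h : OneSidedBound η A) {σ : ℝ} (hσ : 0 < σ) :
    ∫ u in Ioi (0 : ℝ), gap η A u * Real.exp (-σ * u) =
      A / σ + σ ^ (-(3 / 2) : ℝ) * Real.Gamma (3 / 2) - η * (laplaceExtension σ).re := by
  rw [h.laplaceExtension_eq_laplace_scaledR (by simpa using hσ), laplace_ofReal, Complex.ofReal_re,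
    ← integral_add_sqrt_mul_exp A hσ, ← integral_const_mul, ← integral_sub
      (laplaceIntegrable_add_sqrt A hσ) (Integrable.const_mul (h.laplaceIntegrable_scaledR hσ) η)]
  simp only [gap, sub_mul, mul_assoc]

lemma exists_integral_gap_le (h : OneSidedBound η A) :
    ∃ C, ∀ σ ∈ Ioc (0 : ℝ) 1,
      ∫ u in Ioi (0 : ℝ), gap η A u * Real.exp (-σ * u) ≤ C * σ ^ (-(3 / 2) : ℝ) := by
  obtain ⟨B, hB⟩ := exists_norm_laplaceExtension_le
  have hB0 : 0 ≤ B := (norm_nonneg _).trans (hB 0 (by simp))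
  refine ⟨A + Real.Gamma (3 / 2) + B, fun σ ⟨h0, h1⟩ ↦ ?_⟩
  have hre := abs_le.1 ((Complex.abs_re_le_norm _).trans (hB σ ⟨h0.le, h1⟩))
  have hneg : -(η * (laplaceExtension σ).re) ≤ B := by
    rcases h.sign with rfl | rfl <;> linarith
  have hone : 1 ≤ σ ^ (-(3 / 2) : ℝ) :=
    Real.one_le_rpow_of_pos_of_le_one_of_nonpos h0 h1 (by norm_num)
  have hinv : σ⁻¹ ≤ σ ^ (-(3 / 2) : ℝ) := by
    rw [← Real.rpow_neg_one]
    exact Real.rpow_le_rpow_of_exponent_ge h0 h1 (by norm_num)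
  rw [h.integral_gap_mul_exp h0, div_eq_mul_inv]
  nlinarith [mul_le_mul_of_nonneg_left hinv h.nonneg, mul_le_mul_of_nonneg_left hone hB0]

theorem integrableOn_abs_scaledR_div_one_add_sq (h : OneSidedBound η A) :
    IntegrableOn (fun u ↦ |scaledR u| / (1 + u) ^ 2) (Ioi 0) := by
  obtain ⟨C, hC⟩ := h.exists_integral_gap_le
  have hgap := integrableOn_div_one_add_sq (measurable_gap η A) (fun u ↦ h.gap_nonneg)
    (fun σ ↦ h.laplaceIntegrable_gap) hC
  have hint : IntegrableOn (fun u ↦ scaledR u / (1 + u) ^ 2) (Ioi 0) := by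
    refine ((((integrableOn_one_add_sq_inv.const_mul A).add integrableOn_sqrt_div_one_add_sq).sub
      hgap).const_mul η).congr (Eventually.of_forall fun u ↦ ?_)
    simp only [Pi.sub_apply, Pi.add_apply, gap]
    linear_combination scaledR u / (1 + u) ^ 2 * h.sq_sign
  simpa only [IntegrableOn, norm_div, Real.norm_eq_abs, abs_sq] using hint.norm

end OneSidedBound

end WeightedIntegrability

section Digamma

lemma rpow_le_rpow_add_rpow {x a b c : ℝ} (hx : 0 < x) (hac : a ≤ c) (hcb : c ≤ b) :
    x ^ c ≤ x ^ a + x ^ b := by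
  have := Real.rpow_nonneg hx.le a
  have := Real.rpow_nonneg hx.le b
  rcases le_total x 1 with h | h
  · linarith [Real.rpow_le_rpow_of_exponent_ge hx h hac]
  · linarith [Real.rpow_le_rpow_of_exponent_le h hcb]

lemma norm_GammaSeq_le {a b : ℝ} (ha : 0 < a) {s : ℂ} (has : a ≤ s.re) (hsb : s.re ≤ b) {n : ℕ}
    (hn : n ≠ 0) : ‖Complex.GammaSeq s n‖ ≤ Real.Gamma a + Real.Gamma b := by
  have hs : 0 < s.re := ha.trans_le has
  have hb : 0 < b := hs.trans_le hsb
  have hint := (Real.GammaIntegral_convergent ha).add (Real.GammaIntegral_convergent hb)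
  rw [Complex.GammaSeq_eq_approx_Gamma_integral hs hn,
    intervalIntegral.integral_of_le (Nat.cast_nonneg n), Real.Gamma_eq_integral ha,
    Real.Gamma_eq_integral hb,
    ← integral_add (Real.GammaIntegral_convergent ha) (Real.GammaIntegral_convergent hb)]
  refine (norm_integral_le_of_norm_le (hint.mono_set Ioc_subset_Ioi_self) ?_).trans
    (setIntegral_mono_set hint ?_ Ioc_subset_Ioi_self.eventuallyLE)
  · filter_upwards [ae_restrict_mem measurableSet_Ioc] with x ⟨hx0, hxn⟩
    have hbase : 0 ≤ 1 - x / n := sub_nonneg.2 (div_le_one_of_le₀ hxn (Nat.cast_nonneg n))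
    rw [norm_mul, Complex.norm_real, Real.norm_of_nonneg (pow_nonneg hbase n),
      Complex.norm_cpow_eq_rpow_re_of_pos hx0, Complex.sub_re, Complex.one_re]
    calc (1 - x / n) ^ n * x ^ (s.re - 1)
        ≤ Real.exp (-x) * (x ^ (a - 1) + x ^ (b - 1)) := by
          gcongr
          · exact Real.one_sub_div_pow_le_exp_neg hxn
          · exact rpow_le_rpow_add_rpow hx0 (by linarith) (by linarith)
      _ = _ := mul_add _ _ _
  · filter_upwards [ae_restrict_mem measurableSet_Ioi] with x hx
    have hx0 : 0 < x := hx
    simp only [Pi.zero_apply, Pi.add_apply]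
    positivity

lemma add_natCast_ne_zero {s : ℂ} (hs : 0 < s.re) (j : ℕ) : s + j ≠ 0 := fun h ↦ by
  have hre := congrArg Complex.re h
  rw [Complex.add_re, Complex.natCast_re, Complex.zero_re] at hre
  linarith [Nat.cast_nonneg (α := ℝ) j]

lemma hasDerivAt_prod_add_natCast {s : ℂ} (hs : 0 < s.re) (n : ℕ) :
    HasDerivAt (fun s : ℂ ↦ ∏ j ∈ Finset.range n, (s + j))
      ((∏ j ∈ Finset.range n, (s + j)) * ∑ j ∈ Finset.range n, 1 / (s + j)) s := by
  have hlog : logDeriv (fun s : ℂ ↦ ∏ j ∈ Finset.range n, (s + j)) s =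
      ∑ j ∈ Finset.range n, 1 / (s + j) := by
    rw [logDeriv_prod (f := fun (j : ℕ) (s : ℂ) ↦ s + j) (fun j _ ↦ add_natCast_ne_zero hs j)
      fun j _ ↦ by fun_prop]
    simp [logDeriv_apply]
  rw [← hlog, logDeriv_apply,
    mul_div_cancel₀ _ (Finset.prod_ne_zero_iff.2 fun j _ ↦ add_natCast_ne_zero hs j)]
  exact DifferentiableAt.hasDerivAt (by fun_prop)

lemma hasDerivAt_GammaSeq {s : ℂ} (hs : 0 < s.re) {n : ℕ} (hn : n ≠ 0) :
    HasDerivAt (fun s ↦ Complex.GammaSeq s n) (Complex.GammaSeq s n *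
      (Real.log n - ∑ j ∈ Finset.range (n + 1), 1 / (s + j))) s := by
  have hn' : (n : ℂ) ≠ 0 := by exact_mod_cast hn
  have hnum : HasDerivAt (fun s : ℂ ↦ (n : ℂ) ^ s * (n.factorial : ℂ))
      ((n : ℂ) ^ s * Complex.log n * n.factorial) s := by
    simpa using ((hasDerivAt_id s).const_cpow (c := (n : ℂ)) (Or.inl hn')).mul_const
      (n.factorial : ℂ)
  have hden : ∏ j ∈ Finset.range (n + 1), (s + j) ≠ 0 :=
    Finset.prod_ne_zero_iff.2 fun j _ ↦ add_natCast_ne_zero hs j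
  refine HasDerivAt.congr_deriv (f := fun s ↦ Complex.GammaSeq s n)
    (hnum.div (hasDerivAt_prod_add_natCast hs (n + 1)) hden) ?_
  rw [Complex.GammaSeq, ← Complex.natCast_log]
  field_simp

theorem tendsto_deriv_of_tendsto_of_norm_le {F : ℕ → ℂ → ℂ} {f : ℂ → ℂ} {U : Set ℂ} {c : ℂ}
    {r C : ℝ} (hU : IsOpen U) (hr : 0 < r) (hsub : Metric.closedBall c r ⊆ U)
    (hF : ∀ᶠ n in atTop, DifferentiableOn ℂ (F n) U) (hf : DifferentiableOn ℂ f U)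
    (hlim : ∀ z ∈ Metric.closedBall c r, Tendsto (fun n ↦ F n z) atTop (𝓝 (f z)))
    (hC : ∀ᶠ n in atTop, ∀ z ∈ Metric.closedBall c r, ‖F n z‖ ≤ C) :
    Tendsto (fun n ↦ deriv (F n) c) atTop (𝓝 (deriv f c)) := by
  have hcauchy {g : ℂ → ℂ} (hg : DifferentiableOn ℂ g U) :=
    Complex.two_pi_I_inv_smul_circleIntegral_sub_sq_inv_smul_of_differentiable hU hsub hg
      (Metric.mem_ball_self hr)
  have hmem (θ : ℝ) : circleMap c r θ ∈ Metric.closedBall c r := circleMap_mem_closedBall c hr.le θ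
  rw [← hcauchy hf]
  refine Tendsto.congr' (hF.mono fun n hn ↦ hcauchy hn) (Tendsto.const_smul ?_ _)
  refine intervalIntegral.tendsto_integral_filter_of_dominated_convergence
    (fun _ ↦ r * ((r ^ 2)⁻¹ * C)) ?_ ?_ intervalIntegrable_const
    (Eventually.of_forall fun θ _ ↦ ((hlim _ (hmem θ)).const_smul _).const_smul _)
  · filter_upwards [hF] with n hn
    have hinv : ContinuousOn (fun z : ℂ ↦ ((z - c) ^ 2)⁻¹) (Metric.sphere c r) :=
      ContinuousOn.inv₀ (f := fun z : ℂ ↦ (z - c) ^ 2) (by fun_prop) fun z hz ↦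
        pow_ne_zero _ (sub_ne_zero.2 (Metric.ne_of_mem_sphere hz hr.ne'))
    exact ((hinv.smul (hn.continuousOn.mono (Metric.sphere_subset_closedBall.trans
      hsub))).circleIntegrable hr.le).out.aestronglyMeasurable_restrict_uIoc
  · filter_upwards [hC] with n hn
    refine Eventually.of_forall fun θ _ ↦ ?_
    rw [norm_smul, norm_smul, deriv_circleMap, norm_inv, norm_pow, circleMap_sub_center]
    simp only [norm_mul, norm_circleMap_zero, Complex.norm_I, mul_one, abs_of_pos hr]
    gcongr
    exact hn _ (hmem θ)

theorem tendsto_digamma {s : ℂ} (hs : 0 < s.re) :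
    Tendsto (fun n : ℕ ↦ (Real.log n : ℂ) - ∑ j ∈ Finset.range (n + 1), 1 / (s + j)) atTop
      (𝓝 (Complex.digamma s)) := by
  have hball {w : ℂ} (hw : w ∈ Metric.closedBall s (s.re / 2)) :
      s.re / 2 ≤ w.re ∧ w.re ≤ 3 * s.re / 2 := by
    have hdist := (Complex.abs_re_le_norm (w - s)).trans (mem_closedBall_iff_norm.1 hw)
    rw [Complex.sub_re, abs_le] at hdist
    constructor <;> linarith
  have hder : Tendsto (fun n : ℕ ↦ deriv (fun s ↦ Complex.GammaSeq s n) s) atTop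
      (𝓝 (deriv Complex.Gamma s)) := by
    refine tendsto_deriv_of_tendsto_of_norm_le (U := {w | 0 < w.re})
      (C := Real.Gamma (s.re / 2) + Real.Gamma (3 * s.re / 2))
      (isOpen_lt continuous_const Complex.continuous_re) (half_pos hs)
      (fun w hw ↦ (half_pos hs).trans_le (hball hw).1) ?_ (fun w (hw : 0 < w.re) ↦ ?_)
      (fun w _ ↦ Complex.GammaSeq_tendsto_Gamma w) ?_
    · filter_upwards [eventually_ne_atTop 0] with n hn w hw
      exact (hasDerivAt_GammaSeq hw hn).differentiableAt.differentiableWithinAt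
    · refine (Complex.differentiableAt_Gamma w fun m h ↦ ?_).differentiableWithinAt
      exact add_natCast_ne_zero hw m (by rw [h, neg_add_cancel])
    · filter_upwards [eventually_ne_atTop 0] with n hn w hw
      exact norm_GammaSeq_le (half_pos hs) (hball hw).1 (hball hw).2 hn
  have hΓ : Complex.Gamma s ≠ 0 := Complex.Gamma_ne_zero_of_re_pos hs
  have hlim := hder.div (Complex.GammaSeq_tendsto_Gamma s) hΓ
  rw [Complex.digamma_def, logDeriv_apply]
  refine hlim.congr' ?_
  filter_upwards [eventually_ne_atTop 0,
    (Complex.GammaSeq_tendsto_Gamma s).eventually_ne hΓ] with n hn hne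
  simp only [Pi.div_apply]
  rw [(hasDerivAt_GammaSeq hs hn).deriv, mul_div_cancel_left₀ _ hne]

lemma sum_one_div_one_add_sq_le (N : ℕ) :
    ∑ j ∈ Finset.range N, 1 / (1 + (j : ℝ)) ^ 2 ≤ 2 := by
  calc ∑ j ∈ Finset.range N, 1 / (1 + (j : ℝ)) ^ 2
      = ∑ i ∈ Finset.Ioo 0 (N + 1), ((i : ℝ) ^ 2)⁻¹ := by
        rw [show Finset.Ioo 0 (N + 1) = Finset.Ico 1 (N + 1) from rfl,
          Finset.sum_Ico_eq_sum_range]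
        simp
    _ ≤ 2 := by simpa using sum_Ioo_inv_sq_le (α := ℝ) 0 (N + 1)

theorem norm_digamma_sub_le {z w : ℂ} (hz : 1 ≤ z.re) (hw : 1 ≤ w.re) :
    ‖Complex.digamma z - Complex.digamma w‖ ≤ 2 * ‖z - w‖ := by
  refine le_of_tendsto ((tendsto_digamma (by linarith)).sub (tendsto_digamma (by linarith))).norm
    (Eventually.of_forall fun n ↦ ?_)
  have hle {z : ℂ} (hz : 1 ≤ z.re) (j : ℕ) : 1 + (j : ℝ) ≤ ‖z + j‖ :=
    le_trans (by simpa using hz) (Complex.re_le_norm _)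
  rw [sub_sub_sub_cancel_left, ← Finset.sum_sub_distrib]
  calc ‖∑ j ∈ Finset.range (n + 1), (1 / (w + j) - 1 / (z + j))‖
      ≤ ∑ j ∈ Finset.range (n + 1), ‖z - w‖ * (1 / (1 + (j : ℝ)) ^ 2) := by
        refine norm_sum_le_of_le _ fun j _ ↦ ?_
        rw [div_sub_div _ _ (add_natCast_ne_zero (by linarith) j)
          (add_natCast_ne_zero (by linarith) j), norm_div, norm_mul, mul_one_div,
          show 1 * (z + j) - (w + j) * 1 = z - w by ring, sq]
        gcongr
        exacts [hle hw j, hle hz j]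
    _ ≤ 2 * ‖z - w‖ := by
        rw [← Finset.mul_sum, mul_comm]
        exact mul_le_mul_of_nonneg_right (sum_one_div_one_add_sq_le _) (norm_nonneg _)

end Digamma

section ArchFactor

/-- The archimedean part of the logarithmic derivative of the completed zeta function at
`1/2 + z`, shifted so that it is regular on `Re z ≥ 0`. -/
noncomputable def archFactor (z : ℂ) : ℂ :=
  Real.eulerMascheroniConstant - Real.log Real.pi / 2 + Complex.digamma (5 / 4 + z / 2) / 2

lemma norm_archFactor_sub_le {z w : ℂ} (hz : 0 ≤ z.re) (hw : 0 ≤ w.re) :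
    ‖archFactor z - archFactor w‖ ≤ ‖z - w‖ := by
  have hre {z : ℂ} (hz : 0 ≤ z.re) : 1 ≤ (5 / 4 + z / 2).re := by
    rw [show (5 / 4 + z / 2).re = 5 / 4 + z.re / 2 by norm_num]
    linarith
  have hψ := norm_digamma_sub_le (hre hz) (hre hw)
  rw [show (5 / 4 + z / 2 - (5 / 4 + w / 2) : ℂ) = (z - w) / 2 by ring, norm_div] at hψ
  rw [archFactor, archFactor, add_sub_add_left_eq_sub, ← sub_div, norm_div]
  norm_num at hψ ⊢
  linarith [norm_nonneg (z - w)]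

lemma continuousOn_archFactor : ContinuousOn archFactor {z | 0 ≤ z.re} :=
  LipschitzOnWith.continuousOn (K := 1) (LipschitzOnWith.of_dist_le_mul fun z hz w hw ↦ by
    simpa [dist_eq_norm] using norm_archFactor_sub_le hz hw)

/-- The real part of `archFactor` on the imaginary axis. -/
noncomputable def archDensity (t : ℝ) : ℝ := (archFactor (t * Complex.I)).re

lemma abs_archDensity_sub_le (s t : ℝ) : |archDensity s - archDensity t| ≤ |s - t| := by
  have h := norm_archFactor_sub_le (z := s * Complex.I) (w := t * Complex.I) (by simp) (by simp)
  rw [← sub_mul, norm_mul, Complex.norm_I, mul_one, ← Complex.ofReal_sub, Complex.norm_real] at h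
  rw [archDensity, archDensity, ← Complex.sub_re]
  exact (Complex.abs_re_le_norm _).trans h

lemma continuous_archDensity : Continuous archDensity :=
  LipschitzWith.continuous (K := 1) (LipschitzWith.of_dist_le_mul fun s t ↦ by
    simpa [Real.dist_eq] using abs_archDensity_sub_le s t)

lemma re_one_div_sub_one_div_add_mul_I {x : ℝ} (hx : 0 < x) (y : ℝ) :
    (1 / (x : ℂ) - 1 / (x + y * Complex.I)).re = y ^ 2 / (x * (x ^ 2 + y ^ 2)) := by
  rw [Complex.sub_re, ← Complex.ofReal_one, ← Complex.ofReal_div, Complex.ofReal_re,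
    Complex.ofReal_one, one_div (_ + _ * Complex.I), Complex.inv_re, Complex.normSq_add_mul_I]
  simp only [Complex.add_re, Complex.ofReal_re, Complex.re_ofReal_mul, Complex.I_re, mul_zero,
    add_zero]
  have : x ^ 2 + y ^ 2 ≠ 0 := by positivity
  field_simp
  ring

lemma tendsto_archDensity_sub (t : ℝ) :
    Tendsto (fun n : ℕ ↦ ∑ j ∈ Finset.range (n + 1),
      (t / 2) ^ 2 / ((j + 5 / 4) * ((j + 5 / 4) ^ 2 + (t / 2) ^ 2))) atTop
      (𝓝 (2 * (archDensity t - archDensity 0))) := by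
  have hlim := (Complex.continuous_re.tendsto _).comp
    ((tendsto_digamma (s := 5 / 4 + t * Complex.I / 2) (by norm_num)).sub
      (tendsto_digamma (s := 5 / 4) (by norm_num)))
  have hre : (Complex.digamma (5 / 4 + t * Complex.I / 2) - Complex.digamma (5 / 4)).re =
      2 * (archDensity t - archDensity 0) := by
    rw [archDensity, archDensity, ← Complex.sub_re, archFactor, archFactor,
      add_sub_add_left_eq_sub, ← sub_div]
    norm_num
    ring
  rw [hre] at hlim
  refine hlim.congr fun n ↦ ?_
  rw [Function.comp_apply, sub_sub_sub_cancel_left, ← Finset.sum_sub_distrib, Complex.re_sum]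
  refine Finset.sum_congr rfl fun j _ ↦ ?_
  rw [← re_one_div_sub_one_div_add_mul_I (by positivity)]
  push_cast
  ring_nf

lemma archDensity_zero_le (t : ℝ) : archDensity 0 ≤ archDensity t := by
  have := ge_of_tendsto (tendsto_archDensity_sub t) (Eventually.of_forall fun n ↦
    show (0 : ℝ) ≤ _ from Finset.sum_nonneg fun j _ ↦ by positivity)
  linarith

lemma half_sq_div_le_sqrt_mul {x : ℝ} (hx : 0 < x) (t : ℝ) :
    (t / 2) ^ 2 / (x * (x ^ 2 + (t / 2) ^ 2)) ≤ √|t| * (1 / |x| ^ (3 / 2 : ℝ)) := by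
  obtain ⟨a, ha, ha2⟩ : ∃ a : ℝ, 0 ≤ a ∧ |t| = a ^ 2 :=
    ⟨√|t|, Real.sqrt_nonneg _, (Real.sq_sqrt (abs_nonneg t)).symm⟩
  obtain ⟨b, hb, rfl⟩ : ∃ b : ℝ, 0 < b ∧ x = b ^ 2 :=
    ⟨√x, Real.sqrt_pos.2 hx, (Real.sq_sqrt hx.le).symm⟩
  have hpow : |b ^ 2| ^ (3 / 2 : ℝ) = b ^ 3 := by
    rw [abs_of_pos hx, ← Real.rpow_natCast, ← Real.rpow_mul hb.le, ← Real.rpow_natCast]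
    norm_num
  have ht : t ^ 2 = a ^ 4 := by rw [← sq_abs, ha2]; ring
  rw [hpow, ha2, Real.sqrt_sq ha, div_pow, ht, mul_one_div,
    div_le_div_iff₀ (by positivity) (by positivity)]
  have hyoung : a ^ 3 * b ≤ a ^ 4 + b ^ 4 := by
    nlinarith [sq_nonneg (a ^ 2 - a * b), sq_nonneg (a ^ 2 - b ^ 2), sq_nonneg (a * b - b ^ 2)]
  have : 0 ≤ a * b ^ 2 * (b ^ 4 + a ^ 4 / 4 - a ^ 3 * b / 4) :=
    mul_nonneg (by positivity) (by nlinarith [pow_nonneg hb.le 4])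
  linarith

lemma exists_abs_archDensity_le : ∃ C : ℝ, 0 ≤ C ∧ ∀ t, |archDensity t| ≤ C * (1 + √|t|) := by
  have hs : Summable fun n : ℕ ↦ 1 / |(n : ℝ) + 5 / 4| ^ (3 / 2 : ℝ) :=
    (Real.summable_one_div_nat_add_rpow (5 / 4) (3 / 2)).2 (by norm_num)
  set K := ∑' n : ℕ, 1 / |(n : ℝ) + 5 / 4| ^ (3 / 2 : ℝ)
  have hK : 0 ≤ K := tsum_nonneg fun n ↦ by positivity
  refine ⟨|archDensity 0| + K, by positivity, fun t ↦ ?_⟩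
  have hgrow : 2 * (archDensity t - archDensity 0) ≤ √|t| * K := by
    refine le_of_tendsto (tendsto_archDensity_sub t) (Eventually.of_forall fun n ↦ ?_)
    calc _ ≤ ∑ j ∈ Finset.range (n + 1), √|t| * (1 / |(j : ℝ) + 5 / 4| ^ (3 / 2 : ℝ)) :=
          Finset.sum_le_sum fun j _ ↦ half_sq_div_le_sqrt_mul (by positivity) t
      _ ≤ √|t| * K := by
          rw [← Finset.mul_sum]
          exact mul_le_mul_of_nonneg_left (hs.sum_le_tsum _ fun j _ ↦ by positivity)
            (Real.sqrt_nonneg _)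
  have hmono := archDensity_zero_le t
  have hsqrt : 0 ≤ √|t| := Real.sqrt_nonneg _
  have habs : |archDensity t| ≤ |archDensity 0| + (archDensity t - archDensity 0) := by
    have := abs_add_le (archDensity 0) (archDensity t - archDensity 0)
    rwa [add_sub_cancel, abs_of_nonneg (sub_nonneg.2 hmono)] at this
  nlinarith [mul_nonneg hsqrt hK, mul_nonneg hsqrt (abs_nonneg (archDensity 0))]

lemma log_sub_one_le_sum {y : ℝ} {N : ℕ} (hy : 0 < y) (hyN : y ≤ N + 2) :
    Real.log y - 1 ≤ ∑ j ∈ Finset.range N, 1 / ((j : ℝ) + 2) := by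
  have hharm : ((harmonic (N + 1) : ℚ) : ℝ) = ∑ j ∈ Finset.range N, 1 / ((j : ℝ) + 2) + 1 := by
    rw [harmonic, Finset.sum_range_succ']
    push_cast
    norm_num [add_assoc, one_add_one_eq_two]
  have hlog : Real.log y ≤ harmonic (N + 1) := by
    refine le_trans (Real.log_le_log hy ?_) (log_add_one_le_harmonic (N + 1))
    push_cast
    linarith
  linarith

lemma one_div_add_two_le {y : ℝ} {j : ℕ} (hj : (j : ℝ) + 2 ≤ y) :
    1 / ((j : ℝ) + 2) / 2 ≤ y ^ 2 / ((j + 5 / 4) * ((j + 5 / 4) ^ 2 + y ^ 2)) := by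
  have hpos : (0 : ℝ) < j + 5 / 4 := by positivity
  have hsq : ((j : ℝ) + 5 / 4) ^ 2 ≤ y ^ 2 := by gcongr; linarith
  rw [div_div, div_le_div_iff₀ (by positivity) (by positivity)]
  nlinarith [mul_le_mul_of_nonneg_left hsq hpos.le, sq_nonneg y]

lemma exists_log_le_archDensity : ∃ C : ℝ, ∀ t, 2 ≤ t → Real.log t / 4 - C ≤ archDensity t := by
  refine ⟨Real.log 2 / 4 + 1 / 4 - archDensity 0, fun t ht ↦ ?_⟩
  suffices h : Real.log (t / 2) / 2 - 1 / 2 ≤ 2 * (archDensity t - archDensity 0) by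
    rw [Real.log_div (by positivity) two_ne_zero] at h
    linarith
  obtain ⟨N, hN⟩ : ∃ N, ⌊t / 2⌋₊ = N + 1 :=
    ⟨_, (Nat.sub_add_cancel ((Nat.one_le_floor_iff _).2 (by linarith))).symm⟩
  have hle : (N : ℝ) + 1 ≤ t / 2 := by
    exact_mod_cast hN ▸ Nat.floor_le (show 0 ≤ t / 2 by linarith)
  have hlt : t / 2 ≤ N + 2 := by
    have := (Nat.lt_floor_add_one (t / 2)).le
    rw [hN] at this
    push_cast at this
    linarith
  refine ge_of_tendsto (tendsto_archDensity_sub t) ?_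
  filter_upwards [eventually_ge_atTop N] with n hn
  calc Real.log (t / 2) / 2 - 1 / 2 ≤ ∑ j ∈ Finset.range N, 1 / ((j : ℝ) + 2) / 2 := by
        rw [← Finset.sum_div]
        linarith [log_sub_one_le_sum (by linarith) hlt]
    _ ≤ ∑ j ∈ Finset.range N, (t / 2) ^ 2 / ((j + 5 / 4) * ((j + 5 / 4) ^ 2 + (t / 2) ^ 2)) := by
        refine Finset.sum_le_sum fun j hj ↦ one_div_add_two_le ?_
        have : (j : ℝ) + 1 ≤ N := by exact_mod_cast Finset.mem_range.1 hj
        linarith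
    _ ≤ _ := Finset.sum_le_sum_of_subset_of_nonneg
        (Finset.range_subset_range.2 (by lia)) fun j _ _ ↦ by positivity

end ArchFactor

section Factorization

variable {g : ℂ → ℂ} {K : Set ℂ}

lemma exists_eq_pow_mul (hg : Differentiable ℂ g) {a : ℂ} (ha : ¬ ∀ᶠ z in 𝓝 a, g z = 0) :
    ∃ (n : ℕ) (G : ℂ → ℂ), Differentiable ℂ G ∧ G a ≠ 0 ∧ ∀ z, g z = (z - a) ^ n * G z := by
  obtain ⟨n, k, hk, hka, hgk⟩ := (hg.analyticAt a).exists_eventuallyEq_pow_smul_nonzero_iff.2 ha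
  let G : ℂ → ℂ := fun z ↦ if z = a then k a else g z / (z - a) ^ n
  have hne {z : ℂ} (h : z ≠ a) : (z - a) ^ n ≠ 0 := pow_ne_zero _ (sub_ne_zero.2 h)
  have hGk : G =ᶠ[𝓝 a] k := by
    filter_upwards [hgk] with z hz
    by_cases h : z = a
    · simp [G, h]
    · simp [G, h, hz, hne h]
  refine ⟨n, G, fun z ↦ ?_, by simpa [G] using hka, fun z ↦ ?_⟩
  · by_cases h : z = a
    · exact h ▸ hGk.differentiableAt_iff.2 hk.differentiableAt
    · have hdiv : (fun z ↦ g z / (z - a) ^ n) =ᶠ[𝓝 z] G := by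
        filter_upwards [isOpen_ne.mem_nhds h] with w hw
        simp only [G, if_neg hw]
      exact hdiv.differentiableAt_iff.1 ((hg z).div (by fun_prop) (hne h))
  · by_cases h : z = a
    · rw [h, hgk.self_of_nhds]
      simp [G]
    · simp only [G, if_neg h]
      rw [mul_div_cancel₀ _ (hne h)]

lemma not_eventually_eq_zero (hg : Differentiable ℂ g) (h0 : ∃ a, g a ≠ 0) (z : ℂ) :
    ¬ ∀ᶠ w in 𝓝 z, g w = 0 := fun h ↦ by
  obtain ⟨a, ha⟩ := h0
  exact ha ((hg.differentiableOn.analyticOnNhd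
    isOpen_univ).eqOn_zero_of_preconnected_of_eventuallyEq_zero (𝕜 := ℂ) isPreconnected_univ
    (mem_univ z) h (mem_univ a))

lemma eventually_ne_zero (hg : Differentiable ℂ g) (h0 : ∃ a, g a ≠ 0) (z : ℂ) :
    ∀ᶠ w in 𝓝[≠] z, g w ≠ 0 :=
  (hg.analyticAt z).eventually_eq_zero_or_eventually_ne_zero.resolve_left
    (not_eventually_eq_zero hg h0 z)

lemma finite_setOf_mem_and_eq_zero (hg : Differentiable ℂ g) (h0 : ∃ a, g a ≠ 0)
    (hK : IsCompact K) : {z ∈ K | g z = 0}.Finite := by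
  by_contra hinf
  obtain ⟨x, -, hx⟩ := Set.Infinite.exists_accPt_of_subset_isCompact hinf hK fun z hz ↦ hz.1
  obtain ⟨w, hw, hw'⟩ :=
    ((accPt_iff_frequently_nhdsNE.1 hx).and_eventually (eventually_ne_zero hg h0 x)).exists
  exact hw' hw.2

lemma exists_eq_prod_pow_mul (hg : Differentiable ℂ g) (h0 : ∃ a, g a ≠ 0) (S : Finset ℂ) :
    ∃ (m : ℂ → ℕ) (G : ℂ → ℂ), Differentiable ℂ G ∧ (∀ ρ ∈ S, G ρ ≠ 0) ∧
      ∀ z, g z = (∏ ρ ∈ S, (z - ρ) ^ m ρ) * G z := by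
  induction S using Finset.induction_on with
  | empty => exact ⟨fun _ ↦ 0, g, hg, by simp, by simp⟩
  | insert a S haS ih =>
    obtain ⟨m, G, hG, hGS, hgG⟩ := ih
    have hG0 : ∃ b, G b ≠ 0 := h0.imp fun b hb ↦ right_ne_zero_of_mul (hgG b ▸ hb)
    obtain ⟨n, G', hG', hG'a, hGG'⟩ := exists_eq_pow_mul hG (not_eventually_eq_zero hG hG0 a)
    refine ⟨Function.update m a n, G', hG', fun ρ hρ ↦ ?_, fun z ↦ ?_⟩
    · rcases Finset.mem_insert.1 hρ with rfl | hρ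
      · exact hG'a
      · exact right_ne_zero_of_mul (hGG' ρ ▸ hGS ρ hρ)
    · have hprod : ∏ ρ ∈ S, (z - ρ) ^ Function.update m a n ρ = ∏ ρ ∈ S, (z - ρ) ^ m ρ :=
        Finset.prod_congr rfl fun ρ hρ ↦ by
          rw [Function.update_of_ne (fun h ↦ haS (h ▸ hρ) : ρ ≠ a)]
      rw [Finset.prod_insert haS, hgG, hGG', Function.update_self, hprod]
      ring

/-- A factorization `g = ∏ (z - ρ) ^ mult ρ * unit` of an entire function over its zeros `ρ` in `K`,
the factor `unit` being entire and zero-free on `K`. -/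
structure ZeroFactorization (g : ℂ → ℂ) (K : Set ℂ) where
  zeros : Finset ℂ
  mult : ℂ → ℕ
  unit : ℂ → ℂ
  mem_zeros : ∀ {z}, z ∈ zeros ↔ z ∈ K ∧ g z = 0
  differentiable_unit : Differentiable ℂ unit
  unit_ne_zero : ∀ z ∈ K, unit z ≠ 0
  eq_prod_mul : ∀ z, g z = (∏ ρ ∈ zeros, (z - ρ) ^ mult ρ) * unit z

lemma nonempty_zeroFactorization (hg : Differentiable ℂ g) (h0 : ∃ a, g a ≠ 0)
    (hK : IsCompact K) : Nonempty (ZeroFactorization g K) := by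
  have hfin := finite_setOf_mem_and_eq_zero hg h0 hK
  have hmem {z : ℂ} : z ∈ hfin.toFinset ↔ z ∈ K ∧ g z = 0 := by simp
  obtain ⟨m, G, hG, hGS, hgG⟩ := exists_eq_prod_pow_mul hg h0 hfin.toFinset
  refine ⟨⟨hfin.toFinset, m, G, hmem, hG, fun z hz h ↦ ?_, hgG⟩⟩
  exact hGS z (hmem.2 ⟨hz, by rw [hgG, h, mul_zero]⟩) h

lemma re_natCast_div_sub {ρ : ℂ} (hρ : ρ.re = 0) (n : ℕ) (σ t : ℝ) :
    ((n : ℂ) / (σ + t * Complex.I - ρ)).re = n * (σ / (σ ^ 2 + (t - ρ.im) ^ 2)) := by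
  have h : σ + t * Complex.I - ρ = σ + ((t - ρ.im : ℝ) : ℂ) * Complex.I := by
    apply Complex.ext <;> simp [hρ]
  rw [h, div_eq_mul_inv, ← Complex.ofReal_natCast, Complex.re_ofReal_mul, Complex.inv_re,
    Complex.normSq_add_mul_I]
  simp

namespace ZeroFactorization

variable (F : ZeroFactorization g K)

lemma one_le_mult {ρ : ℂ} (hρ : ρ ∈ F.zeros) : 1 ≤ F.mult ρ := by
  obtain ⟨hρK, hgρ⟩ := F.mem_zeros.1 hρ
  rw [F.eq_prod_mul, mul_eq_zero, or_iff_left (F.unit_ne_zero ρ hρK), Finset.prod_eq_zero_iff]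
    at hgρ
  obtain ⟨ρ', -, h⟩ := hgρ
  rw [pow_eq_zero_iff', sub_eq_zero] at h
  exact Nat.one_le_iff_ne_zero.2 (h.1 ▸ h.2)

lemma logDeriv_eq {z : ℂ} (hz : g z ≠ 0) :
    logDeriv g z = ∑ ρ ∈ F.zeros, F.mult ρ / (z - ρ) + logDeriv F.unit z := by
  have hg : g = fun z ↦ (∏ ρ ∈ F.zeros, (z - ρ) ^ F.mult ρ) * F.unit z := funext F.eq_prod_mul
  rw [F.eq_prod_mul] at hz
  have hprod := left_ne_zero_of_mul hz
  refine (congrFun (congrArg logDeriv hg) z).trans ?_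
  rw [logDeriv_mul z hprod (right_ne_zero_of_mul hz) (by fun_prop) (F.differentiable_unit z),
    logDeriv_prod (f := fun (ρ z : ℂ) ↦ (z - ρ) ^ F.mult ρ) (Finset.prod_ne_zero_iff.1 hprod)
      fun ρ _ ↦ by fun_prop]
  congr 1
  refine Finset.sum_congr rfl fun ρ _ ↦ ?_
  rw [logDeriv_fun_pow (f := fun z : ℂ ↦ z - ρ) (by fun_prop), logDeriv_apply, deriv_sub_const,
    deriv_id'', mul_one_div]

lemma re_logDeriv_eq (him : ∀ z, g z = 0 → z.re = 0) {σ t : ℝ} (hg : g (σ + t * Complex.I) ≠ 0) :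
    (logDeriv g (σ + t * Complex.I)).re =
      ∑ ρ ∈ F.zeros, F.mult ρ * (σ / (σ ^ 2 + (t - ρ.im) ^ 2)) +
        (logDeriv F.unit (σ + t * Complex.I)).re := by
  rw [F.logDeriv_eq hg, Complex.add_re, Complex.re_sum]
  congr 1
  exact Finset.sum_congr rfl fun ρ hρ ↦ re_natCast_div_sub (him ρ (F.mem_zeros.1 hρ).2) _ _ _

lemma continuousAt_logDeriv_unit {z : ℂ} (hz : z ∈ K) : ContinuousAt (logDeriv F.unit) z :=
  F.differentiable_unit.deriv.continuous.continuousAt.div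
    F.differentiable_unit.continuous.continuousAt (F.unit_ne_zero z hz)

lemma measurable_logDeriv_unit : Measurable (logDeriv F.unit) :=
  (measurable_deriv _).div F.differentiable_unit.continuous.measurable

lemma re_logDeriv_unit_eq_zero (hg : Differentiable ℂ g) (h0 : ∃ a, g a ≠ 0)
    (him : ∀ z, g z = 0 → z.re = 0) (hre : ∀ t : ℝ, (logDeriv g (t * Complex.I)).re = 0) {t : ℝ}
    (ht : t * Complex.I ∈ K) : (logDeriv F.unit (t * Complex.I)).re = 0 := by
  have hcont : ContinuousAt (fun t : ℝ ↦ (logDeriv F.unit (t * Complex.I)).re) t :=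
    Complex.continuous_re.continuousAt.comp (ContinuousAt.comp
      (f := fun t : ℝ ↦ (t : ℂ) * Complex.I) (F.continuousAt_logDeriv_unit ht) (by fun_prop))
  have hinj : Tendsto (fun s : ℝ ↦ (s : ℂ) * Complex.I) (𝓝[≠] t) (𝓝[≠] (t * Complex.I)) :=
    tendsto_nhdsWithin_iff.2 ⟨((show Continuous fun s : ℝ ↦ (s : ℂ) * Complex.I by fun_prop).tendsto
      t).mono_left nhdsWithin_le_nhds, eventually_mem_nhdsWithin.mono fun s hs ↦ by simpa using hs⟩
  have hev : ∀ᶠ s : ℝ in 𝓝[≠] t, (logDeriv F.unit (s * Complex.I)).re = 0 := by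
    filter_upwards [hinj.eventually (eventually_ne_zero hg h0 _)] with s hs
    have := F.re_logDeriv_eq him (σ := 0) (t := s) (by simpa using hs)
    simpa [hre] using this.symm
  exact tendsto_nhds_unique (hcont.mono_left nhdsWithin_le_nhds)
    (tendsto_const_nhds.congr' (hev.mono fun _ h ↦ h.symm))

end ZeroFactorization

end Factorization

section BoundaryValue

theorem tendsto_integral_mul_poisson {Q : ℝ → ℝ → ℂ} {M γ : ℝ}
    (hmeas : ∀ σ, Measurable (Q σ)) (hM : ∀ᶠ σ in 𝓝[>] 0, ∀ t, ‖Q σ t‖ ≤ M)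
    (hc : ContinuousAt (Function.uncurry Q) (0, γ)) :
    Tendsto (fun σ ↦ ∫ t, Q σ t * ((σ / (σ ^ 2 + (t - γ) ^ 2) : ℝ) : ℂ)) (𝓝[>] 0)
      (𝓝 (Real.pi * Q 0 γ)) := by
  have hlim : Tendsto (fun σ ↦ ∫ x : ℝ, Q σ (σ * x + γ) * (((1 + x ^ 2)⁻¹ : ℝ) : ℂ)) (𝓝[>] 0)
      (𝓝 (∫ x : ℝ, Q 0 γ * (((1 + x ^ 2)⁻¹ : ℝ) : ℂ))) := by
    refine tendsto_integral_filter_of_dominated_convergence (fun x ↦ M * (1 + x ^ 2)⁻¹) ?_ ?_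
      (integrable_inv_one_add_sq.const_mul M) ?_
    · exact Eventually.of_forall fun σ ↦ (((hmeas σ).comp (by fun_prop)).mul
        (Complex.measurable_ofReal.comp (by fun_prop))).aestronglyMeasurable
    · filter_upwards [hM] with σ hσ
      refine Eventually.of_forall fun x ↦ ?_
      rw [norm_mul, Complex.norm_real, Real.norm_of_nonneg (by positivity)]
      gcongr
      exact hσ _
    · refine Eventually.of_forall fun x ↦ Tendsto.mul_const _ ?_
      have := (show Continuous fun σ : ℝ ↦ (σ, σ * x + γ) by fun_prop).tendsto 0
      simp only [zero_mul, zero_add] at this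
      exact hc.tendsto.comp (this.mono_left nhdsWithin_le_nhds)
  rw [integral_const_mul, integral_complex_ofReal, integral_univ_inv_one_add_sq, mul_comm] at hlim
  refine hlim.congr' ?_
  filter_upwards [self_mem_nhdsWithin] with σ (hσ : 0 < σ)
  have hscale := Measure.integral_comp_mul_left (fun t ↦ Q σ (t + γ) *
    ((σ / (σ ^ 2 + (t + γ - γ) ^ 2) : ℝ) : ℂ)) σ
  rw [abs_of_pos (inv_pos.2 hσ), eq_inv_smul_iff₀ hσ.ne', ← integral_smul] at hscale
  rw [← integral_add_right_eq_self (fun t ↦ Q σ t * ((σ / (σ ^ 2 + (t - γ) ^ 2) : ℝ) : ℂ)) γ,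
    ← hscale]
  refine integral_congr_ae (Eventually.of_forall fun x ↦ ?_)
  simp only [add_sub_cancel_right, Complex.real_smul]
  rw [mul_left_comm, ← Complex.ofReal_mul]
  congr 2
  field_simp

section CompactSupport

variable {q : ℝ → ℂ} {f : ℝ → ℝ} {R M B : ℝ}

lemma norm_mul_ofReal_le_indicator (hqM : ∀ t, ‖q t‖ ≤ M) (hqR : ∀ t, R < |t| → q t = 0)
    (hf : ∀ t, |t| ≤ R → |f t| ≤ B) (t : ℝ) :
    ‖q t * (f t : ℂ)‖ ≤ (Icc (-R) R).indicator (fun _ ↦ M * B) t := by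
  by_cases ht : |t| ≤ R
  · rw [indicator_of_mem (mem_Icc.2 (abs_le.1 ht)), norm_mul, Complex.norm_real, Real.norm_eq_abs]
    exact mul_le_mul (hqM t) (hf t ht) (abs_nonneg _) ((norm_nonneg _).trans (hqM t))
  · rw [hqR t (not_le.1 ht), indicator_of_notMem fun h ↦ ht (abs_le.2 (mem_Icc.1 h))]
    simp

lemma integrable_indicator_Icc_const (a b C : ℝ) :
    Integrable ((Icc a b).indicator fun _ ↦ C) :=
  (integrable_indicator_iff measurableSet_Icc).2 (integrableOn_const measure_Icc_lt_top.ne)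

lemma integrable_mul_ofReal (hq : Measurable q) (hf : Measurable f) (hqM : ∀ t, ‖q t‖ ≤ M)
    (hqR : ∀ t, R < |t| → q t = 0) (hfB : ∀ t, |t| ≤ R → |f t| ≤ B) :
    Integrable fun t ↦ q t * (f t : ℂ) :=
  (integrable_indicator_Icc_const (-R) R (M * B)).mono'
    (hq.mul (Complex.measurable_ofReal.comp hf)).aestronglyMeasurable
    (Eventually.of_forall (norm_mul_ofReal_le_indicator hqM hqR hfB))

end CompactSupport

/-- A family of test functions on the lines `Re z = σ`, supported in `[-R, R]`, bounded by `M` and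
continuous up to `σ = 0`. -/
structure IsTestFamily (Q : ℝ → ℝ → ℂ) (R M : ℝ) : Prop where
  measurable : ∀ σ, Measurable (Q σ)
  continuousAt : ∀ t, ContinuousAt (Function.uncurry Q) (0, t)
  norm_le : ∀ᶠ σ in 𝓝[>] 0, ∀ t, ‖Q σ t‖ ≤ M
  eq_zero : ∀ σ t, R < |t| → Q σ t = 0

lemma IsTestFamily.tendsto {Q : ℝ → ℝ → ℂ} {R M : ℝ} (hQ : IsTestFamily Q R M) (t : ℝ) :
    Tendsto (fun σ ↦ Q σ t) (𝓝[>] 0) (𝓝 (Q 0 t)) :=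
  (hQ.continuousAt t).tendsto.comp
    ((show Continuous fun σ : ℝ ↦ (σ, t) by fun_prop).tendsto 0 |>.mono_left nhdsWithin_le_nhds)

lemma abs_div_sq_add_sq_le {σ : ℝ} (hσ : 0 < σ) (x : ℝ) : |σ / (σ ^ 2 + x ^ 2)| ≤ 1 / σ := by
  rw [abs_of_nonneg (by positivity), div_le_div_iff₀ (by positivity) hσ]
  nlinarith [sq_nonneg x]

lemma add_mul_I_mem_closedBall {R σ t : ℝ} (hσ : |σ| ≤ 1) (ht : |t| ≤ R) :
    (σ + t * Complex.I : ℂ) ∈ Metric.closedBall 0 (R + 1) := by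
  rw [mem_closedBall_zero_iff]
  refine (norm_add_le _ _).trans ?_
  rw [norm_mul, Complex.norm_I, mul_one, Complex.norm_real, Complex.norm_real, Real.norm_eq_abs,
    Real.norm_eq_abs]
  linarith

namespace ZeroFactorization

variable {g : ℂ → ℂ} {R M : ℝ} {Q : ℝ → ℝ → ℂ}
  (F : ZeroFactorization g (Metric.closedBall 0 (R + 1)))

lemma measurable_re_logDeriv_unit (σ : ℝ) :
    Measurable fun t : ℝ ↦ (logDeriv F.unit (σ + t * Complex.I)).re :=
  Complex.measurable_re.comp (F.measurable_logDeriv_unit.comp (by fun_prop))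

lemma exists_abs_re_logDeriv_unit_le :
    ∃ B, ∀ σ t : ℝ, |σ| ≤ 1 → |t| ≤ R → |(logDeriv F.unit (σ + t * Complex.I)).re| ≤ B := by
  obtain ⟨B, hB⟩ := (isCompact_closedBall (0 : ℂ) (R + 1)).exists_bound_of_continuousOn
    (f := logDeriv F.unit) fun z hz ↦ (F.continuousAt_logDeriv_unit hz).continuousWithinAt
  exact ⟨B, fun σ t hσ ht ↦
    (Complex.abs_re_le_norm _).trans (hB _ (add_mul_I_mem_closedBall hσ ht))⟩

lemma tendsto_re_logDeriv_unit {t : ℝ} (ht : |t| ≤ R) :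
    Tendsto (fun σ : ℝ ↦ ((logDeriv F.unit (σ + t * Complex.I)).re : ℂ)) (𝓝[>] 0)
      (𝓝 ((logDeriv F.unit (t * Complex.I)).re : ℂ)) := by
  have hunit : ContinuousAt (logDeriv F.unit) (((0 : ℝ) : ℂ) + t * Complex.I) :=
    F.continuousAt_logDeriv_unit (add_mul_I_mem_closedBall (by simp) ht)
  have := ((Complex.continuous_ofReal.comp Complex.continuous_re).continuousAt.comp
    (ContinuousAt.comp (f := fun σ : ℝ ↦ (σ : ℂ) + t * Complex.I) hunit (by fun_prop))).tendsto
  simp only [Function.comp_def, Complex.ofReal_zero, zero_add] at this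
  exact this.mono_left nhdsWithin_le_nhds

lemma tendsto_integral_mul_re_logDeriv_unit (hg : Differentiable ℂ g) (h0 : ∃ a, g a ≠ 0)
    (him : ∀ z, g z = 0 → z.re = 0) (hre : ∀ t : ℝ, (logDeriv g (t * Complex.I)).re = 0)
    (hQ : IsTestFamily Q R M) :
    Tendsto (fun σ : ℝ ↦ ∫ t : ℝ, Q σ t * ((logDeriv F.unit (σ + t * Complex.I)).re : ℂ))
      (𝓝[>] 0) (𝓝 0) := by
  obtain ⟨B, hB⟩ := F.exists_abs_re_logDeriv_unit_le
  suffices hlim : Tendsto (fun σ : ℝ ↦ ∫ t : ℝ, Q σ t *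
      ((logDeriv F.unit (σ + t * Complex.I)).re : ℂ)) (𝓝[>] 0) (𝓝 (∫ _ : ℝ, (0 : ℂ))) by
    simpa only [integral_zero] using hlim
  refine tendsto_integral_filter_of_dominated_convergence
    ((Icc (-R) R).indicator fun _ ↦ M * B) ?_ ?_ (integrable_indicator_Icc_const _ _ _) ?_
  · exact Eventually.of_forall fun σ ↦ ((hQ.measurable σ).mul
      (Complex.measurable_ofReal.comp (F.measurable_re_logDeriv_unit σ))).aestronglyMeasurable
  · filter_upwards [Ioc_mem_nhdsGT one_pos, hQ.norm_le] with σ hσ hσM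
    exact Eventually.of_forall (norm_mul_ofReal_le_indicator hσM (hQ.eq_zero σ)
      fun t ↦ hB σ t (by rw [abs_of_pos hσ.1]; exact hσ.2))
  · refine Eventually.of_forall fun t ↦ ?_
    by_cases ht : |t| ≤ R
    · have hmem : (t * Complex.I : ℂ) ∈ Metric.closedBall 0 (R + 1) := by
        simpa using add_mul_I_mem_closedBall (σ := 0) (by simp) ht
      have := (hQ.tendsto t).mul (F.tendsto_re_logDeriv_unit ht)
      rwa [F.re_logDeriv_unit_eq_zero hg h0 him hre hmem, Complex.ofReal_zero, mul_zero] at this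
    · simp [hQ.eq_zero _ t (not_le.1 ht)]

lemma integral_mul_re_logDeriv (him : ∀ z, g z = 0 → z.re = 0) (hQ : IsTestFamily Q R M) {σ : ℝ}
    (hσ : σ ∈ Ioc (0 : ℝ) 1) (hσM : ∀ t, ‖Q σ t‖ ≤ M) :
    ∫ t : ℝ, Q σ t * ((logDeriv g (σ + t * Complex.I)).re : ℂ) =
      ∑ ρ ∈ F.zeros, F.mult ρ * (∫ t : ℝ, Q σ t * ((σ / (σ ^ 2 + (t - ρ.im) ^ 2) : ℝ) : ℂ)) +
        ∫ t : ℝ, Q σ t * ((logDeriv F.unit (σ + t * Complex.I)).re : ℂ) := by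
  obtain ⟨B, hB⟩ := F.exists_abs_re_logDeriv_unit_le
  have hunit : Integrable fun t : ℝ ↦ Q σ t * ((logDeriv F.unit (σ + t * Complex.I)).re : ℂ) :=
    integrable_mul_ofReal (hQ.measurable σ) (F.measurable_re_logDeriv_unit σ) hσM (hQ.eq_zero σ)
      fun t ↦ hB σ t (by rw [abs_of_pos hσ.1]; exact hσ.2)
  have hpoisson (γ : ℝ) :
      Integrable fun t : ℝ ↦ Q σ t * ((σ / (σ ^ 2 + (t - γ) ^ 2) : ℝ) : ℂ) :=
    integrable_mul_ofReal (hQ.measurable σ) (Measurable.div (by fun_prop) (by fun_prop)) hσM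
      (hQ.eq_zero σ) fun t _ ↦ abs_div_sq_add_sq_le hσ.1 _
  simp_rw [← integral_const_mul]
  rw [← integral_finsetSum _ fun ρ _ ↦ (hpoisson ρ.im).const_mul _, ← integral_add
    (integrable_finsetSum _ fun ρ _ ↦ (hpoisson ρ.im).const_mul _) hunit]
  refine integral_congr_ae (Eventually.of_forall fun t ↦ ?_)
  have hgz : g (σ + t * Complex.I) ≠ 0 := fun h ↦ hσ.1.ne' (by simpa using him _ h)
  simp only [F.re_logDeriv_eq him hgz, Complex.ofReal_add, mul_add, Complex.ofReal_sum,
    Finset.mul_sum]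
  congr 1
  refine Finset.sum_congr rfl fun ρ _ ↦ ?_
  push_cast
  ring

end ZeroFactorization

theorem exists_tendsto_integral_mul_re_logDeriv {g : ℂ → ℂ} (hg : Differentiable ℂ g)
    (h0 : ∃ a, g a ≠ 0) (him : ∀ z, g z = 0 → z.re = 0)
    (hre : ∀ t : ℝ, (logDeriv g (t * Complex.I)).re = 0) (R : ℝ) :
    ∃ (S : Finset ℝ) (m : ℝ → ℕ), (∀ γ ∈ S, 1 ≤ m γ) ∧
      ∀ (Q : ℝ → ℝ → ℂ) (M : ℝ), IsTestFamily Q R M →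
        Tendsto (fun σ : ℝ ↦ ∫ t : ℝ, Q σ t * ((logDeriv g (σ + t * Complex.I)).re : ℂ)) (𝓝[>] 0)
          (𝓝 (Real.pi * ∑ γ ∈ S, m γ * Q 0 γ)) := by
  obtain ⟨F⟩ := nonempty_zeroFactorization hg h0 (isCompact_closedBall (0 : ℂ) (R + 1))
  have hρ {ρ : ℂ} (h : ρ ∈ F.zeros) : ρ.re = 0 := him ρ (F.mem_zeros.1 h).2
  have hI {ρ : ℂ} (h : ρ ∈ F.zeros) : (ρ.im : ℂ) * Complex.I = ρ := by
    apply Complex.ext <;> simp [hρ h]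
  refine ⟨F.zeros.image Complex.im, fun γ ↦ F.mult (γ * Complex.I), fun γ hγ ↦ ?_,
    fun Q M hQ ↦ ?_⟩
  · obtain ⟨ρ, h, rfl⟩ := Finset.mem_image.1 hγ
    simpa only [hI h] using F.one_le_mult h
  · have hsum : ∑ γ ∈ F.zeros.image Complex.im, (F.mult (γ * Complex.I) : ℂ) * Q 0 γ =
        ∑ ρ ∈ F.zeros, F.mult ρ * Q 0 ρ.im := by
      rw [Finset.sum_image fun a ha b hb h ↦ Complex.ext ((hρ ha).trans (hρ hb).symm) h]
      exact Finset.sum_congr rfl fun ρ h ↦ by rw [hI h]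
    have hlim := (tendsto_finsetSum F.zeros fun ρ _ ↦ (tendsto_integral_mul_poisson (γ := ρ.im)
      hQ.measurable hQ.norm_le (hQ.continuousAt _)).const_mul (F.mult ρ : ℂ)).add
        (F.tendsto_integral_mul_re_logDeriv_unit hg h0 him hre hQ)
    rw [add_zero] at hlim
    rw [hsum, Finset.mul_sum]
    simp_rw [mul_left_comm (Real.pi : ℂ)]
    refine hlim.congr' ?_
    filter_upwards [Ioc_mem_nhdsGT one_pos, hQ.norm_le] with σ hσ hσM
    exact (F.integral_mul_re_logDeriv him hQ hσ hσM).symm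

end BoundaryValue

section Xi

/-- The Riemann xi function `s (s - 1) Λ(s)` at `s = 1 / 2 + z`, so that the critical line is the
imaginary axis. -/
noncomputable def xi (z : ℂ) : ℂ := (z ^ 2 - 1 / 4) * completedRiemannZeta₀ (1 / 2 + z) + 1

lemma differentiable_xi : Differentiable ℂ xi := by
  have h : Differentiable ℂ fun z : ℂ ↦ completedRiemannZeta₀ (1 / 2 + z) :=
    differentiable_completedZeta₀.comp (by fun_prop)
  exact (Differentiable.mul (by fun_prop) h).add_const 1

lemma xi_neg (z : ℂ) : xi (-z) = xi z := by
  rw [xi, xi, ← completedRiemannZeta₀_one_sub (1 / 2 + z),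
    show (1 - (1 / 2 + z) : ℂ) = 1 / 2 + -z by ring, neg_sq]

lemma xi_half : xi (1 / 2) = 1 := by
  rw [xi]
  norm_num

lemma xi_eq_mul_riemannZeta {z : ℂ} (hz : 0 < z.re) (hz' : z ≠ 1 / 2) :
    xi z = (z ^ 2 - 1 / 4) * (riemannZeta (1 / 2 + z) * Complex.Gammaℝ (1 / 2 + z)) := by
  have hs : (1 / 2 + z : ℂ) ≠ 0 := Complex.ne_zero_of_re_pos (by norm_num; linarith)
  have hs1 : (1 - (1 / 2 + z) : ℂ) ≠ 0 := fun h ↦ hz' (by linear_combination -h)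
  have hΓ : Complex.Gammaℝ (1 / 2 + z) ≠ 0 :=
    Complex.Gammaℝ_ne_zero_of_re_pos (by norm_num; linarith)
  rw [riemannZeta_def_of_ne_zero hs, div_mul_cancel₀ _ hΓ, completedRiemannZeta_eq, xi,
    show z ^ 2 - 1 / 4 = -((1 / 2 + z) * (1 - (1 / 2 + z))) by ring]
  generalize 1 / 2 + z = s at hs hs1 ⊢
  field_simp
  ring

lemma xi_eq_mul_riemannZeta₁ {z : ℂ} (hz : 0 < z.re) :
    xi z = 2 * (Real.pi : ℂ) ^ (-(1 / 2 + z) / 2) * Complex.Gamma (5 / 4 + z / 2) *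
      riemannZeta₁ (1 / 2 + z) := by
  have hs : ((1 / 2 + z) / 2 : ℂ) ≠ 0 :=
    div_ne_zero (Complex.ne_zero_of_re_pos (by norm_num; linarith)) two_ne_zero
  rw [show (5 / 4 + z / 2 : ℂ) = (1 / 2 + z) / 2 + 1 by ring, Complex.Gamma_add_one _ hs]
  by_cases hz' : z = 1 / 2
  · have hpi : (Real.pi : ℂ) ^ (-1 / 2 : ℂ) * (Real.pi : ℂ) ^ (1 / 2 : ℂ) = 1 := by
      rw [← Complex.cpow_add _ _ (Complex.ofReal_ne_zero.2 Real.pi_ne_zero), neg_div,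
        neg_add_cancel, Complex.cpow_zero]
    rw [hz', xi_half, add_halves, Complex.Gamma_one_half_eq, riemannZeta₁_one]
    linear_combination -hpi
  · have hs1 : (1 / 2 + z : ℂ) ≠ 1 := fun h ↦ hz' (by linear_combination h)
    rw [xi_eq_mul_riemannZeta hz hz', Complex.Gammaℝ_def, riemannZeta₁_eq_of_ne_one hs1]
    ring

lemma conj_Gammaℝ (s : ℂ) :
    Complex.Gammaℝ (starRingEnd ℂ s) = starRingEnd ℂ (Complex.Gammaℝ s) := by
  have hπ : (Real.pi : ℂ).arg ≠ Real.pi := by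
    rw [Complex.arg_ofReal_of_nonneg Real.pi_pos.le]
    exact Real.pi_pos.ne
  rw [Complex.Gammaℝ_def, Complex.Gammaℝ_def,
    show -starRingEnd ℂ s / 2 = starRingEnd ℂ (-s / 2) by simp [map_ofNat],
    show starRingEnd ℂ s / 2 = starRingEnd ℂ (s / 2) by simp [map_ofNat], Complex.Gamma_conj,
    Complex.cpow_conj _ _ hπ, Complex.conj_ofReal, map_mul]

lemma conj_xi (z : ℂ) : starRingEnd ℂ (xi (starRingEnd ℂ z)) = xi z := by
  have hdiff : Differentiable ℂ (starRingEnd ℂ ∘ xi ∘ starRingEnd ℂ) := fun z ↦ by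
    simpa using (differentiable_xi (starRingEnd ℂ z)).conj_conj
  have hev : (starRingEnd ℂ ∘ xi ∘ starRingEnd ℂ) =ᶠ[𝓝 1] xi := by
    have hre : ∀ᶠ z : ℂ in 𝓝 1, 1 / 2 < z.re :=
      continuousAt_const.eventually_lt Complex.continuous_re.continuousAt (by norm_num)
    filter_upwards [hre] with z hz
    have hne {z : ℂ} (hz : 1 / 2 < z.re) : z ≠ 1 / 2 := fun h ↦ by
      norm_num [h] at hz
    have hc : 1 / 2 < (starRingEnd ℂ z).re := by rwa [Complex.conj_re]
    rw [Function.comp_apply, Function.comp_apply, xi_eq_mul_riemannZeta (by linarith) (hne hz),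
      xi_eq_mul_riemannZeta (by linarith) (hne hc),
      show (1 / 2 + starRingEnd ℂ z : ℂ) = starRingEnd ℂ (1 / 2 + z) by simp [map_ofNat],
      riemannZeta_conj, conj_Gammaℝ]
    simp [map_ofNat]
  exact congrFun ((hdiff.differentiableOn.analyticOnNhd isOpen_univ).eq_of_eventuallyEq (𝕜 := ℂ)
    (differentiable_xi.differentiableOn.analyticOnNhd isOpen_univ) hev) z

lemma re_logDeriv_xi (t : ℝ) : (logDeriv xi (t * Complex.I)).re = 0 := by
  have hconj : starRingEnd ℂ (t * Complex.I) = -(t * Complex.I) := by simp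
  have hxi : starRingEnd ℂ (xi (t * Complex.I)) = xi (t * Complex.I) := by
    have := conj_xi (t * Complex.I)
    rwa [hconj, xi_neg] at this
  have hodd : deriv xi (-(t * Complex.I)) = -deriv xi (t * Complex.I) := by
    have := deriv_comp_neg xi (t * Complex.I)
    rw [show (fun z ↦ xi (-z)) = xi from funext xi_neg] at this
    rw [this, neg_neg]
  have hderiv : starRingEnd ℂ (deriv xi (t * Complex.I)) = -deriv xi (t * Complex.I) := by
    have := congrFun (deriv_conj_conj (𝕜 := ℂ) (f := xi)) (t * Complex.I)
    rw [show starRingEnd ℂ ∘ xi ∘ starRingEnd ℂ = xi from funext conj_xi, Function.comp_apply,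
      Function.comp_apply, hconj, hodd, map_neg] at this
    rw [eq_neg_iff_add_eq_zero, add_comm, ← eq_neg_iff_add_eq_zero, ← this]
  have hlog : starRingEnd ℂ (logDeriv xi (t * Complex.I)) = -logDeriv xi (t * Complex.I) := by
    rw [logDeriv_apply, map_div₀, hxi, hderiv, neg_div]
  have := congrArg Complex.re hlog
  rw [Complex.conj_re, Complex.neg_re] at this
  linarith

lemma logDeriv_pi_cpow (z : ℂ) :
    logDeriv (fun z : ℂ ↦ 2 * (Real.pi : ℂ) ^ (-(1 / 2 + z) / 2)) z = -(Real.log Real.pi) / 2 := by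
  have hπ : (Real.pi : ℂ) ≠ 0 := Complex.ofReal_ne_zero.2 Real.pi_ne_zero
  have hlin : HasDerivAt (fun z : ℂ ↦ -(1 / 2 + z) / 2) (-1 / 2) z :=
    ((hasDerivAt_id z).const_add (1 / 2)).neg.div_const 2
  have hpow := (hlin.const_cpow (Or.inl hπ)).const_mul 2
  rw [logDeriv_apply, hpow.deriv, ← Complex.ofReal_log Real.pi_pos.le,
    div_eq_iff (mul_ne_zero two_ne_zero (Complex.cpow_ne_zero_iff.2 (Or.inl hπ)))]
  ring

lemma differentiableAt_Gamma_of_re_pos {s : ℂ} (hs : 0 < s.re) :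
    DifferentiableAt ℂ Complex.Gamma s :=
  Complex.differentiableAt_Gamma _ fun m h ↦ by
    rw [h, Complex.neg_re, Complex.natCast_re] at hs
    linarith [m.cast_nonneg (α := ℝ)]

lemma logDeriv_Gamma_comp {z : ℂ} (hz : 0 < (5 / 4 + z / 2).re) :
    logDeriv (fun z ↦ Complex.Gamma (5 / 4 + z / 2)) z = Complex.digamma (5 / 4 + z / 2) / 2 := by
  have hlin : HasDerivAt (fun z : ℂ ↦ 5 / 4 + z / 2) (1 / 2) z :=
    ((hasDerivAt_id z).div_const 2).const_add (5 / 4)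
  have h := logDeriv_comp (x := z) (g := fun z ↦ 5 / 4 + z / 2)
    (differentiableAt_Gamma_of_re_pos hz) hlin.differentiableAt
  rw [hlin.deriv, mul_one_div] at h
  exact h

lemma logDeriv_xi_of_ne_zero {z : ℂ} (hz : 0 < z.re) (hζ : riemannZeta₁ (1 / 2 + z) ≠ 0) :
    logDeriv xi z = archFactor z - Real.eulerMascheroniConstant +
      logDeriv riemannZeta₁ (1 / 2 + z) := by
  have hev : xi =ᶠ[𝓝 z] fun z ↦ 2 * (Real.pi : ℂ) ^ (-(1 / 2 + z) / 2) *
      Complex.Gamma (5 / 4 + z / 2) * riemannZeta₁ (1 / 2 + z) := by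
    filter_upwards [(isOpen_lt continuous_const Complex.continuous_re).mem_nhds hz] with w hw
    exact xi_eq_mul_riemannZeta₁ hw
  have hπ : (Real.pi : ℂ) ≠ 0 := Complex.ofReal_ne_zero.2 Real.pi_ne_zero
  have hpow : (2 * (Real.pi : ℂ) ^ (-(1 / 2 + z) / 2)) ≠ 0 :=
    mul_ne_zero two_ne_zero (Complex.cpow_ne_zero_iff.2 (Or.inl hπ))
  have hpow' : DifferentiableAt ℂ (fun z : ℂ ↦ 2 * (Real.pi : ℂ) ^ (-(1 / 2 + z) / 2)) z :=
    (DifferentiableAt.const_cpow (by fun_prop) (Or.inl hπ)).const_mul 2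
  have hre : 0 < (5 / 4 + z / 2).re := by norm_num; linarith
  have hΓ : DifferentiableAt ℂ (fun z ↦ Complex.Gamma (5 / 4 + z / 2)) z :=
    (differentiableAt_Gamma_of_re_pos hre).comp z (f := fun z : ℂ ↦ 5 / 4 + z / 2) (by fun_prop)
  have hΓ0 := Complex.Gamma_ne_zero_of_re_pos hre
  have hζd : DifferentiableAt ℂ (fun z ↦ riemannZeta₁ (1 / 2 + z)) z :=
    (differentiable_riemannZeta₁ _).comp z (f := fun z : ℂ ↦ 1 / 2 + z) (by fun_prop)
  have hζ' : logDeriv (fun z ↦ riemannZeta₁ (1 / 2 + z)) z = logDeriv riemannZeta₁ (1 / 2 + z) := by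
    rw [logDeriv_apply, logDeriv_apply, deriv_comp_const_add]
  rw [logDeriv_apply, hev.deriv_eq, hev.self_of_nhds, ← logDeriv_apply,
    logDeriv_mul (f := fun z ↦ 2 * (Real.pi : ℂ) ^ (-(1 / 2 + z) / 2) *
      Complex.Gamma (5 / 4 + z / 2)) z (mul_ne_zero hpow hΓ0) hζ (hpow'.mul hΓ) hζd,
    logDeriv_mul z hpow hΓ0 hpow' hΓ, logDeriv_pi_cpow, logDeriv_Gamma_comp hre, hζ', archFactor]
  ring

namespace OneSidedBound

variable {η A : ℝ} {z : ℂ}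

theorem xi_ne_zero (h : OneSidedBound η A) (hz : 0 < z.re) : xi z ≠ 0 := by
  have hπ : (Real.pi : ℂ) ≠ 0 := Complex.ofReal_ne_zero.2 Real.pi_ne_zero
  rw [xi_eq_mul_riemannZeta₁ hz]
  exact mul_ne_zero (mul_ne_zero
    (mul_ne_zero two_ne_zero (Complex.cpow_ne_zero_iff.2 (Or.inl hπ)))
    (Complex.Gamma_ne_zero_of_re_pos (by norm_num; linarith)))
    (h.riemannZeta₁_ne_zero (by norm_num; linarith))

theorem re_eq_zero_of_xi_eq_zero (h : OneSidedBound η A) (hz : xi z = 0) : z.re = 0 := by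
  rcases lt_trichotomy z.re 0 with hre | hre | hre
  · exact absurd (by rwa [xi_neg]) (h.xi_ne_zero (z := -z) (by simpa using hre))
  · exact hre
  · exact absurd hz (h.xi_ne_zero hre)

theorem logDeriv_xi (h : OneSidedBound η A) (hz : 0 < z.re) :
    logDeriv xi z = archFactor z - (z - 1 / 2) * laplace scaledR z := by
  have hζ : riemannZeta₁ (1 / 2 + z) ≠ 0 := h.riemannZeta₁_ne_zero (by norm_num; linarith)
  have hmul := h.laplace_scaledR_mul hz
  rw [logDeriv_xi_of_ne_zero hz hζ, logDeriv_apply]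
  generalize 1 / 2 + z = s at hζ hmul ⊢
  field_simp
  linear_combination 2 * hmul

end OneSidedBound

end Xi

section Fejer

/-- The tent function of height `1` supported on `[-T, T]`. -/
noncomputable def tent (T t : ℝ) : ℝ := max 0 (1 - |t| / T)

lemma continuous_tent (T : ℝ) : Continuous (tent T) := by
  unfold tent
  fun_prop

lemma tent_nonneg (T t : ℝ) : 0 ≤ tent T t := le_max_left _ _

lemma tent_neg (T t : ℝ) : tent T (-t) = tent T t := by rw [tent, tent, abs_neg]

/-- The Fourier transform of `tent T`, the Fejér kernel. -/
noncomputable def fejer (T w : ℝ) : ℝ := ∫ t, tent T t * Real.cos (t * w)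

lemma fejer_neg (T w : ℝ) : fejer T (-w) = fejer T w := by
  simp [fejer]

/-- A Lorentzian majorant of the Fejér kernel. -/
noncomputable def lorentz (T w : ℝ) : ℝ := 5 * T / (1 + (T * w) ^ 2)

lemma norm_tent_mul_cexp (T t w : ℝ) :
    ‖(tent T t : ℂ) * Complex.exp (t * w * Complex.I)‖ = tent T t := by
  rw [norm_mul, ← Complex.ofReal_mul, Complex.norm_exp_ofReal_mul_I, Complex.norm_real,
    Real.norm_of_nonneg (tent_nonneg _ _), mul_one]

lemma lorentz_le_div_sq {T w r : ℝ} (hT : 1 ≤ T) (hr : 0 < r) (h : r ≤ w) :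
    lorentz T w ≤ 5 / r ^ 2 := by
  have hsq : r ^ 2 ≤ w ^ 2 := by gcongr
  have : 0 < r ^ 2 := by positivity
  rw [lorentz, div_le_div_iff₀ (by positivity) (by positivity)]
  nlinarith [mul_le_mul_of_nonneg_left hsq (show 0 ≤ T by linarith),
    mul_le_mul_of_nonneg_left hT (show 0 ≤ T * w ^ 2 by positivity)]

variable {T : ℝ}

lemma tent_le_one (hT : 0 < T) (t : ℝ) : tent T t ≤ 1 :=
  max_le zero_le_one (sub_le_self _ (by positivity))

lemma tent_of_le_abs (hT : 0 < T) {t : ℝ} (ht : T ≤ |t|) : tent T t = 0 :=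
  max_eq_left (sub_nonpos.2 ((one_le_div hT).2 ht))

lemma tent_of_abs_le (hT : 0 < T) {t : ℝ} (ht : |t| ≤ T) : tent T t = 1 - |t| / T :=
  max_eq_right (sub_nonneg.2 ((div_le_one hT).2 ht))

lemma abs_tent_sub_le (hT : 0 < T) (s t : ℝ) : |tent T s - tent T t| ≤ |s - t| / T := by
  refine (abs_max_sub_max_le_max _ _ _ _).trans ?_
  rw [sub_self, abs_zero, sub_sub_sub_cancel_left, ← sub_div, abs_div, abs_of_pos hT,
    max_eq_right (by positivity), abs_sub_comm s]
  exact div_le_div_of_nonneg_right (abs_abs_sub_abs_le _ _) hT.le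

lemma hasCompactSupport_tent (hT : 0 < T) : HasCompactSupport (tent T) :=
  HasCompactSupport.intro (isCompact_Icc (a := -T) (b := T)) fun t ht ↦ by
    rw [mem_Icc, ← abs_le, not_le] at ht
    exact tent_of_le_abs hT ht.le

lemma integrable_tent (hT : 0 < T) : Integrable (tent T) :=
  (continuous_tent T).integrable_of_hasCompactSupport (hasCompactSupport_tent hT)

lemma integrable_tent_mul (hT : 0 < T) {φ : ℝ → ℝ} (hφ : Continuous φ) :
    Integrable fun t ↦ tent T t * φ t :=
  ((continuous_tent T).mul hφ).integrable_of_hasCompactSupport (hasCompactSupport_tent hT).mul_right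

lemma integrable_tent_mul_cexp (hT : 0 < T) (w : ℝ) :
    Integrable fun t : ℝ ↦ (tent T t : ℂ) * Complex.exp (t * w * Complex.I) :=
  (integrable_tent hT).mono' (Continuous.aestronglyMeasurable
    ((Complex.continuous_ofReal.comp (continuous_tent T)).mul (by fun_prop)))
    (Eventually.of_forall fun t ↦ (norm_tent_mul_cexp T t w).le)

lemma integral_tent_le (hT : 0 < T) : ∫ t, tent T t ≤ 2 * T := by
  have h : ∫ t, tent T t ≤ ∫ t, (Icc (-T) T).indicator (fun _ ↦ (1 : ℝ)) t := by
    refine integral_mono (integrable_tent hT) (integrable_indicator_Icc_const _ _ _) fun t ↦ ?_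
    by_cases ht : |t| ≤ T
    · rw [indicator_of_mem (mem_Icc.2 (abs_le.1 ht))]
      exact tent_le_one hT t
    · rw [tent_of_le_abs hT (not_le.1 ht).le]
      exact indicator_nonneg (fun _ _ ↦ zero_le_one) _
  rw [integral_indicator measurableSet_Icc, setIntegral_const, Measure.real, Real.volume_Icc,
    ENNReal.toReal_ofReal (by linarith)] at h
  simpa [two_mul] using h

lemma continuous_fejer (hT : 0 < T) : Continuous (fejer T) := by
  refine continuous_of_dominated (bound := tent T)
    (fun w ↦ ((continuous_tent T).mul (by fun_prop)).aestronglyMeasurable) (fun w ↦ ?_)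
    (integrable_tent hT) (Eventually.of_forall fun t ↦ by fun_prop)
  refine Eventually.of_forall fun t ↦ ?_
  rw [norm_mul, Real.norm_of_nonneg (tent_nonneg T t)]
  exact mul_le_of_le_one_right (tent_nonneg T t) (Real.abs_cos_le_one _)

lemma integral_tent_mul_cexp (hT : 0 < T) (w : ℝ) :
    ∫ t : ℝ, (tent T t : ℂ) * Complex.exp (t * w * Complex.I) = fejer T w := by
  have hsin : ∫ t : ℝ, tent T t * Real.sin (t * w) = 0 := by
    have h := integral_neg_eq_self (fun t : ℝ ↦ tent T t * Real.sin (t * w)) volume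
    simp only [tent_neg, neg_mul, Real.sin_neg, mul_neg, integral_neg] at h
    linarith
  have hcosI := integrable_tent_mul hT (φ := fun t ↦ Real.cos (t * w)) (by fun_prop)
  have hsinI := integrable_tent_mul hT (φ := fun t ↦ Real.sin (t * w)) (by fun_prop)
  have hexp (t : ℝ) : (tent T t : ℂ) * Complex.exp (t * w * Complex.I) =
      ((tent T t * Real.cos (t * w) : ℝ) : ℂ) +
        ((tent T t * Real.sin (t * w) : ℝ) : ℂ) * Complex.I := by
    rw [Complex.exp_mul_I]
    push_cast
    ring
  simp_rw [hexp]
  rw [integral_add hcosI.ofReal (hsinI.ofReal.mul_const _), integral_mul_const,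
    integral_complex_ofReal, integral_complex_ofReal, hsin, fejer]
  simp

lemma fejer_eq_two_mul_integral (hT : 0 < T) (w : ℝ) :
    fejer T w = 2 * ∫ x in (0)..T, (1 - x / T) * Real.cos (x * w) := by
  have heven (t : ℝ) :
      tent T t * Real.cos (t * w) = (fun x ↦ tent T x * Real.cos (x * w)) |t| := by
    simp only [tent, abs_abs]
    rcases abs_choice t with h | h <;> simp [h]
  have hsupp : ∫ x in Ioi (0 : ℝ), tent T x * Real.cos (x * w) =
      ∫ x in Ioc 0 T, tent T x * Real.cos (x * w) := by
    refine setIntegral_eq_of_subset_of_forall_sdiff_eq_zero measurableSet_Ioi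
      (fun x hx ↦ hx.1) fun x ⟨(hx0 : 0 < x), hx⟩ ↦ ?_
    have hxT : T < x := not_le.1 fun h ↦ hx ⟨hx0, h⟩
    rw [tent_of_le_abs hT (by rwa [abs_of_pos hx0, le_iff_lt_or_eq, or_iff_left hxT.ne]), zero_mul]
  rw [fejer, integral_congr_ae (Eventually.of_forall heven),
    integral_comp_abs (f := fun x ↦ tent T x * Real.cos (x * w)), hsupp,
    intervalIntegral.integral_of_le hT.le]
  congr 1
  refine setIntegral_congr_fun measurableSet_Ioc fun x hx ↦ ?_
  rw [tent_of_abs_le hT (by rw [abs_of_pos hx.1]; exact hx.2), abs_of_pos hx.1]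

lemma fejer_eq (hT : 0 < T) {w : ℝ} (hw : w ≠ 0) :
    fejer T w = 2 * (1 - Real.cos (T * w)) / (T * w ^ 2) := by
  have hderiv (x : ℝ) (_ : x ∈ uIcc 0 T) :
      HasDerivAt (fun x ↦ (1 - x / T) * (Real.sin (x * w) / w) - Real.cos (x * w) / (T * w ^ 2))
        ((1 - x / T) * Real.cos (x * w)) x := by
    have hlin : HasDerivAt (fun x ↦ 1 - x / T) (-(1 / T)) x :=
      ((hasDerivAt_id x).div_const T).const_sub 1
    have hmul : HasDerivAt (fun x ↦ x * w) w x := by simpa using (hasDerivAt_id x).mul_const w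
    refine ((hlin.mul (hmul.sin.div_const w)).sub (hmul.cos.div_const (T * w ^ 2))).congr_deriv ?_
    field_simp
    ring
  rw [fejer_eq_two_mul_integral hT, intervalIntegral.integral_eq_sub_of_hasDerivAt hderiv
    (Continuous.intervalIntegrable (by fun_prop) _ _)]
  field_simp
  simp
  ring

lemma fejer_nonneg (hT : 0 < T) (w : ℝ) : 0 ≤ fejer T w := by
  by_cases hw : w = 0
  · rw [hw, fejer]
    exact integral_nonneg fun t ↦ by simpa using tent_nonneg T t
  · rw [fejer_eq hT hw]
    have : 0 ≤ 1 - Real.cos (T * w) := sub_nonneg.2 (Real.cos_le_one _)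
    positivity

lemma lorentz_nonneg (hT : 0 < T) (w : ℝ) : 0 ≤ lorentz T w := by
  unfold lorentz
  positivity

lemma lorentz_le (hT : 0 < T) (w : ℝ) : lorentz T w ≤ 5 * T :=
  div_le_self (by positivity) (by nlinarith [sq_nonneg (T * w)])

lemma lorentz_anti (hT : 0 < T) {v w : ℝ} (hv : 0 ≤ v) (hvw : v ≤ w) :
    lorentz T w ≤ lorentz T v := by
  unfold lorentz
  gcongr

lemma fejer_le_lorentz (hT : 0 < T) (w : ℝ) : fejer T w ≤ lorentz T w := by
  by_cases hw : w = 0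
  · have := integral_tent_le hT
    simp only [hw, fejer, lorentz, mul_zero, Real.cos_zero, mul_one]
    norm_num
    linarith
  · have : 0 < w ^ 2 := by positivity
    rw [lorentz, fejer_eq hT hw, div_le_div_iff₀ (by positivity) (by positivity)]
    have hcos := Real.one_sub_sq_div_two_le_cos (x := T * w)
    have hcos' := Real.neg_one_le_cos (T * w)
    have : 2 * (1 - Real.cos (T * w)) * (1 + (T * w) ^ 2) ≤ 5 * (T * w) ^ 2 := by
      nlinarith [sq_nonneg (T * w)]
    linarith

lemma norm_fejer_le_lorentz (hT : 0 < T) (w : ℝ) : ‖(fejer T w : ℂ)‖ ≤ lorentz T w := by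
  rw [Complex.norm_real, Real.norm_of_nonneg (fejer_nonneg hT _)]
  exact fejer_le_lorentz hT w

lemma integrable_lorentz (hT : 0 < T) : Integrable (lorentz T) :=
  (integrable_inv_one_add_sq.comp_mul_left' hT.ne').const_mul (5 * T)

lemma integral_lorentz (hT : 0 < T) : ∫ w, lorentz T w = 5 * Real.pi := by
  have h := Measure.integral_comp_mul_left (fun x : ℝ ↦ (1 + x ^ 2)⁻¹) T
  rw [integral_univ_inv_one_add_sq, abs_of_pos (inv_pos.2 hT), smul_eq_mul] at h
  simp only [lorentz, div_eq_mul_inv]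
  rw [integral_const_mul, h]
  field_simp

end Fejer

section TestFun

variable {T a : ℝ}

lemma neg_add_mul_I_ne_zero (ha : 0 < a) (t : ℝ) : (-a + t * Complex.I : ℂ) ≠ 0 := fun h ↦ by
  have hre := congrArg Complex.re h
  simp only [Complex.add_re, Complex.neg_re, Complex.ofReal_re, Complex.mul_re, Complex.I_re,
    mul_zero, Complex.ofReal_im, Complex.I_im, mul_one, sub_self, add_zero, Complex.zero_re,
    neg_eq_zero] at hre
  exact ha.ne' hre

lemma le_norm_neg_add_mul_I (ha : 0 < a) (t : ℝ) : a ≤ ‖(-a + t * Complex.I : ℂ)‖ := by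
  simpa [abs_of_pos ha] using Complex.abs_re_le_norm (-a + t * Complex.I : ℂ)

/-- The test function against which the real part of `xi' / xi` is integrated on the line of real
part `σ = 1 / 2 - a`. Its denominator cancels the factor `z - 1 / 2` that multiplies the Laplace
transform of `scaledR` in `OneSidedBound.logDeriv_xi`. -/
noncomputable def testFun (a T v t : ℝ) : ℂ :=
  (tent T t : ℂ) * Complex.exp (t * v * Complex.I) / (-a + t * Complex.I)

lemma norm_testFun (a T v t : ℝ) : ‖testFun a T v t‖ = tent T t / ‖(-a + t * Complex.I : ℂ)‖ := by
  rw [testFun, norm_div, norm_tent_mul_cexp]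

lemma norm_testFun_le (ha : 0 < a) (T v t : ℝ) : ‖testFun a T v t‖ ≤ tent T t / a := by
  rw [norm_testFun]
  exact div_le_div_of_nonneg_left (tent_nonneg _ _) ha (le_norm_neg_add_mul_I ha t)

lemma continuous_testFun (ha : 0 < a) (T v : ℝ) : Continuous (testFun a T v) := by
  have := continuous_tent T
  exact Continuous.div (by fun_prop) (by fun_prop) (neg_add_mul_I_ne_zero ha)

lemma testFun_of_le_abs (hT : 0 < T) {t : ℝ} (ht : T ≤ |t|) (a v : ℝ) : testFun a T v t = 0 := by
  simp [testFun, tent_of_le_abs hT ht]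

lemma hasCompactSupport_testFun (hT : 0 < T) (a v : ℝ) : HasCompactSupport (testFun a T v) :=
  (hasCompactSupport_tent hT).mono fun t ht ht0 ↦ ht (by simp [testFun, ht0])

lemma integrable_testFun_mul (ha : 0 < a) (hT : 0 < T) (v : ℝ) {φ : ℝ → ℂ} (hφ : Continuous φ) :
    Integrable fun t ↦ testFun a T v t * φ t :=
  ((continuous_testFun ha T v).mul hφ).integrable_of_hasCompactSupport
    (hasCompactSupport_testFun hT a v).mul_right

lemma integrable_testFun (ha : 0 < a) (hT : 0 < T) (v : ℝ) : Integrable (testFun a T v) :=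
  (continuous_testFun ha T v).integrable_of_hasCompactSupport (hasCompactSupport_testFun hT a v)

/-- The integral of the test function, that is, the Fourier transform of
`t ↦ tent T t / (-a + t * I)`. -/
noncomputable def testFunIntegral (a T w : ℝ) : ℂ := ∫ t, testFun a T w t

lemma testFun_eq_neg_integral (ha : 0 < a) (T w t : ℝ) :
    testFun a T w t = -∫ r in Ioi (0 : ℝ), (tent T t : ℂ) * Complex.exp (t * w * Complex.I) *
      Complex.exp ((-a + t * Complex.I) * r) := by
  rw [integral_const_mul, integral_exp_mul_complex_Ioi (by simpa using ha), testFun]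
  simp [div_eq_mul_inv]

lemma testFunIntegral_eq (ha : 0 < a) (hT : 0 < T) (w : ℝ) :
    testFunIntegral a T w =
      -∫ r in Ioi (0 : ℝ), ((Real.exp (-a * r) * fejer T (w + r) : ℝ) : ℂ) := by
  have hinner (r : ℝ) : ∫ t : ℝ, (tent T t : ℂ) * Complex.exp (t * w * Complex.I) *
        Complex.exp ((-a + t * Complex.I) * r) =
      ((Real.exp (-a * r) * fejer T (w + r) : ℝ) : ℂ) := by
    rw [Complex.ofReal_mul, ← integral_tent_mul_cexp hT, ← integral_const_mul]
    refine integral_congr_ae (Eventually.of_forall fun t ↦ ?_)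
    simp only
    rw [mul_assoc, ← Complex.exp_add, Complex.ofReal_exp, mul_left_comm, ← Complex.exp_add]
    congr 2
    push_cast
    ring
  simp only [testFunIntegral, testFun_eq_neg_integral ha]
  rw [integral_neg, integral_integral_swap]
  · simp only [hinner]
  refine ((integrable_tent hT).mul_prod (exp_neg_integrableOn_Ioi 0 ha)).mono' ?_ ?_
  · have := continuous_tent T
    simp only [Function.uncurry_def]
    exact Continuous.aestronglyMeasurable (by fun_prop)
  · refine Eventually.of_forall fun p ↦ le_of_eq ?_
    rw [Function.uncurry_def, norm_mul, norm_tent_mul_cexp, Complex.norm_exp]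
    simp

lemma norm_testFunIntegral_le_integral (ha : 0 < a) (hT : 0 < T) (w : ℝ) :
    ‖testFunIntegral a T w‖ ≤ ∫ r in Ioi (0 : ℝ), Real.exp (-a * r) * fejer T (w + r) := by
  rw [testFunIntegral_eq ha hT, norm_neg]
  refine (norm_integral_le_integral_norm _).trans_eq (integral_congr_ae
    (Eventually.of_forall fun r ↦ ?_))
  exact Complex.norm_of_nonneg (mul_nonneg (Real.exp_pos _).le (fejer_nonneg hT _))

lemma norm_testFunIntegral_le (ha : 0 < a) (hT : 0 < T) (w : ℝ) :
    ‖testFunIntegral a T w‖ ≤ 5 * Real.pi := by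
  have hint : Integrable fun r ↦ lorentz T (w + r) := (integrable_lorentz hT).comp_add_left w
  calc ‖testFunIntegral a T w‖
      ≤ ∫ r in Ioi (0 : ℝ), Real.exp (-a * r) * fejer T (w + r) :=
        norm_testFunIntegral_le_integral ha hT w
    _ ≤ ∫ r in Ioi (0 : ℝ), lorentz T (w + r) := by
        refine integral_mono_of_nonneg (Eventually.of_forall fun r ↦
          mul_nonneg (Real.exp_pos _).le (fejer_nonneg hT _)) hint.integrableOn ?_
        refine (ae_restrict_iff' measurableSet_Ioi).2 (Eventually.of_forall fun r (hr : 0 < r) ↦ ?_)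
        have hexp : Real.exp (-a * r) ≤ 1 := Real.exp_le_one_iff.2 (by nlinarith)
        exact (mul_le_of_le_one_left (fejer_nonneg hT _) hexp).trans (fejer_le_lorentz hT _)
    _ ≤ ∫ r, lorentz T (w + r) :=
        setIntegral_le_integral hint (Eventually.of_forall fun _ ↦ lorentz_nonneg hT _)
    _ = 5 * Real.pi := by rw [integral_add_left_eq_self (lorentz T) w, integral_lorentz hT]

lemma norm_testFunIntegral_le_lorentz (ha : 0 < a) (hT : 0 < T) {w : ℝ} (hw : 0 ≤ w) :
    ‖testFunIntegral a T w‖ ≤ 1 / a * lorentz T w := by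
  have hexp : ∫ r in Ioi (0 : ℝ), Real.exp (-a * r) = 1 / a := by
    rw [integral_exp_mul_Ioi (by linarith)]
    simp
  refine (norm_testFunIntegral_le_integral ha hT w).trans ?_
  rw [← hexp, ← integral_mul_const]
  refine integral_mono_of_nonneg (Eventually.of_forall fun r ↦
    mul_nonneg (Real.exp_pos _).le (fejer_nonneg hT _))
    (Integrable.mul_const (exp_neg_integrableOn_Ioi 0 ha) _) ?_
  refine (ae_restrict_iff' measurableSet_Ioi).2 (Eventually.of_forall fun r (hr : 0 < r) ↦ ?_)
  exact mul_le_mul_of_nonneg_left ((fejer_le_lorentz hT _).trans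
    (lorentz_anti hT hw (by linarith))) (Real.exp_pos _).le

lemma continuous_testFunIntegral (ha : 0 < a) (hT : 0 < T) : Continuous (testFunIntegral a T) := by
  refine continuous_of_dominated (fun w ↦ (continuous_testFun ha T w).aestronglyMeasurable)
    (fun w ↦ Eventually.of_forall (norm_testFun_le ha T w))
    ((integrable_tent hT).div_const a) (Eventually.of_forall fun t ↦ ?_)
  unfold testFun
  fun_prop

end TestFun

section PrimeKernel

variable {T a σ : ℝ}

/-- The kernel by which the test function turns `scaledR` into the prime side of the explicit
formula, see `integral_testFun_mul_re_laplace`. -/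
noncomputable def primeKernel (a T v u : ℝ) : ℂ :=
  (fejer T (u - v) - fejer T (u + v) - 2 * a * testFunIntegral a T (u + v)) / 2

lemma testFun_mul_re_cexp (ha : 0 < a) (T v u t : ℝ) :
    testFun a T v t *
        (((-a + t * Complex.I : ℂ) * Complex.exp (-(t * Complex.I) * u)).re : ℂ) =
      ((tent T t : ℂ) * Complex.exp (t * ((-(u - v) : ℝ) : ℂ) * Complex.I) -
        (tent T t : ℂ) * Complex.exp (t * ((u + v : ℝ) : ℂ) * Complex.I) -
        2 * a * testFun a T (u + v) t) / 2 := by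
  have hre : (((-a + t * Complex.I : ℂ) * Complex.exp (-(t * Complex.I) * u)).re : ℂ) =
      ((-a + t * Complex.I : ℂ) * Complex.exp (-(t * Complex.I) * u) -
        ((-a + t * Complex.I) + 2 * a : ℂ) * Complex.exp (t * Complex.I * u)) / 2 := by
    rw [Complex.re_eq_add_conj]
    simp only [map_mul, map_add, map_neg, Complex.conj_ofReal, Complex.conj_I, ← Complex.exp_conj]
    ring_nf
  have hsub : Complex.exp (t * ((-(u - v) : ℝ) : ℂ) * Complex.I) =
      Complex.exp (t * v * Complex.I) * Complex.exp (-(t * Complex.I) * u) := by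
    rw [← Complex.exp_add]
    congr 1
    push_cast
    ring
  have hadd : Complex.exp (t * ((u + v : ℝ) : ℂ) * Complex.I) =
      Complex.exp (t * v * Complex.I) * Complex.exp (t * Complex.I * u) := by
    rw [← Complex.exp_add]
    congr 1
    push_cast
    ring
  have hw := neg_add_mul_I_ne_zero ha t
  rw [hre, testFun, testFun, hsub, hadd]
  generalize (-a + t * Complex.I : ℂ) = w at *
  field_simp
  ring

lemma integral_testFun_mul_re_cexp (ha : 0 < a) (hT : 0 < T) (v u : ℝ) :
    ∫ t : ℝ, testFun a T v t *
        (((-a + t * Complex.I : ℂ) * Complex.exp (-(t * Complex.I) * u)).re : ℂ) =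
      primeKernel a T v u := by
  have htent (w : ℝ) := integrable_tent_mul_cexp hT w
  have hdiff : Integrable fun t : ℝ ↦
      (tent T t : ℂ) * Complex.exp (t * ((-(u - v) : ℝ) : ℂ) * Complex.I) -
        (tent T t : ℂ) * Complex.exp (t * ((u + v : ℝ) : ℂ) * Complex.I) :=
    (htent _).sub (htent _)
  simp_rw [testFun_mul_re_cexp ha]
  rw [integral_div, integral_sub hdiff ((integrable_testFun ha hT _).const_mul _),
    integral_sub (htent _) (htent _), integral_tent_mul_cexp hT, integral_tent_mul_cexp hT,
    integral_const_mul, fejer_neg, primeKernel, testFunIntegral]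

lemma re_mul_laplace {g : ℝ → ℝ} (hm : Measurable g) {z w : ℂ} (hg : LaplaceIntegrable g z.re) :
    (w * laplace g z).re = ∫ u in Ioi (0 : ℝ), g u * Real.exp (-z.re * u) *
      (w * Complex.exp (-(z.im * Complex.I) * u)).re := by
  have hcomm := Complex.reCLM.integral_comp_comm ((hg.integrableOn hm).const_mul w)
  simp only [Complex.reCLM_apply] at hcomm
  rw [laplace, ← integral_const_mul, ← hcomm]
  refine integral_congr_ae (Eventually.of_forall fun u ↦ ?_)
  have hexp : Complex.exp (-z * u) =
      (Real.exp (-z.re * u) : ℂ) * Complex.exp (-(z.im * Complex.I) * u) := by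
    rw [Complex.ofReal_exp, ← Complex.exp_add]
    congr 1
    conv_lhs => rw [← Complex.re_add_im z]
    push_cast
    ring
  simp only
  rw [← Complex.re_ofReal_mul, hexp]
  congr 1
  push_cast
  ring

lemma integrable_testFun_mul_re_cexp (ha : 0 < a) (hT : 0 < T) {g : ℝ → ℝ} (hm : Measurable g)
    (hg : LaplaceIntegrable g σ) (v : ℝ) :
    Integrable (Function.uncurry fun t u : ℝ ↦ testFun a T v t * ((g u * Real.exp (-σ * u) *
      ((-a + t * Complex.I : ℂ) * Complex.exp (-(t * Complex.I) * u)).re : ℝ) : ℂ))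
      (volume.prod (volume.restrict (Ioi 0))) := by
  refine ((integrable_tent hT).mul_prod hg.norm).mono' ?_ (Eventually.of_forall fun p ↦ ?_)
  · have htest : Measurable fun p : ℝ × ℝ ↦ testFun a T v p.1 :=
      (continuous_testFun ha T v).measurable.comp measurable_fst
    have _ : Measurable fun p : ℝ × ℝ ↦ g p.2 := hm.comp measurable_snd
    refine Measurable.aestronglyMeasurable (htest.mul ?_)
    fun_prop
  · have hpos := ha.trans_le (le_norm_neg_add_mul_I ha p.1)
    have hre : ‖((-a + p.1 * Complex.I : ℂ) * Complex.exp (-(p.1 * Complex.I) * p.2)).re‖ ≤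
        ‖(-a + p.1 * Complex.I : ℂ)‖ := by
      refine (Complex.abs_re_le_norm _).trans ?_
      rw [norm_mul, norm_cexp_neg_mul]
      simp
    have := tent_nonneg T p.1
    simp only [Function.uncurry_def]
    rw [norm_mul, norm_testFun, Complex.norm_real, norm_mul]
    calc _ ≤ tent T p.1 / ‖(-a + p.1 * Complex.I : ℂ)‖ *
          (‖g p.2 * Real.exp (-σ * p.2)‖ * ‖(-a + p.1 * Complex.I : ℂ)‖) := by gcongr
      _ = tent T p.1 * ‖g p.2 * Real.exp (-σ * p.2)‖ := by field_simp

lemma integral_testFun_mul_re_laplace (ha : 0 < a) (hT : 0 < T) {g : ℝ → ℝ} (hm : Measurable g)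
    (hg : LaplaceIntegrable g σ) (v : ℝ) :
    ∫ t : ℝ, testFun a T v t *
        (((-a + t * Complex.I : ℂ) * laplace g (σ + t * Complex.I)).re : ℂ) =
      ∫ u in Ioi (0 : ℝ), ((g u * Real.exp (-σ * u) : ℝ) : ℂ) * primeKernel a T v u := by
  have hre (t : ℝ) : ((-a + t * Complex.I : ℂ) * laplace g (σ + t * Complex.I)).re =
      ∫ u in Ioi (0 : ℝ), g u * Real.exp (-σ * u) *
        ((-a + t * Complex.I : ℂ) * Complex.exp (-(t * Complex.I) * u)).re := by
    rw [re_mul_laplace hm (by simpa using hg), show (σ + t * Complex.I : ℂ).re = σ by simp,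
      show (σ + t * Complex.I : ℂ).im = t by simp]
  simp_rw [hre, ← integral_complex_ofReal, ← integral_const_mul]
  rw [integral_integral_swap (integrable_testFun_mul_re_cexp ha hT hm hg v)]
  refine integral_congr_ae (Eventually.of_forall fun u ↦ ?_)
  simp only
  rw [← integral_testFun_mul_re_cexp ha hT, ← integral_const_mul]
  refine integral_congr_ae (Eventually.of_forall fun t ↦ ?_)
  push_cast
  ring

lemma continuous_primeKernel (ha : 0 < a) (hT : 0 < T) (v : ℝ) :
    Continuous (primeKernel a T v) := by
  have := continuous_testFunIntegral ha hT
  have := continuous_fejer hT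
  unfold primeKernel
  fun_prop

lemma norm_primeKernel_le (ha : 0 < a) (ha' : a ≤ 1 / 2) (hT : 0 < T) (v u : ℝ) :
    ‖primeKernel a T v u‖ ≤
      (lorentz T (u - v) + lorentz T (u + v) + ‖testFunIntegral a T (u + v)‖) / 2 := by
  have hlast : ‖2 * (a : ℂ) * testFunIntegral a T (u + v)‖ ≤ ‖testFunIntegral a T (u + v)‖ := by
    rw [norm_mul, norm_mul, Complex.norm_real, Complex.norm_ofNat, Real.norm_of_nonneg ha.le]
    exact mul_le_of_le_one_left (norm_nonneg _) (by linarith)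
  rw [primeKernel, norm_div, Complex.norm_ofNat]
  gcongr
  exact norm_sub_le_of_le (norm_sub_le_of_le (norm_fejer_le_lorentz hT _)
    (norm_fejer_le_lorentz hT _)) hlast

lemma integrableOn_mul_primeKernel (ha : 0 < a) (ha' : a ≤ 1 / 2) (hT : 0 < T) {g : ℝ → ℝ}
    (hg : LaplaceIntegrable g σ) (v : ℝ) :
    IntegrableOn (fun u ↦ ((g u * Real.exp (-σ * u) : ℝ) : ℂ) * primeKernel a T v u) (Ioi 0) := by
  refine Integrable.mul_bdd (c := (5 * T + 5 * T + 5 * Real.pi) / 2) hg.ofReal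
    (continuous_primeKernel ha hT v).aestronglyMeasurable (Eventually.of_forall fun u ↦ ?_)
  refine (norm_primeKernel_le ha ha' hT v u).trans ?_
  linarith [lorentz_le hT (u - v), lorentz_le hT (u + v), norm_testFunIntegral_le ha hT (u + v)]

end PrimeKernel

section SqrtLorentz

variable {T : ℝ}

lemma integrable_sqrt_abs_mul_inv : Integrable fun x : ℝ ↦ √|x| * (1 + x ^ 2)⁻¹ := by
  have h := integrable_rpow_neg_one_add_norm_sq (E := ℝ) (μ := volume) (r := 3 / 2) (by norm_num)
  refine h.mono' (Continuous.aestronglyMeasurable (Continuous.mul (by fun_prop)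
    (Continuous.inv₀ (by fun_prop) fun x ↦ by positivity))) (Eventually.of_forall fun x ↦ ?_)
  rw [Real.norm_of_nonneg (by positivity), Real.norm_eq_abs, sq_abs]
  have hsqrt : √|x| ≤ (1 + x ^ 2) ^ (1 / 4 : ℝ) :=
    calc √|x| ≤ √√(1 + x ^ 2) := Real.sqrt_le_sqrt (Real.abs_le_sqrt (by linarith))
      _ = (1 + x ^ 2) ^ (1 / 4 : ℝ) := by
        rw [Real.sqrt_eq_rpow, Real.sqrt_eq_rpow, ← Real.rpow_mul (by positivity)]
        norm_num
  calc √|x| * (1 + x ^ 2)⁻¹ ≤ (1 + x ^ 2) ^ (1 / 4 : ℝ) * (1 + x ^ 2)⁻¹ := by gcongr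
    _ = (1 + x ^ 2) ^ (-(3 / 2) / 2 : ℝ) := by
      rw [← Real.rpow_neg_one (1 + x ^ 2), ← Real.rpow_add (by positivity)]
      norm_num

lemma sqrt_mul_lorentz_le (hT : 1 ≤ T) (w : ℝ) :
    √|w| * lorentz T w ≤ 5 * T * (√|T * w| * (1 + (T * w) ^ 2)⁻¹) := by
  have hle : |w| ≤ |T * w| := by
    rw [abs_mul]
    exact le_mul_of_one_le_left (abs_nonneg w) (hT.trans (le_abs_self T))
  calc √|w| * lorentz T w ≤ √|T * w| * lorentz T w :=
        mul_le_mul_of_nonneg_right (Real.sqrt_le_sqrt hle) (lorentz_nonneg (by linarith) w)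
    _ = 5 * T * (√|T * w| * (1 + (T * w) ^ 2)⁻¹) := by
      rw [lorentz]
      ring

lemma integrable_sqrt_mul_lorentz (hT : 1 ≤ T) : Integrable fun w ↦ √|w| * lorentz T w := by
  have hT0 : 0 < T := by linarith
  refine ((integrable_sqrt_abs_mul_inv.comp_mul_left' hT0.ne').const_mul (5 * T)).mono'
    ((Continuous.aestronglyMeasurable (by fun_prop)).mul
      (integrable_lorentz hT0).aestronglyMeasurable) (Eventually.of_forall fun w ↦ ?_)
  rw [Real.norm_of_nonneg (mul_nonneg (Real.sqrt_nonneg _) (lorentz_nonneg hT0 w))]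
  exact sqrt_mul_lorentz_le hT w

lemma integral_sqrt_mul_lorentz_le (hT : 1 ≤ T) :
    ∫ w, √|w| * lorentz T w ≤ 5 * ∫ x : ℝ, √|x| * (1 + x ^ 2)⁻¹ := by
  have hT0 : 0 < T := by linarith
  refine (integral_mono (integrable_sqrt_mul_lorentz hT)
    ((integrable_sqrt_abs_mul_inv.comp_mul_left' hT0.ne').const_mul (5 * T))
    (sqrt_mul_lorentz_le hT)).trans_eq ?_
  rw [integral_const_mul, Measure.integral_comp_mul_left (fun x : ℝ ↦ √|x| * (1 + x ^ 2)⁻¹) T,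
    abs_of_pos (inv_pos.2 hT0), smul_eq_mul]
  field_simp

end SqrtLorentz

section PrimeSide

variable {T η A a σ v u : ℝ}

lemma setIntegral_lorentz_sub_le (hT : 0 < T) (v : ℝ) :
    ∫ u in Ioi (0 : ℝ), lorentz T (u - v) ≤ 5 * Real.pi := by
  rw [← integral_lorentz hT, ← integral_sub_right_eq_self (lorentz T) v]
  exact setIntegral_le_integral ((integrable_lorentz hT).comp_sub_right v)
    (Eventually.of_forall fun _ ↦ lorentz_nonneg hT _)

lemma integrable_sqrt_mul_lorentz_sub (hT : 1 ≤ T) (v : ℝ) :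
    Integrable fun u ↦ √|u - v| / 2 * lorentz T (u - v) := by
  simpa only [div_mul_eq_mul_div] using
    ((integrable_sqrt_mul_lorentz hT).comp_sub_right v).div_const 2

lemma setIntegral_sqrt_mul_lorentz_sub_le (hT : 1 ≤ T) (v : ℝ) :
    ∫ u in Ioi (0 : ℝ), √|u - v| / 2 * lorentz T (u - v) ≤
      5 * (∫ x : ℝ, √|x| * (1 + x ^ 2)⁻¹) / 2 := by
  refine (setIntegral_le_integral (integrable_sqrt_mul_lorentz_sub hT v) (Eventually.of_forall
    fun _ ↦ mul_nonneg (by positivity) (lorentz_nonneg (by linarith) _))).trans ?_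
  simp only [div_mul_eq_mul_div]
  rw [integral_div, integral_sub_right_eq_self (fun w ↦ √|w| * lorentz T w) v]
  exact div_le_div_of_nonneg_right (integral_sqrt_mul_lorentz_le hT) two_pos.le

lemma norm_testFunIntegral_le_four_mul_lorentz (ha : 1 / 4 ≤ a) (hT : 0 < T) {w : ℝ}
    (hw : 0 ≤ w) : ‖testFunIntegral a T w‖ ≤ 4 * lorentz T w := by
  have ha0 : 0 < a := by linarith
  have ha4 : 1 / a ≤ 4 := by
    rw [div_le_iff₀ ha0]
    linarith
  exact (norm_testFunIntegral_le_lorentz ha0 hT hw).trans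
    (mul_le_mul_of_nonneg_right ha4 (lorentz_nonneg hT w))

lemma norm_primeKernel_le_lorentz_add (ha : 1 / 4 ≤ a) (ha' : a ≤ 1 / 2) (hT : 1 ≤ T)
    (hu : 0 < u) (hu2 : u ≤ 2) :
    ‖primeKernel a T v u‖ ≤ lorentz T (u - v) + lorentz T (u + v) + 135 / (1 + u) ^ 2 := by
  have hT0 : 0 < T := by linarith
  have ha0 : 0 < a := by linarith
  have hfar : 15 ≤ 135 / (1 + u) ^ 2 := by
    rw [le_div_iff₀ (by positivity)]
    nlinarith
  linarith [norm_primeKernel_le ha0 ha' hT0 v u, norm_testFunIntegral_le ha0 hT0 (u + v),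
    Real.pi_lt_d2, lorentz_nonneg hT0 (u - v), lorentz_nonneg hT0 (u + v)]

lemma norm_primeKernel_le_div_sq (ha : 1 / 4 ≤ a) (ha' : a ≤ 1 / 2) (hT : 1 ≤ T)
    (hv : |v| ≤ 1) (hu : 2 < u) : ‖primeKernel a T v u‖ ≤ 135 / (1 + u) ^ 2 := by
  have hT0 : 0 < T := by linarith
  obtain ⟨hv1, hv2⟩ := abs_le.1 hv
  have hr : 0 < (1 + u) / 3 := by linarith
  have hsub := lorentz_le_div_sq hT hr (show (1 + u) / 3 ≤ u - v by linarith)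
  have hadd := lorentz_le_div_sq hT hr (show (1 + u) / 3 ≤ u + v by linarith)
  have htest := norm_testFunIntegral_le_four_mul_lorentz ha hT0 (show 0 ≤ u + v by linarith)
  have hscale : 135 / (1 + u) ^ 2 = 3 * (5 / ((1 + u) / 3) ^ 2) := by
    field_simp
    norm_num
  linarith [norm_primeKernel_le (by linarith) ha' hT0 v u]

lemma abs_re_primeKernel_sub_le (ha : 1 / 4 ≤ a) (ha' : a ≤ 1 / 2) (hT : 1 ≤ T) (hv : 1 ≤ v)
    (hu : 0 < u) : |(primeKernel a T v u).re - fejer T (u - v) / 2| ≤ 13 / (1 + u) ^ 2 := by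
  have hT0 : 0 < T := by linarith
  have hre : (primeKernel a T v u).re - fejer T (u - v) / 2 =
      (-fejer T (u + v) - 2 * a * (testFunIntegral a T (u + v)).re) / 2 := by
    have hsplit : primeKernel a T v u = ((1 / 2 : ℝ) : ℂ) * (fejer T (u - v) - fejer T (u + v) -
        ((2 * a : ℝ) : ℂ) * testFunIntegral a T (u + v)) := by
      rw [primeKernel]
      push_cast
      ring
    rw [hsplit, Complex.re_ofReal_mul, Complex.sub_re, Complex.sub_re, Complex.re_ofReal_mul,
      Complex.ofReal_re, Complex.ofReal_re]
    ring
  have htest := (Complex.abs_re_le_norm _).trans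
    (norm_testFunIntegral_le_four_mul_lorentz ha hT0 (show 0 ≤ u + v by linarith))
  have hlor := lorentz_le_div_sq hT (show 0 < 1 + u by linarith) (show 1 + u ≤ u + v by linarith)
  have hmul : |2 * a * (testFunIntegral a T (u + v)).re| ≤ |(testFunIntegral a T (u + v)).re| := by
    rw [abs_mul, abs_of_nonneg (by linarith)]
    exact mul_le_of_le_one_left (abs_nonneg _) (by linarith)
  have hscale : 13 / (1 + u) ^ 2 = 13 / 5 * (5 / (1 + u) ^ 2) := by ring
  have hf0 := fejer_nonneg hT0 (u + v)
  have hf := fejer_le_lorentz hT0 (u + v)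
  have hbound := abs_le.1 (hmul.trans htest)
  rw [hre, abs_le]
  constructor <;> linarith

/-- The side of the primes of the smoothed explicit formula. -/
noncomputable def primeSide (σ T v : ℝ) : ℂ :=
  ∫ u in Ioi (0 : ℝ), ((scaledR u * Real.exp (-σ * u) : ℝ) : ℂ) * primeKernel (1 / 2 - σ) T v u

lemma exists_abs_scaledR_le (R : ℝ) : ∃ C, 0 ≤ C ∧ ∀ u, 0 < u → u ≤ R → |scaledR u| ≤ C := by
  refine ⟨Real.exp (R / 2) * (1 + R) ^ 2, by positivity, fun u hu huR ↦ ?_⟩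
  refine (abs_scaledR_le hu.le).trans ?_
  gcongr

lemma norm_mul_primeKernel_le {C f : ℝ} (hC : u ≤ 2 → |f| ≤ C) (hC0 : 0 ≤ C) (ha : 1 / 4 ≤ a)
    (ha' : a ≤ 1 / 2) (hT : 1 ≤ T) (hv : |v| ≤ 1) (hu : 0 < u) :
    |f| * ‖primeKernel a T v u‖ ≤
      C * lorentz T (u - v) + C * lorentz T (u + v) + 135 * (|f| / (1 + u) ^ 2) := by
  have hT0 : 0 < T := by linarith
  have hsub := lorentz_nonneg hT0 (u - v)
  have hadd := lorentz_nonneg hT0 (u + v)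
  rcases le_or_gt u 2 with hu2 | hu2
  · calc |f| * ‖primeKernel a T v u‖
        ≤ |f| * (lorentz T (u - v) + lorentz T (u + v) + 135 / (1 + u) ^ 2) := by
          gcongr
          exact norm_primeKernel_le_lorentz_add ha ha' hT hu hu2
      _ = |f| * lorentz T (u - v) + |f| * lorentz T (u + v) + 135 * (|f| / (1 + u) ^ 2) := by ring
      _ ≤ _ := by gcongr <;> exact hC hu2
  · calc |f| * ‖primeKernel a T v u‖ ≤ |f| * (135 / (1 + u) ^ 2) := by
          gcongr
          exact norm_primeKernel_le_div_sq ha ha' hT hv hu2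
      _ = 0 + 135 * (|f| / (1 + u) ^ 2) := by ring
      _ ≤ _ := by gcongr; positivity

lemma exists_norm_primeSide_le (h : OneSidedBound η A) :
    ∃ C, 0 ≤ C ∧ ∀ T, 1 ≤ T → ∀ σ, 0 < σ → σ ≤ 1 / 4 → ∀ v, |v| ≤ 1 → ‖primeSide σ T v‖ ≤ C := by
  obtain ⟨C, hC0, hC⟩ := exists_abs_scaledR_le 2
  have hI := h.integrableOn_abs_scaledR_div_one_add_sq
  set I := ∫ u in Ioi (0 : ℝ), |scaledR u| / (1 + u) ^ 2
  have _ : 0 ≤ I := integral_nonneg fun u ↦ by positivity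
  refine ⟨C * (5 * Real.pi) + C * (5 * Real.pi) + 135 * I, by positivity,
    fun T hT σ hσ hσ' v hv ↦ ?_⟩
  have hT0 : 0 < T := by linarith
  have hlor (w : ℝ) : IntegrableOn (fun u ↦ C * lorentz T (u - w)) (Ioi 0) :=
    (((integrable_lorentz hT0).comp_sub_right w).const_mul C).integrableOn
  have hadd := hlor (-v)
  have hle := setIntegral_lorentz_sub_le hT0 (-v)
  simp only [sub_neg_eq_add] at hadd hle
  have hsum : IntegrableOn (fun u ↦ C * lorentz T (u - v) + C * lorentz T (u + v)) (Ioi 0) :=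
    (hlor v).add hadd
  have hdom : ‖primeSide σ T v‖ ≤ ∫ u in Ioi (0 : ℝ), (C * lorentz T (u - v) +
      C * lorentz T (u + v) + 135 * (|scaledR u| / (1 + u) ^ 2)) := by
    refine (norm_integral_le_integral_norm _).trans (integral_mono_of_nonneg
      (Eventually.of_forall fun _ ↦ norm_nonneg _) (hsum.add (hI.const_mul 135))
      ((ae_restrict_iff' measurableSet_Ioi).2 (Eventually.of_forall fun u (hu : 0 < u) ↦ ?_)))
    have hexp : Real.exp (-σ * u) ≤ 1 := Real.exp_le_one_iff.2 (by nlinarith)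
    refine le_trans ?_ (norm_mul_primeKernel_le (a := 1 / 2 - σ) (hC u hu) hC0 (by linarith)
      (by linarith) hT hv hu)
    simp only
    rw [norm_mul, Complex.norm_real, norm_mul, Real.norm_eq_abs,
      Real.norm_of_nonneg (Real.exp_pos _).le]
    gcongr
    exact mul_le_of_le_one_right (abs_nonneg _) hexp
  refine hdom.trans ?_
  rw [integral_add hsum (hI.const_mul 135), integral_add (hlor v) hadd,
    integral_const_mul C, integral_const_mul C, integral_const_mul 135]
  gcongr
  exact setIntegral_lorentz_sub_le hT0 v

lemma mul_re_primeKernel_le {L s f e : ℝ} (hη : |η| = 1) (ha : 1 / 4 ≤ a) (ha' : a ≤ 1 / 2)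
    (hT : 1 ≤ T) (hv : 1 ≤ v) (hu : 0 < u) (he0 : 0 ≤ e) (he1 : e ≤ 1) (hLs : 0 ≤ L + s)
    (hf : η * f ≤ L + s) :
    η * (f * e * (primeKernel a T v u).re) ≤
      L / 2 * lorentz T (u - v) + s / 2 * lorentz T (u - v) + 13 * (|f| / (1 + u) ^ 2) := by
  have hT0 : 0 < T := by linarith
  have hf0 := fejer_nonneg hT0 (u - v)
  set d := (primeKernel a T v u).re - fejer T (u - v) / 2 with hd
  have hmain : η * f * (e * fejer T (u - v)) ≤ (L + s) * lorentz T (u - v) :=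
    mul_le_mul hf ((mul_le_of_le_one_left hf0 he1).trans (fejer_le_lorentz hT0 _))
      (by positivity) hLs
  have hrem : η * f * e * d ≤ |f| * (13 / (1 + u) ^ 2) := by
    refine (le_abs_self _).trans ?_
    rw [abs_mul, abs_mul, abs_mul, hη, one_mul, abs_of_nonneg he0]
    exact mul_le_mul (mul_le_of_le_one_right (abs_nonneg _) he1)
      (abs_re_primeKernel_sub_le ha ha' hT hv hu) (abs_nonneg _) (abs_nonneg _)
  calc η * (f * e * (primeKernel a T v u).re)
      = η * f * (e * fejer T (u - v)) / 2 + η * f * e * d := by rw [hd]; ring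
    _ ≤ (L + s) * lorentz T (u - v) / 2 + |f| * (13 / (1 + u) ^ 2) := by gcongr
    _ = _ := by ring

lemma exists_re_primeSide_le (h : OneSidedBound η A) :
    ∃ C, 0 ≤ C ∧ ∀ T, 1 ≤ T → ∀ σ, 0 < σ → σ ≤ 1 / 4 → ∀ v, 1 ≤ v → ∀ L, 0 ≤ L →
      (∀ u, 0 < u → η * scaledR u ≤ L + √|u - v|) → η * (primeSide σ T v).re ≤ 8 * L + C := by
  have hI := h.integrableOn_abs_scaledR_div_one_add_sq
  set I := ∫ u in Ioi (0 : ℝ), |scaledR u| / (1 + u) ^ 2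
  set J := ∫ x : ℝ, √|x| * (1 + x ^ 2)⁻¹
  have _ : 0 ≤ I := integral_nonneg fun u ↦ by positivity
  have _ : 0 ≤ J := integral_nonneg fun u ↦ by positivity
  refine ⟨5 * J / 2 + 13 * I, by positivity, fun T hT σ hσ hσ' v hv L hL hfL ↦ ?_⟩
  have hT0 : 0 < T := by linarith
  have hint := integrableOn_mul_primeKernel (a := 1 / 2 - σ) (by linarith) (by linarith) hT0
    (h.laplaceIntegrable_scaledR hσ) v
  have hre := Complex.reCLM.integral_comp_comm hint
  simp only [Complex.reCLM_apply] at hre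
  have hlor : Integrable fun u ↦ L / 2 * lorentz T (u - v) :=
    ((integrable_lorentz hT0).comp_sub_right v).const_mul _
  have hsqrt := integrable_sqrt_mul_lorentz_sub hT v
  have hsum : IntegrableOn (fun u ↦ L / 2 * lorentz T (u - v) +
      √|u - v| / 2 * lorentz T (u - v)) (Ioi 0) := (hlor.add hsqrt).integrableOn
  calc η * (primeSide σ T v).re
      = ∫ u in Ioi (0 : ℝ), η * (((scaledR u * Real.exp (-σ * u) : ℝ) : ℂ) *
          primeKernel (1 / 2 - σ) T v u).re := by rw [primeSide, ← hre, ← integral_const_mul]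
    _ ≤ ∫ u in Ioi (0 : ℝ), (L / 2 * lorentz T (u - v) + √|u - v| / 2 * lorentz T (u - v) +
          13 * (|scaledR u| / (1 + u) ^ 2)) := by
        refine setIntegral_mono_on (hint.re.const_mul η) (hsum.add (hI.const_mul 13))
          measurableSet_Ioi fun u (hu : 0 < u) ↦ ?_
        rw [Complex.re_ofReal_mul]
        exact mul_re_primeKernel_le h.abs_sign (by linarith) (by linarith) hT hv hu
          (Real.exp_pos _).le (Real.exp_le_one_iff.2 (by nlinarith)) (by positivity) (hfL u hu)
    _ ≤ L / 2 * (5 * Real.pi) + 5 * J / 2 + 13 * I := by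
        rw [integral_add hsum (hI.const_mul 13),
          integral_add hlor.integrableOn hsqrt.integrableOn, integral_const_mul 13,
          integral_const_mul (L / 2)]
        gcongr
        · exact setIntegral_lorentz_sub_le hT0 v
        · exact setIntegral_sqrt_mul_lorentz_sub_le hT v
    _ ≤ 8 * L + (5 * J / 2 + 13 * I) := by nlinarith [Real.pi_lt_d2]

end PrimeSide

section ExplicitFormula

variable {T η A C σ v : ℝ}

/-- The archimedean side of the smoothed explicit formula. -/
noncomputable def gammaSide (T v : ℝ) : ℂ := ∫ t : ℝ, testFun (1 / 2) T v t * (archDensity t : ℂ)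

/-- The side of the zeros in the smoothed explicit formula: `S` stands for the ordinates of the
zeros of `xi` in a bounded range, and `m` for their multiplicities. -/
noncomputable def zeroSum (S : Finset ℝ) (m : ℝ → ℕ) (T v : ℝ) : ℂ :=
  ∑ γ ∈ S, m γ * testFun (1 / 2) T v γ

/-- What the smoothed explicit formula with cut-off height `T` says about the zeros when
`η * scaledR` is bounded above: the difference of the archimedean side and the side of the zeros is
a weighted mean of `scaledR` near `v`, up to a bounded error. For `|v| ≤ 1` it is bounded, and for
`1 ≤ v` an upper bound for `η * scaledR` near `v` bounds the real part. -/
structure ExplicitFormulaBound (η C T : ℝ) (S : Finset ℝ) (m : ℝ → ℕ) : Prop where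
  norm_le : ∀ v, |v| ≤ 1 → ‖gammaSide T v - Real.pi * zeroSum S m T v‖ ≤ C
  re_le : ∀ v, 1 ≤ v → ∀ L, 0 ≤ L → (∀ u, 0 < u → η * scaledR u ≤ L + √|u - v|) →
    η * (gammaSide T v - Real.pi * zeroSum S m T v).re ≤ 8 * L + C

lemma measurable_testFun (a T v : ℝ) : Measurable (testFun a T v) := by
  have := (continuous_tent T).measurable
  unfold testFun
  exact Measurable.div (by fun_prop) (by fun_prop)

lemma continuousAt_uncurry_testFun (T v t : ℝ) :
    ContinuousAt (Function.uncurry fun σ t ↦ testFun (1 / 2 - σ) T v t) (0, t) := by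
  have := continuous_tent T
  simp only [testFun, Function.uncurry_def]
  refine ContinuousAt.div (by fun_prop) (by fun_prop) ?_
  simpa using neg_add_mul_I_ne_zero (show (0 : ℝ) < 1 / 2 by norm_num) t

lemma norm_testFun_half_sub_le (hσ : σ ≤ 1 / 4) (T v t : ℝ) :
    ‖testFun (1 / 2 - σ) T v t‖ ≤ 4 * tent T t := by
  refine (norm_testFun_le (by linarith) T v t).trans ?_
  rw [div_le_iff₀ (by linarith)]
  nlinarith [tent_nonneg T t]

lemma isTestFamily_testFun (hT : 0 < T) {R : ℝ} (hTR : T ≤ R) (v : ℝ) :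
    IsTestFamily (fun σ t ↦ testFun (1 / 2 - σ) T v t) R 4 where
  measurable _ := measurable_testFun _ _ _
  continuousAt := continuousAt_uncurry_testFun T v
  norm_le := by
    filter_upwards [Ioc_mem_nhdsGT (show (0 : ℝ) < 1 / 4 by norm_num)] with σ hσ t
    linarith [norm_testFun_half_sub_le hσ.2 T v t, tent_le_one hT t]
  eq_zero _ _ ht := testFun_of_le_abs hT (hTR.trans ht.le) _ _

lemma continuous_re_archFactor_line (hσ : 0 ≤ σ) :
    Continuous fun t : ℝ ↦ ((archFactor (σ + t * Complex.I)).re : ℂ) :=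
  Complex.continuous_ofReal.comp (Complex.continuous_re.comp
    (continuousOn_archFactor.comp_continuous (by fun_prop) fun t ↦ by simpa using hσ))

lemma abs_re_archFactor_line_le (hσ : 0 ≤ σ) (t : ℝ) :
    |(archFactor (σ + t * Complex.I)).re| ≤ |archDensity t| + σ := by
  have hdist := (Complex.abs_re_le_norm _).trans
    (norm_archFactor_sub_le (z := σ + t * Complex.I) (w := t * Complex.I) (by simpa using hσ)
      (by simp))
  rw [Complex.sub_re, add_sub_cancel_right, Complex.norm_real, Real.norm_of_nonneg hσ] at hdist
  have htri := abs_sub_abs_le_abs_sub (archFactor (σ + t * Complex.I)).re (archDensity t)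
  rw [archDensity] at htri ⊢
  linarith

lemma tendsto_re_archFactor_line (t : ℝ) :
    Tendsto (fun σ : ℝ ↦ ((archFactor (σ + t * Complex.I)).re : ℂ)) (𝓝[>] 0)
      (𝓝 (archDensity t : ℂ)) := by
  have hline : Tendsto (fun σ : ℝ ↦ (σ + t * Complex.I : ℂ)) (𝓝[>] 0)
      (𝓝[{z | 0 ≤ z.re}] (t * Complex.I)) := by
    refine tendsto_nhdsWithin_iff.2 ⟨?_, ?_⟩
    · have hcont : ContinuousAt (fun σ : ℝ ↦ (σ + t * Complex.I : ℂ)) 0 := by fun_prop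
      simpa using hcont.tendsto.mono_left (nhdsWithin_le_nhds (s := Ioi 0))
    · filter_upwards [self_mem_nhdsWithin] with σ hσ
      simpa using (mem_Ioi.1 hσ).le
  exact ((Complex.continuous_ofReal.comp Complex.continuous_re).tendsto _).comp
    ((continuousOn_archFactor _ (by simp)).tendsto.comp hline)

lemma tendsto_gammaSide (hT : 0 < T) (v : ℝ) :
    Tendsto (fun σ : ℝ ↦ ∫ t : ℝ, testFun (1 / 2 - σ) T v t *
      ((archFactor (σ + t * Complex.I)).re : ℂ)) (𝓝[>] 0) (𝓝 (gammaSide T v)) := by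
  have hsmall : ∀ᶠ σ : ℝ in 𝓝[>] 0, σ ∈ Ioc 0 (1 / 4) := Ioc_mem_nhdsGT (by norm_num)
  refine tendsto_integral_filter_of_dominated_convergence
    (fun t ↦ 4 * (tent T t * (|archDensity t| + 1))) ?_ ?_ ?_ ?_
  · filter_upwards [hsmall] with σ hσ
    exact ((continuous_testFun (by linarith [hσ.2]) T v).mul
      (continuous_re_archFactor_line hσ.1.le)).aestronglyMeasurable
  · filter_upwards [hsmall] with σ hσ
    refine Eventually.of_forall fun t ↦ ?_
    rw [norm_mul, Complex.norm_real, ← mul_assoc, Real.norm_eq_abs]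
    have := tent_nonneg T t
    gcongr
    · exact norm_testFun_half_sub_le hσ.2 T v t
    · linarith [abs_re_archFactor_line_le hσ.1.le t, hσ.2]
  · have := continuous_archDensity
    exact (integrable_tent_mul hT (by fun_prop)).const_mul 4
  · refine Eventually.of_forall fun t ↦ ?_
    simpa using ((isTestFamily_testFun hT le_rfl v).tendsto t).mul (tendsto_re_archFactor_line t)

namespace OneSidedBound

lemma integral_testFun_mul_re_logDeriv_xi (h : OneSidedBound η A) (hT : 0 < T) (hσ : 0 < σ)
    (hσ' : σ ≤ 1 / 4) (v : ℝ) :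
    ∫ t : ℝ, testFun (1 / 2 - σ) T v t * ((logDeriv xi (σ + t * Complex.I)).re : ℂ) =
      (∫ t : ℝ, testFun (1 / 2 - σ) T v t * ((archFactor (σ + t * Complex.I)).re : ℂ)) -
        primeSide σ T v := by
  have ha : 0 < 1 / 2 - σ := by linarith
  have hcont : Continuous fun t : ℝ ↦ laplace scaledR (σ + t * Complex.I) :=
    continuous_iff_continuousAt.2 fun t ↦
      ContinuousAt.comp (f := fun t : ℝ ↦ (σ + t * Complex.I : ℂ)) (g := laplace scaledR)
        (h.analyticAt_laplace_scaledR (by simpa using hσ)).continuousAt (by fun_prop)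
  rw [primeSide, ← integral_testFun_mul_re_laplace ha hT measurable_scaledR
    (h.laplaceIntegrable_scaledR hσ), ← integral_sub
    (integrable_testFun_mul ha hT v (continuous_re_archFactor_line hσ.le))
    (integrable_testFun_mul ha hT v (by fun_prop))]
  refine integral_congr_ae (Eventually.of_forall fun t ↦ ?_)
  have hline : (σ + t * Complex.I - 1 / 2 : ℂ) = -((1 / 2 - σ : ℝ) : ℂ) + t * Complex.I := by
    push_cast
    ring
  simp only
  rw [h.logDeriv_xi (by simpa using hσ), hline, Complex.sub_re, Complex.ofReal_sub, mul_sub]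

lemma exists_tendsto_primeSide (h : OneSidedBound η A) (R : ℝ) :
    ∃ (S : Finset ℝ) (m : ℝ → ℕ), (∀ γ ∈ S, 1 ≤ m γ) ∧ ∀ T, 0 < T → T ≤ R → ∀ v,
      Tendsto (fun σ ↦ primeSide σ T v) (𝓝[>] 0)
        (𝓝 (gammaSide T v - Real.pi * zeroSum S m T v)) := by
  obtain ⟨S, m, hm, hlim⟩ := exists_tendsto_integral_mul_re_logDeriv differentiable_xi
    ⟨1 / 2, by rw [xi_half]; exact one_ne_zero⟩ (fun _ ↦ h.re_eq_zero_of_xi_eq_zero)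
    re_logDeriv_xi R
  refine ⟨S, m, hm, fun T hT hTR v ↦ ?_⟩
  have hzeros := hlim _ 4 (isTestFamily_testFun hT hTR v)
  simp only [sub_zero] at hzeros
  refine ((tendsto_gammaSide hT v).sub hzeros).congr' ?_
  filter_upwards [Ioc_mem_nhdsGT (show (0 : ℝ) < 1 / 4 by norm_num)] with σ hσ
  rw [h.integral_testFun_mul_re_logDeriv_xi hT hσ.1 hσ.2, sub_sub_cancel]

theorem exists_explicitFormulaBound (h : OneSidedBound η A) :
    ∃ C, 0 ≤ C ∧ ∀ R, ∃ (S : Finset ℝ) (m : ℝ → ℕ), (∀ γ ∈ S, 1 ≤ m γ) ∧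
      ∀ T, 1 ≤ T → T ≤ R → ExplicitFormulaBound η C T S m := by
  obtain ⟨C₁, hC₁, hnear⟩ := exists_norm_primeSide_le h
  obtain ⟨C₂, hC₂, hfar⟩ := exists_re_primeSide_le h
  refine ⟨C₁ + C₂, by positivity, fun R ↦ ?_⟩
  obtain ⟨S, m, hm, hlim⟩ := h.exists_tendsto_primeSide R
  have hsmall : ∀ᶠ σ : ℝ in 𝓝[>] 0, σ ∈ Ioc 0 (1 / 4) := Ioc_mem_nhdsGT (by norm_num)
  refine ⟨S, m, hm, fun T hT hTR ↦ ⟨fun v hv ↦ ?_, fun v hv L hL hR ↦ ?_⟩⟩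
  · refine le_of_tendsto (hlim T (by linarith) hTR v).norm ?_
    filter_upwards [hsmall] with σ hσ
    linarith [hnear T hT σ hσ.1 hσ.2 v hv]
  · refine le_of_tendsto
      (((Complex.continuous_re.tendsto _).comp (hlim T (by linarith) hTR v)).const_mul η) ?_
    filter_upwards [hsmall] with σ hσ
    simp only [Function.comp_apply]
    linarith [hfar T hT σ hσ.1 hσ.2 v hv L hL hR]

end OneSidedBound

end ExplicitFormula

section ZeroCount

variable {T v η A C : ℝ}

lemma ExplicitFormulaBound.mono {S : Finset ℝ} {m : ℝ → ℕ} {C' : ℝ}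
    (h : ExplicitFormulaBound η C T S m) (hC : C ≤ C') : ExplicitFormulaBound η C' T S m where
  norm_le v hv := (h.norm_le v hv).trans hC
  re_le v hv L hL hR := (h.re_le v hv L hL hR).trans (by gcongr)

lemma re_testFun_half (T v t : ℝ) : (testFun (1 / 2) T v t).re =
    tent T t * (t * Real.sin (t * v) - Real.cos (t * v) / 2) / (1 / 4 + t ^ 2) := by
  have hexp : Complex.exp (t * v * Complex.I) =
      (Real.cos (t * v) : ℂ) + Real.sin (t * v) * Complex.I := by
    rw [← Complex.ofReal_mul, Complex.exp_mul_I, Complex.ofReal_cos, Complex.ofReal_sin]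
  have hnormSq : Complex.normSq (-(1 / 2 : ℝ) + t * Complex.I) = 1 / 4 + t ^ 2 := by
    rw [← Complex.ofReal_neg, Complex.normSq_add_mul_I]
    ring
  rw [testFun, hexp, Complex.div_re, hnormSq, Complex.re_ofReal_mul, Complex.im_ofReal_mul]
  simp only [Complex.add_re, Complex.add_im, Complex.neg_re, Complex.neg_im, Complex.ofReal_re,
    Complex.ofReal_im, Complex.re_ofReal_mul, Complex.im_ofReal_mul, Complex.I_re, Complex.I_im]
  ring

lemma integrable_archDensity_div : Integrable fun t ↦ archDensity t / (1 / 4 + t ^ 2) := by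
  obtain ⟨C, hC, hbound⟩ := exists_abs_archDensity_le
  have hdom : Integrable fun t : ℝ ↦ 4 * C * ((1 + t ^ 2)⁻¹ + √|t| * (1 + t ^ 2)⁻¹) :=
    (integrable_inv_one_add_sq.add integrable_sqrt_abs_mul_inv).const_mul _
  refine hdom.mono' (Continuous.aestronglyMeasurable
    (continuous_archDensity.div (by fun_prop) fun t ↦ by positivity))
    (Eventually.of_forall fun t ↦ ?_)
  have hpos : (0 : ℝ) < 1 / 4 + t ^ 2 := by positivity
  rw [norm_div, Real.norm_of_nonneg hpos.le, Real.norm_eq_abs, ← one_add_mul, ← div_eq_mul_inv,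
    mul_div_assoc', div_le_div_iff₀ hpos (by positivity)]
  calc |archDensity t| * (1 + t ^ 2) ≤ C * (1 + √|t|) * (4 * (1 / 4 + t ^ 2)) := by
        gcongr
        · exact hbound t
        · nlinarith [sq_nonneg t]
    _ = _ := by ring

lemma re_gammaSide (hT : 0 < T) (v : ℝ) :
    (gammaSide T v).re = ∫ t, tent T t * (t * Real.sin (t * v) - Real.cos (t * v) / 2) *
      (archDensity t / (1 / 4 + t ^ 2)) := by
  have hint : Integrable fun t ↦ testFun (1 / 2) T v t * (archDensity t : ℂ) :=
    integrable_testFun_mul (by norm_num) hT v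
      (Complex.continuous_ofReal.comp continuous_archDensity)
  rw [gammaSide, ← RCLike.re_eq_complex_re, ← integral_re hint]
  refine integral_congr_ae (Eventually.of_forall fun t ↦ ?_)
  simp only [RCLike.re_eq_complex_re]
  rw [mul_comm, Complex.re_ofReal_mul, re_testFun_half]
  ring

lemma abs_integral_tent_mul_cos_le (hT : 0 < T) (v : ℝ) :
    |∫ t, tent T t * (Real.cos (t * v) / 2) * (archDensity t / (1 / 4 + t ^ 2))| ≤
      ∫ t, |archDensity t / (1 / 4 + t ^ 2)| := by
  refine abs_integral_le_integral_abs.trans (integral_mono_of_nonneg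
    (Eventually.of_forall fun _ ↦ abs_nonneg _) integrable_archDensity_div.abs
    (Eventually.of_forall fun t ↦ ?_))
  simp only
  rw [abs_mul]
  refine mul_le_of_le_one_left (abs_nonneg _) ?_
  rw [abs_mul, abs_of_nonneg (tent_nonneg T t), abs_div, abs_two]
  exact mul_le_one₀ (tent_le_one hT t) (by positivity) (by linarith [Real.abs_cos_le_one (t * v)])

lemma abs_re_gammaSide_zero_le (hT : 0 < T) :
    |(gammaSide T 0).re| ≤ ∫ t, |archDensity t / (1 / 4 + t ^ 2)| := by
  have h := abs_integral_tent_mul_cos_le hT 0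
  rw [← abs_neg, ← integral_neg] at h
  rw [re_gammaSide hT]
  simpa only [mul_zero, Real.sin_zero, zero_sub, mul_neg, neg_mul] using h

lemma re_zeroSum_zero (S : Finset ℝ) (m : ℝ → ℕ) (T : ℝ) :
    (zeroSum S m T 0).re = -(∑ γ ∈ S, m γ * (tent T γ / (1 / 4 + γ ^ 2))) / 2 := by
  rw [zeroSum, Complex.re_sum, neg_div, Finset.sum_div, ← Finset.sum_neg_distrib]
  refine Finset.sum_congr rfl fun γ _ ↦ ?_
  rw [← Complex.ofReal_natCast, Complex.re_ofReal_mul, re_testFun_half]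
  simp only [mul_zero, Real.sin_zero, Real.cos_zero]
  ring

lemma mul_tent_div_nonneg (m : ℕ) (T γ : ℝ) : 0 ≤ m * (tent T γ / (1 / 4 + γ ^ 2)) :=
  mul_nonneg (Nat.cast_nonneg _) (div_nonneg (tent_nonneg _ _) (by positivity))

lemma ExplicitFormulaBound.sum_mul_tent_div_le {S : Finset ℝ} {m : ℝ → ℕ}
    (h : ExplicitFormulaBound η C T S m) (hT : 0 < T) :
    ∑ γ ∈ S, m γ * (tent T γ / (1 / 4 + γ ^ 2)) ≤
      C + ∫ t, |archDensity t / (1 / 4 + t ^ 2)| := by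
  have hre := abs_le.1 ((Complex.abs_re_le_norm _).trans (h.norm_le 0 (by simp)))
  rw [Complex.sub_re, Complex.re_ofReal_mul, re_zeroSum_zero] at hre
  have hgamma := abs_le.1 (abs_re_gammaSide_zero_le hT)
  have hsum : 0 ≤ ∑ γ ∈ S, m γ * (tent T γ / (1 / 4 + γ ^ 2)) :=
    Finset.sum_nonneg fun γ _ ↦ mul_tent_div_nonneg _ _ _
  nlinarith [Real.pi_gt_three]

lemma half_le_tent_two_mul (hT : 0 < T) {γ : ℝ} (hγ : |γ| ≤ T) : 1 / 2 ≤ tent (2 * T) γ := by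
  have hdiv : |γ| / (2 * T) ≤ 1 / 2 := by
    rw [div_le_div_iff₀ (by linarith) (by norm_num)]
    linarith
  rw [tent_of_abs_le (by linarith) (by linarith)]
  linarith

lemma sum_div_le_two_mul_sum_tent (hT : 0 < T) (S : Finset ℝ) (m : ℝ → ℕ) :
    ∑ γ ∈ S with |γ| ≤ T, m γ / (1 / 4 + γ ^ 2) ≤
      2 * ∑ γ ∈ S, m γ * (tent (2 * T) γ / (1 / 4 + γ ^ 2)) := by
  rw [Finset.mul_sum]
  calc ∑ γ ∈ S with |γ| ≤ T, (m γ : ℝ) / (1 / 4 + γ ^ 2)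
      ≤ ∑ γ ∈ S with |γ| ≤ T, 2 * (m γ * (tent (2 * T) γ / (1 / 4 + γ ^ 2))) := by
        refine Finset.sum_le_sum fun γ hγ ↦ ?_
        have htent := half_le_tent_two_mul hT (Finset.mem_filter.1 hγ).2
        have hweight : (0 : ℝ) ≤ m γ / (1 / 4 + γ ^ 2) := by positivity
        calc (m γ : ℝ) / (1 / 4 + γ ^ 2)
            ≤ 2 * tent (2 * T) γ * (m γ / (1 / 4 + γ ^ 2)) := by nlinarith
          _ = _ := by ring
    _ ≤ _ := Finset.sum_le_sum_of_subset_of_nonneg (Finset.filter_subset _ S) fun γ _ _ ↦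
        mul_nonneg zero_le_two (mul_tent_div_nonneg _ _ _)

lemma card_le_mul_of_sum_div_le {S : Finset ℝ} {m : ℝ → ℕ} (hm : ∀ γ ∈ S, 1 ≤ m γ) (hT : 0 ≤ T)
    (hsum : ∑ γ ∈ S with |γ| ≤ T, m γ / (1 / 4 + γ ^ 2) ≤ C) :
    (S.filter fun γ ↦ |γ| ≤ T).card ≤ C * (1 / 4 + T ^ 2) := by
  have hterm : ∑ γ ∈ S with |γ| ≤ T, 1 / (1 / 4 + T ^ 2) ≤
      ∑ γ ∈ S with |γ| ≤ T, m γ / (1 / 4 + γ ^ 2) := by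
    refine Finset.sum_le_sum fun γ hγ ↦ ?_
    obtain ⟨hγS, hγT⟩ := Finset.mem_filter.1 hγ
    have hsq : γ ^ 2 ≤ T ^ 2 := sq_le_sq.2 (by rwa [abs_of_nonneg hT])
    have hmult : (1 : ℝ) ≤ m γ := by exact_mod_cast hm γ hγS
    gcongr
  rw [Finset.sum_const, nsmul_eq_mul, mul_one_div] at hterm
  exact (div_le_iff₀ (by positivity)).1 (hterm.trans hsum)

theorem OneSidedBound.exists_explicitFormulaBound_sum_le (h : OneSidedBound η A) :
    ∃ C, 0 ≤ C ∧ ∀ T, 1 ≤ T → ∃ (S : Finset ℝ) (m : ℝ → ℕ),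
      (∑ γ ∈ S with |γ| ≤ T, m γ / (1 / 4 + γ ^ 2) ≤ C) ∧
      ((S.filter fun γ ↦ |γ| ≤ T).card ≤ C * T ^ 2) ∧ ExplicitFormulaBound η C T S m := by
  obtain ⟨C, hC, hformula⟩ := h.exists_explicitFormulaBound
  set K := ∫ t, |archDensity t / (1 / 4 + t ^ 2)|
  have hK : 0 ≤ K := integral_nonneg fun t ↦ abs_nonneg _
  refine ⟨8 * (C + K), by positivity, fun T hT ↦ ?_⟩
  have hT0 : 0 < T := by linarith
  obtain ⟨S, m, hm, hS⟩ := hformula (2 * T)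
  have hsum : ∑ γ ∈ S with |γ| ≤ T, m γ / (1 / 4 + γ ^ 2) ≤ 2 * (C + K) :=
    (sum_div_le_two_mul_sum_tent hT0 S m).trans (mul_le_mul_of_nonneg_left
      ((hS (2 * T) (by linarith) le_rfl).sum_mul_tent_div_le (by linarith)) zero_le_two)
  have hcard := card_le_mul_of_sum_div_le hm hT0.le hsum
  refine ⟨S, m, by linarith, hcard.trans ?_, (hS T hT (by linarith)).mono (by linarith)⟩
  nlinarith [one_le_pow₀ hT (n := 2)]

end ZeroCount

section GammaSideNearZero

variable {T t : ℝ}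

lemma mul_sin_div_nonneg (hT : 0 < T) (ht : |t| ≤ T) : 0 ≤ t * Real.sin (t / T) := by
  have hnonneg : ∀ {x : ℝ}, 0 ≤ x → x ≤ T → 0 ≤ x * Real.sin (x / T) := fun hx hxT ↦
    mul_nonneg hx (Real.sin_nonneg_of_nonneg_of_le_pi (by positivity)
      (((div_le_one hT).2 hxT).trans (by linarith [Real.pi_gt_three])))
  rcases le_total 0 t with h | h
  · exact hnonneg h (le_of_abs_le ht)
  · simpa [neg_div] using hnonneg (neg_nonneg.2 h) (by rwa [abs_of_nonpos h] at ht)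

lemma tent_mul_sin_nonneg (hT : 0 < T) (t : ℝ) : 0 ≤ tent T t * (t * Real.sin (t / T)) := by
  rcases le_or_gt |t| T with h | h
  · exact mul_nonneg (tent_nonneg T t) (mul_sin_div_nonneg hT h)
  · rw [tent_of_le_abs hT h.le, zero_mul]

lemma abs_mul_sin_div_le (hT : 0 < T) (t : ℝ) : |t * Real.sin (t / T)| ≤ t ^ 2 / T := by
  have h := Real.abs_sin_le_abs (x := t / T)
  rw [abs_div, abs_of_pos hT] at h
  calc |t * Real.sin (t / T)| = |t| * |Real.sin (t / T)| := abs_mul _ _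
    _ ≤ |t| * (|t| / T) := by gcongr
    _ = t ^ 2 / T := by rw [← mul_div_assoc, ← sq, sq_abs]

lemma integrable_tent_mul_mul_div (hT : 0 < T) {f g : ℝ → ℝ} (hf : Continuous f)
    (hg : Continuous g) : Integrable fun t ↦ tent T t * f t * (g t / (1 / 4 + t ^ 2)) := by
  simp only [mul_assoc]
  exact integrable_tent_mul hT
    (hf.mul (hg.div (by fun_prop) fun t ↦ by positivity))

lemma abs_integral_tent_mul_sin_le (hT : 0 < T) (b : ℝ) :
    |∫ t, tent T t * (t * Real.sin (t / T)) * (b / (1 / 4 + t ^ 2))| ≤ 2 * |b| := by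
  have hbound : ∀ t, |tent T t * (t * Real.sin (t / T)) * (b / (1 / 4 + t ^ 2))| ≤
      tent T t * (|b| / T) := fun t ↦ by
    have hpos : (0 : ℝ) < 1 / 4 + t ^ 2 := by positivity
    rw [mul_assoc, abs_mul, abs_of_nonneg (tent_nonneg T t)]
    refine mul_le_mul_of_nonneg_left ?_ (tent_nonneg T t)
    rw [abs_mul, abs_div, abs_of_pos hpos]
    calc |t * Real.sin (t / T)| * (|b| / (1 / 4 + t ^ 2))
        ≤ t ^ 2 / T * (|b| / (1 / 4 + t ^ 2)) := by
          gcongr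
          exact abs_mul_sin_div_le hT t
      _ = |b| / T * (t ^ 2 / (1 / 4 + t ^ 2)) := by ring
      _ ≤ |b| / T * 1 := by
          gcongr
          exact (div_le_one hpos).2 (by linarith)
      _ = |b| / T := mul_one _
  calc |∫ t, tent T t * (t * Real.sin (t / T)) * (b / (1 / 4 + t ^ 2))|
      ≤ ∫ t, tent T t * (|b| / T) := abs_integral_le_integral_abs.trans
        (integral_mono (integrable_tent_mul_mul_div hT (by fun_prop) (by fun_prop)).abs
          ((integrable_tent hT).mul_const _) hbound)
    _ ≤ 2 * T * (|b| / T) := by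
        rw [integral_mul_const]
        exact mul_le_mul_of_nonneg_right (integral_tent_le hT) (by positivity)
    _ = 2 * |b| := by field_simp

lemma le_tent_mul_sin_div (hT : 8 ≤ T) (ht : t ∈ Icc (T / 4) (T / 2)) :
    1 / (8 * T) ≤ tent T t * (t * Real.sin (t / T)) / (1 / 4 + t ^ 2) := by
  obtain ⟨ht1, ht2⟩ := ht
  have hT0 : 0 < T := by linarith
  have ht0 : 0 < t := by linarith
  have hdiv : t / T ≤ 1 / 2 := (div_le_iff₀ hT0).2 (by linarith)
  have htent : 1 / 2 ≤ tent T t := by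
    rw [tent_of_abs_le hT0 (by rw [abs_of_pos ht0]; linarith), abs_of_pos ht0]
    linarith
  have hsin : t / T / 2 ≤ Real.sin (t / T) := by
    refine le_trans ?_ (Real.mul_le_sin (x := t / T) (by positivity)
      (by linarith [Real.pi_gt_three]))
    rw [div_eq_inv_mul, inv_eq_one_div]
    refine mul_le_mul_of_nonneg_right ?_ (by positivity)
    rw [div_le_div_iff₀ two_pos Real.pi_pos]
    linarith [Real.pi_lt_four]
  have hsq : 1 / 2 ≤ t ^ 2 / (1 / 4 + t ^ 2) := by
    rw [div_le_div_iff₀ (by norm_num) (by positivity)]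
    nlinarith
  calc 1 / (8 * T) = 1 / 2 * (1 / (2 * T)) * (1 / 2) := by
        field_simp
        norm_num
    _ ≤ 1 / 2 * (1 / (2 * T)) * (t ^ 2 / (1 / 4 + t ^ 2)) := by gcongr
    _ = 1 / 2 * (t * (t / T / 2)) / (1 / 4 + t ^ 2) := by ring
    _ ≤ _ := by gcongr

/-- The range `T / 4 ≤ t ≤ T / 2`, where the integrand is at least a constant times
`log T / T`, already gives the main term. -/
lemma exists_log_le_integral_tent_mul_sin : ∃ C, ∀ T, 8 ≤ T → Real.log T / 128 - C ≤
    ∫ t, tent T t * (t * Real.sin (t / T)) *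
      ((archDensity t - archDensity 0) / (1 / 4 + t ^ 2)) := by
  obtain ⟨C, hC⟩ := exists_log_le_archDensity
  refine ⟨(Real.log 4 / 4 + C + archDensity 0) / 32, fun T hT ↦ ?_⟩
  have hT0 : 0 < T := by linarith
  set F : ℝ → ℝ := fun t ↦ tent T t * (t * Real.sin (t / T)) *
    ((archDensity t - archDensity 0) / (1 / 4 + t ^ 2))
  have hF : Integrable F := integrable_tent_mul_mul_div hT0 (by fun_prop)
    (continuous_archDensity.sub continuous_const)
  have hF0 : ∀ t, 0 ≤ F t := fun t ↦ mul_nonneg (tent_mul_sin_nonneg hT0 t)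
    (div_nonneg (sub_nonneg.2 (archDensity_zero_le t)) (by positivity))
  set y := Real.log (T / 4) / 4 - C - archDensity 0 with hy
  have hlow : ∀ t ∈ Icc (T / 4) (T / 2), 1 / (8 * T) * y ≤ F t := fun t ht ↦ by
    have hlog := Real.log_le_log (by linarith) ht.1
    have hyt : y ≤ archDensity t - archDensity 0 := by
      linarith [hC t (by linarith [ht.1])]
    calc 1 / (8 * T) * y ≤ 1 / (8 * T) * (archDensity t - archDensity 0) := by gcongr
      _ ≤ tent T t * (t * Real.sin (t / T)) / (1 / 4 + t ^ 2) * (archDensity t - archDensity 0) :=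
        mul_le_mul_of_nonneg_right (le_tent_mul_sin_div hT ht)
          (sub_nonneg.2 (archDensity_zero_le t))
      _ = F t := by ring
  calc Real.log T / 128 - (Real.log 4 / 4 + C + archDensity 0) / 32
      = ∫ _ in Icc (T / 4) (T / 2), 1 / (8 * T) * y := by
        rw [setIntegral_const, Measure.real, Real.volume_Icc, ENNReal.toReal_ofReal (by linarith),
          smul_eq_mul, hy, Real.log_div hT0.ne' (by norm_num)]
        field_simp
        ring
    _ ≤ ∫ t in Icc (T / 4) (T / 2), F t := setIntegral_mono_on
        (integrableOn_const measure_Icc_lt_top.ne) hF.integrableOn measurableSet_Icc hlow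
    _ ≤ ∫ t, F t := setIntegral_le_integral hF (Eventually.of_forall hF0)

lemma mul_re_gammaSide_div (hT : 0 < T) {s : ℝ} (hs : s = 1 ∨ s = -1) :
    s * (gammaSide T (s / T)).re =
      (∫ t, tent T t * (t * Real.sin (t / T)) * (archDensity t / (1 / 4 + t ^ 2))) -
      s * ∫ t, tent T t * (Real.cos (t * (s / T)) / 2) * (archDensity t / (1 / 4 + t ^ 2)) := by
  have hdens := continuous_archDensity
  rw [re_gammaSide hT, ← integral_const_mul, ← integral_const_mul, ← integral_sub
    (integrable_tent_mul_mul_div hT (by fun_prop) hdens)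
    ((integrable_tent_mul_mul_div hT (by fun_prop) hdens).const_mul s)]
  refine integral_congr_ae (Eventually.of_forall fun t ↦ ?_)
  have hsign : s * Real.sin (t * (s / T)) = Real.sin (t / T) := by
    rcases hs with rfl | rfl
    · simp [div_eq_mul_inv]
    · simp [div_eq_mul_inv]
  simp only
  rw [← hsign]
  ring

theorem exists_log_le_mul_re_gammaSide : ∃ C, ∀ T, 8 ≤ T → ∀ s : ℝ, s = 1 ∨ s = -1 →
    Real.log T / 128 - C ≤ s * (gammaSide T (s / T)).re := by
  obtain ⟨C, hC⟩ := exists_log_le_integral_tent_mul_sin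
  set K := ∫ t, |archDensity t / (1 / 4 + t ^ 2)|
  refine ⟨C + 2 * |archDensity 0| + K, fun T hT s hs ↦ ?_⟩
  have hT0 : 0 < T := by linarith
  have hdens := continuous_archDensity
  have hsin : ∫ t, tent T t * (t * Real.sin (t / T)) * (archDensity t / (1 / 4 + t ^ 2)) =
      (∫ t, tent T t * (t * Real.sin (t / T)) *
        ((archDensity t - archDensity 0) / (1 / 4 + t ^ 2))) +
      ∫ t, tent T t * (t * Real.sin (t / T)) * (archDensity 0 / (1 / 4 + t ^ 2)) := by
    rw [← integral_add (integrable_tent_mul_mul_div hT0 (by fun_prop) (by fun_prop))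
      (integrable_tent_mul_mul_div hT0 (by fun_prop) (by fun_prop))]
    refine integral_congr_ae (Eventually.of_forall fun t ↦ ?_)
    simp only
    ring
  have hcos := le_abs_self (s * ∫ t, tent T t * (Real.cos (t * (s / T)) / 2) *
    (archDensity t / (1 / 4 + t ^ 2)))
  have habs : |s| = 1 := by rcases hs with rfl | rfl <;> simp
  rw [abs_mul, habs, one_mul] at hcos
  rw [mul_re_gammaSide_div hT0 hs, hsin]
  linarith [hC T hT, neg_le_of_abs_le (abs_integral_tent_mul_sin_le hT0 (archDensity 0)),
    abs_integral_tent_mul_cos_le hT0 (s / T)]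

end GammaSideNearZero

section GammaSideAtInfinity

variable {T C v : ℝ}

lemma norm_cexp_ofReal_mul_ofReal_mul_I (t v : ℝ) : ‖Complex.exp (t * v * Complex.I)‖ = 1 := by
  rw [← Complex.ofReal_mul, Complex.norm_exp_ofReal_mul_I]

lemma integrable_mul_cexp {g : ℝ → ℂ} (hg : Integrable g) (v : ℝ) :
    Integrable fun t : ℝ ↦ g t * Complex.exp (t * v * Complex.I) :=
  hg.mul_bdd (c := 1) (Continuous.aestronglyMeasurable (by fun_prop))
    (Eventually.of_forall fun t ↦ (norm_cexp_ofReal_mul_ofReal_mul_I t v).le)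

/-- Shifting by half a period changes the sign of the exponential. -/
lemma two_mul_integral_mul_cexp {g : ℝ → ℂ} (hg : Integrable g) (hv : v ≠ 0) :
    2 * ∫ t : ℝ, g t * Complex.exp (t * v * Complex.I) =
      ∫ t : ℝ, (g t - g (t + Real.pi / v)) * Complex.exp (t * v * Complex.I) := by
  have hshift (t : ℝ) : Complex.exp (((t + Real.pi / v : ℝ) : ℂ) * v * Complex.I) =
      -Complex.exp (t * v * Complex.I) := by
    have hv' : (v : ℂ) ≠ 0 := Complex.ofReal_ne_zero.2 hv
    have harg : ((t + Real.pi / v : ℝ) : ℂ) * v * Complex.I =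
        t * v * Complex.I + Real.pi * Complex.I := by
      push_cast
      field_simp
    rw [harg, Complex.exp_add, Complex.exp_pi_mul_I, mul_neg_one]
  have htranslate : ∫ t : ℝ, g t * Complex.exp (t * v * Complex.I) =
      -∫ t : ℝ, g (t + Real.pi / v) * Complex.exp (t * v * Complex.I) := by
    rw [← integral_add_right_eq_self _ (Real.pi / v), ← integral_neg]
    simp only [hshift, mul_neg]
  simp only [sub_mul]
  rw [integral_sub (integrable_mul_cexp hg v)
    (integrable_mul_cexp (hg.comp_add_right (Real.pi / v)) v), two_mul]
  nth_rw 2 [htranslate]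
  ring

lemma norm_integral_mul_cexp_le {g : ℝ → ℂ} {R K : ℝ} (hg : Integrable g) (hv : 0 < v)
    (hR : 0 ≤ R) (hsupp : ∀ t, R ≤ |t| → g t = 0)
    (hK : ∀ t, |t| ≤ R + Real.pi / v → ‖g t - g (t + Real.pi / v)‖ ≤ K) :
    ‖∫ t : ℝ, g t * Complex.exp (t * v * Complex.I)‖ ≤ K * (R + Real.pi / v) := by
  set δ := Real.pi / v
  have hδ : 0 < δ := div_pos Real.pi_pos hv
  have hzero : ∀ t ∉ Icc (-(R + δ)) (R + δ),
      (g t - g (t + δ)) * Complex.exp (t * v * Complex.I) = 0 := fun t ht ↦ by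
    rw [mem_Icc, ← abs_le, not_le] at ht
    have hshift := abs_sub_abs_le_abs_sub t (-δ)
    rw [abs_neg, sub_neg_eq_add, abs_of_pos hδ] at hshift
    rw [hsupp t (by linarith), hsupp (t + δ) (by linarith), sub_zero, zero_mul]
  have hbound := norm_setIntegral_le_of_norm_le_const (μ := volume) measure_Icc_lt_top
    (f := fun t : ℝ ↦ (g t - g (t + δ)) * Complex.exp (t * v * Complex.I)) (C := K)
    (s := Icc (-(R + δ)) (R + δ)) fun t ht ↦ by
      rw [norm_mul, norm_cexp_ofReal_mul_ofReal_mul_I, mul_one]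
      exact hK t (abs_le.2 ht)
  rw [setIntegral_eq_integral_of_forall_compl_eq_zero hzero,
    ← two_mul_integral_mul_cexp hg hv.ne', norm_mul, Complex.norm_ofNat, Measure.real,
    Real.volume_Icc, ENNReal.toReal_ofReal (by linarith)] at hbound
  linarith

/-- The amplitude of the oscillatory integral `gammaSide T v`, whose phase is `t * v`. -/
noncomputable def gammaAmplitude (T t : ℝ) : ℂ :=
  (tent T t : ℂ) * archDensity t * (-(1 / 2 : ℝ) + t * Complex.I)⁻¹

lemma gammaSide_eq_integral (T v : ℝ) :
    gammaSide T v = ∫ t : ℝ, gammaAmplitude T t * Complex.exp (t * v * Complex.I) := by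
  refine integral_congr_ae (Eventually.of_forall fun t ↦ ?_)
  simp only [testFun, gammaAmplitude]
  ring

lemma gammaAmplitude_of_le_abs (hT : 0 < T) {t : ℝ} (ht : T ≤ |t|) : gammaAmplitude T t = 0 := by
  simp [gammaAmplitude, tent_of_le_abs hT ht]

lemma integrable_gammaAmplitude (hT : 0 < T) : Integrable (gammaAmplitude T) := by
  convert integrable_testFun_mul (show (0 : ℝ) < 1 / 2 by norm_num) hT 0
    (Complex.continuous_ofReal.comp continuous_archDensity) using 2 with t
  simp [gammaAmplitude, testFun]
  ring

lemma norm_inv_neg_half_add_mul_I_le (t : ℝ) : ‖(-(1 / 2 : ℝ) + t * Complex.I : ℂ)⁻¹‖ ≤ 2 := by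
  have hhalf : (0 : ℝ) < 1 / 2 := by norm_num
  rw [norm_inv]
  exact (inv_anti₀ hhalf (le_norm_neg_add_mul_I hhalf t)).trans (by norm_num)

lemma norm_inv_sub_inv_le (s t : ℝ) :
    ‖(-(1 / 2 : ℝ) + s * Complex.I : ℂ)⁻¹ - (-(1 / 2 : ℝ) + t * Complex.I)⁻¹‖ ≤ 4 * |s - t| := by
  have hne := neg_add_mul_I_ne_zero (show (0 : ℝ) < 1 / 2 by norm_num)
  rw [inv_sub_inv' (hne s) (hne t), norm_mul, norm_mul, add_sub_add_left_eq_sub, ← sub_mul,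
    ← Complex.ofReal_sub, norm_mul, Complex.norm_I, mul_one, Complex.norm_real, Real.norm_eq_abs,
    abs_sub_comm t s]
  calc _ ≤ 2 * |s - t| * 2 := by
        gcongr <;> exact norm_inv_neg_half_add_mul_I_le _
    _ = 4 * |s - t| := by ring

lemma norm_gammaAmplitude_sub_le {s t B : ℝ} (hT : 1 ≤ T) (hs : |archDensity s| ≤ B)
    (ht : |archDensity t| ≤ B) :
    ‖gammaAmplitude T s - gammaAmplitude T t‖ ≤ (6 * B + 2) * |s - t| := by
  have hT0 : 0 < T := by linarith
  have htent : |tent T s - tent T t| ≤ |s - t| :=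
    (abs_tent_sub_le hT0 s t).trans (div_le_self (abs_nonneg _) hT)
  have htent' : |tent T t| ≤ 1 := by
    rw [abs_of_nonneg (tent_nonneg T t)]
    exact tent_le_one hT0 t
  have hB : 0 ≤ B := (abs_nonneg _).trans hs
  set w : ℝ → ℂ := fun t ↦ (-(1 / 2 : ℝ) + t * Complex.I)⁻¹
  have hw : ‖w s‖ ≤ 2 := norm_inv_neg_half_add_mul_I_le s
  have hw' : ‖w s - w t‖ ≤ 4 * |s - t| := norm_inv_sub_inv_le s t
  have hdens := abs_archDensity_sub_le s t
  have hsplit : gammaAmplitude T s - gammaAmplitude T t =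
      ((tent T s - tent T t : ℝ) : ℂ) * archDensity s * w s +
      (tent T t : ℂ) * ((archDensity s - archDensity t : ℝ) : ℂ) * w s +
      (tent T t : ℂ) * (archDensity t : ℂ) * (w s - w t) := by
    simp only [gammaAmplitude, w]
    push_cast
    ring
  calc ‖gammaAmplitude T s - gammaAmplitude T t‖
      ≤ |tent T s - tent T t| * |archDensity s| * ‖w s‖ +
          |tent T t| * |archDensity s - archDensity t| * ‖w s‖ +
          |tent T t| * |archDensity t| * ‖w s - w t‖ := by
        rw [hsplit]
        refine norm_add₃_le.trans_eq ?_
        simp only [norm_mul, Complex.norm_real, Real.norm_eq_abs]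
    _ ≤ |s - t| * B * 2 + 1 * |s - t| * 2 + 1 * B * (4 * |s - t|) := by gcongr
    _ = (6 * B + 2) * |s - t| := by ring

theorem exists_norm_gammaSide_le :
    ∃ C, 0 ≤ C ∧ ∀ T, 2 ≤ T → ∀ v, T ^ 2 ≤ v → ‖gammaSide T v‖ ≤ C := by
  obtain ⟨C, hC, hdens⟩ := exists_abs_archDensity_le
  refine ⟨8 * (12 * C + 2), by positivity, fun T hT v hv ↦ ?_⟩
  have hT0 : 0 < T := by linarith
  have hv0 : 0 < v := by nlinarith
  set δ := Real.pi / v with hδ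
  have hδ0 : 0 < δ := div_pos Real.pi_pos hv0
  have hδ1 : δ ≤ 1 := (div_le_one hv0).2 (by nlinarith [Real.pi_lt_four])
  have hδT : δ * T ^ 2 ≤ 4 := by
    rw [hδ, div_mul_eq_mul_div, div_le_iff₀ hv0]
    nlinarith [Real.pi_lt_four, Real.pi_pos]
  have hbound : ∀ t, |t| ≤ T + 2 → |archDensity t| ≤ 2 * C * T := fun t ht ↦ by
    have hsqrt : √|t| ≤ T := Real.sqrt_le_iff.2 ⟨hT0.le, by nlinarith⟩
    nlinarith [hdens t]
  have hlip : ∀ t, |t| ≤ T + δ →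
      ‖gammaAmplitude T t - gammaAmplitude T (t + δ)‖ ≤ (6 * (2 * C * T) + 2) * δ := fun t ht ↦ by
    have htδ : |t + δ| ≤ T + 2 := (abs_add_le _ _).trans (by rw [abs_of_pos hδ0]; linarith)
    refine (norm_gammaAmplitude_sub_le (by linarith) (hbound t (by linarith))
      (hbound _ htδ)).trans_eq ?_
    rw [sub_add_cancel_left, abs_neg, abs_of_pos hδ0]
  calc ‖gammaSide T v‖ ≤ (6 * (2 * C * T) + 2) * δ * (T + δ) := by
        rw [gammaSide_eq_integral]
        exact norm_integral_mul_cexp_le (integrable_gammaAmplitude hT0) hv0 hT0.le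
          (fun t ↦ gammaAmplitude_of_le_abs hT0) hlip
    _ ≤ (12 * C + 2) * T * δ * (2 * T) := by
        gcongr
        · nlinarith
        · linarith
    _ = 2 * (12 * C + 2) * (δ * T ^ 2) := by ring
    _ ≤ 2 * (12 * C + 2) * 4 := by gcongr
    _ = 8 * (12 * C + 2) := by ring

end GammaSideAtInfinity

section SimultaneousApproximation

lemma exists_norm_nsmul_pi_addCircle_le {ι : Type*} [Fintype ι] {p : ℝ} [hp : Fact (0 < p)]
    (ξ : ι → AddCircle p) {Q : ℕ} (hQ : 0 < Q) :
    ∃ n ∈ Icc 1 (Q ^ Fintype.card ι), ‖n • ξ‖ ≤ p / Q := by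
  have hδ : (0 : ℝ) ≤ p / Q / 2 := by have := hp.out; positivity
  have hball : volume (Metric.closedBall (0 : ι → AddCircle p) (p / Q / 2)) =
      ENNReal.ofReal (p / Q) ^ Fintype.card ι := by
    rw [closedBall_pi _ hδ, volume_pi_pi]
    simp only [AddCircle.volume_closedBall, Finset.prod_const, Finset.card_univ]
    rw [mul_div_cancel₀ _ two_ne_zero, min_eq_right (div_le_self hp.out.le (by exact_mod_cast hQ))]
  refine NormedAddCommGroup.exists_norm_nsmul_le (μ := volume) ξ (pow_pos hQ _) _ ?_
  rw [hball, volume_pi, Measure.pi_univ]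
  simp only [AddCircle.measure_univ, Finset.prod_const, Finset.card_univ]
  calc ENNReal.ofReal p ^ Fintype.card ι = (Q * ENNReal.ofReal (p / Q)) ^ Fintype.card ι := by
        rw [← ENNReal.ofReal_natCast, ← ENNReal.ofReal_mul (by positivity),
          mul_div_cancel₀ _ (by positivity)]
    _ ≤ (Q ^ Fintype.card ι + 1) • ENNReal.ofReal (p / Q) ^ Fintype.card ι := by
        rw [mul_pow, nsmul_eq_mul]
        push_cast
        gcongr
        exact le_self_add

lemma norm_cexp_I_mul_ofReal_sub_one_le_addCircle (x : ℝ) :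
    ‖Complex.exp (Complex.I * x) - 1‖ ≤ ‖(x : AddCircle (2 * Real.pi))‖ := by
  set k : ℤ := round ((2 * Real.pi)⁻¹ * x)
  have hperiodic : Complex.exp (Complex.I * x) =
      Complex.exp (Complex.I * (x - k * (2 * Real.pi) : ℝ)) := by
    rw [← Complex.exp_periodic.sub_int_mul_eq k]
    push_cast
    ring_nf
  rw [hperiodic, AddCircle.norm_eq, ← Real.norm_eq_abs]
  exact Real.norm_exp_I_mul_ofReal_sub_one_le

theorem exists_norm_cexp_sub_one_le (S : Finset ℝ) {Q : ℕ} (hQ : 0 < Q) (d : ℝ) :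
    ∃ n : ℕ, 1 ≤ n ∧ n ≤ Q ^ S.card ∧
      ∀ γ ∈ S, ‖Complex.exp (γ * (n * d : ℝ) * Complex.I) - 1‖ ≤ 2 * Real.pi / Q := by
  obtain ⟨n, hn, hnorm⟩ := exists_norm_nsmul_pi_addCircle_le (p := 2 * Real.pi)
    (hp := ⟨Real.two_pi_pos⟩) (fun γ : S ↦ ((γ * d : ℝ) : AddCircle (2 * Real.pi))) hQ
  rw [Fintype.card_coe] at hn
  refine ⟨n, hn.1, hn.2, fun γ hγ ↦ ?_⟩
  calc ‖Complex.exp (γ * (n * d : ℝ) * Complex.I) - 1‖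
      = ‖Complex.exp (Complex.I * (n • (γ * d) : ℝ)) - 1‖ := by
        push_cast [nsmul_eq_mul]
        ring_nf
    _ ≤ ‖n • ((γ * d : ℝ) : AddCircle (2 * Real.pi))‖ :=
        norm_cexp_I_mul_ofReal_sub_one_le_addCircle _
    _ ≤ 2 * Real.pi / Q := (norm_le_pi_norm _ (⟨γ, hγ⟩ : S)).trans hnorm

end SimultaneousApproximation

section IteratedLogarithm

variable {u v : ℝ}

lemma log_one_add_le_two_mul_sqrt {x : ℝ} (hx : 0 ≤ x) : Real.log (1 + x) ≤ 2 * √x := by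
  have hsqrt : √(1 + x) ≤ 1 + √x := by
    rw [Real.sqrt_le_iff]
    exact ⟨by positivity, by nlinarith [Real.sq_sqrt hx, Real.sqrt_nonneg x]⟩
  have hlog := Real.log_le_sub_one_of_pos (Real.sqrt_pos.2 (by linarith : 0 < 1 + x))
  rw [Real.log_sqrt (by linarith)] at hlog
  linarith

lemma log_log_le_two_mul_sqrt (hu : 1 ≤ u) : Real.log (Real.log u) ≤ 2 * √u :=
  calc Real.log (Real.log u) ≤ Real.log u := Real.log_le_self (Real.log_nonneg hu)
    _ = Real.log (1 + (u - 1)) := by rw [add_sub_cancel]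
    _ ≤ 2 * √(u - 1) := log_one_add_le_two_mul_sqrt (by linarith)
    _ ≤ 2 * √u := by gcongr; linarith

lemma one_lt_log_of_three_le (hv : 3 ≤ v) : 1 < Real.log v := by
  rw [Real.lt_log_iff_exp_lt (by linarith)]
  exact Real.exp_one_lt_three.trans_le hv

lemma log_log_nonneg_of_three_le (hv : 3 ≤ v) : 0 ≤ Real.log (Real.log v) :=
  Real.log_nonneg (one_lt_log_of_three_le hv).le

lemma log_log_le_add_two_mul_sqrt_abs (hu : 3 ≤ u) (hv : 3 ≤ v) :
    Real.log (Real.log u) ≤ Real.log (Real.log v) + 2 * √|u - v| := by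
  have hlogu := one_lt_log_of_three_le hu
  have hlogv := one_lt_log_of_three_le hv
  rcases le_total u v with huv | hvu
  · have hmono : Real.log (Real.log u) ≤ Real.log (Real.log v) := by gcongr
    linarith [Real.sqrt_nonneg |u - v|]
  · have hquot : Real.log u - Real.log v ≤ u - v := by
      rw [← Real.log_div (by linarith) (by linarith)]
      calc Real.log (u / v) ≤ u / v - 1 := Real.log_le_sub_one_of_pos (by positivity)
        _ = (u - v) / v := div_sub_one (by linarith)
        _ ≤ u - v := div_le_self (by linarith) (by linarith)
    have hmul : Real.log u ≤ Real.log v * (1 + (u - v)) := by nlinarith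
    rw [abs_of_nonneg (sub_nonneg.2 hvu)]
    calc Real.log (Real.log u) ≤ Real.log (Real.log v * (1 + (u - v))) := by gcongr
      _ = Real.log (Real.log v) + Real.log (1 + (u - v)) :=
          Real.log_mul (by linarith) (by linarith)
      _ ≤ Real.log (Real.log v) + 2 * √(u - v) := by
          gcongr
          exact log_one_add_le_two_mul_sqrt (sub_nonneg.2 hvu)

lemma log_log_le_of_le_pow {T C : ℝ} {N : ℕ} (hT : 2 ≤ T) (hC : 0 ≤ C) (hv : 3 ≤ v)
    (hN : N ≤ C * T ^ 2) (hle : v ≤ T ^ (N + 4)) :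
    Real.log (Real.log v) ≤ Real.log (C + 4) + 3 * Real.log T := by
  have hlog : Real.log v ≤ (C + 4) * T ^ 3 :=
    calc Real.log v ≤ Real.log (T ^ (N + 4)) := by gcongr
      _ = (N + 4) * Real.log T := by
          rw [Real.log_pow]
          push_cast
          ring
      _ ≤ ((C + 4) * T ^ 2) * T := by
          gcongr
          · exact Real.log_nonneg (by linarith)
          · nlinarith
          · exact Real.log_le_self (by linarith)
      _ = (C + 4) * T ^ 3 := by ring
  have hlogv := one_lt_log_of_three_le hv
  calc Real.log (Real.log v) ≤ Real.log ((C + 4) * T ^ 3) := by gcongr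
    _ = Real.log (C + 4) + 3 * Real.log T := by
        rw [Real.log_mul (by positivity) (by positivity), Real.log_pow]
        norm_cast

lemma exists_oneSidedBound_of_le_log_log {η c u₀ : ℝ} (hη : η = 1 ∨ η = -1) (hc : 0 ≤ c)
    (hc2 : c ≤ 1 / 2) (hu₀ : 3 ≤ u₀)
    (hle : ∀ u, u₀ ≤ u → η * scaledR u ≤ c * Real.log (Real.log u)) :
    ∃ A, OneSidedBound η A ∧ ∀ v, 3 ≤ v → ∀ u, 0 < u →
      η * scaledR u ≤ A + c * Real.log (Real.log v) + √|u - v| := by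
  obtain ⟨A, hA, hbound⟩ := exists_abs_scaledR_le u₀
  have hsmall : ∀ u, 0 < u → u ≤ u₀ → η * scaledR u ≤ A := fun u hu huu₀ ↦ by
    have hη1 : |η| = 1 := by rcases hη with rfl | rfl <;> simp
    calc η * scaledR u ≤ |η * scaledR u| := le_abs_self _
      _ = |scaledR u| := by rw [abs_mul, hη1, one_mul]
      _ ≤ A := hbound u hu huu₀
  refine ⟨A, ⟨hη, hA, fun u hu ↦ ?_⟩, fun v hv u hu ↦ ?_⟩
  · rcases le_total u u₀ with huu₀ | hu₀u
    · linarith [hsmall u hu huu₀, Real.sqrt_nonneg u]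
    · calc η * scaledR u ≤ c * Real.log (Real.log u) := hle u hu₀u
        _ ≤ c * (2 * √u) := by gcongr; exact log_log_le_two_mul_sqrt (by linarith)
        _ ≤ A + √u := by nlinarith [Real.sqrt_nonneg u]
  · have hlog := mul_nonneg hc (log_log_nonneg_of_three_le hv)
    rcases le_total u u₀ with huu₀ | hu₀u
    · linarith [hsmall u hu huu₀, Real.sqrt_nonneg |u - v|]
    · calc η * scaledR u ≤ c * Real.log (Real.log u) := hle u hu₀u
        _ ≤ c * (Real.log (Real.log v) + 2 * √|u - v|) := by
            gcongr
            exact log_log_le_add_two_mul_sqrt_abs (hu₀.trans hu₀u) hv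
        _ ≤ A + c * Real.log (Real.log v) + √|u - v| := by nlinarith [Real.sqrt_nonneg |u - v|]

end IteratedLogarithm

section Contradiction

variable {η C T D v v₀ : ℝ} {S : Finset ℝ} {m : ℝ → ℕ}

lemma norm_testFun_half_le (hT : 0 < T) {t : ℝ} (ht : |t| ≤ T) (v : ℝ) :
    ‖testFun (1 / 2) T v t‖ ≤ (T + 1) / (1 / 4 + t ^ 2) := by
  set w : ℂ := -(1 / 2 : ℝ) + t * Complex.I
  have hw0 : 0 < ‖w‖ := norm_pos_iff.2 (neg_add_mul_I_ne_zero (by norm_num) t)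
  have hwT : ‖w‖ ≤ T + 1 := by
    refine (norm_add_le _ _).trans ?_
    rw [norm_neg, norm_mul, Complex.norm_I, Complex.norm_real, Complex.norm_real,
      Real.norm_eq_abs t]
    norm_num
    linarith
  have hwsq : ‖w‖ ^ 2 = 1 / 4 + t ^ 2 := by
    rw [← Complex.normSq_eq_norm_sq, show w = ((-(1 / 2) : ℝ) : ℂ) + t * Complex.I by simp [w],
      Complex.normSq_add_mul_I]
    ring
  calc ‖testFun (1 / 2) T v t‖ = tent T t / ‖w‖ := norm_testFun _ _ _ _
    _ ≤ 1 / ‖w‖ := by gcongr; exact tent_le_one hT t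
    _ = ‖w‖ / ‖w‖ ^ 2 := by field_simp
    _ ≤ (T + 1) / (1 / 4 + t ^ 2) := by rw [hwsq]; gcongr

lemma testFun_add_sub_testFun (a T v τ t : ℝ) : testFun a T (v + τ) t - testFun a T v t =
    testFun a T v t * (Complex.exp (t * τ * Complex.I) - 1) := by
  have hexp : Complex.exp (t * ((v + τ : ℝ) : ℂ) * Complex.I) =
      Complex.exp (t * v * Complex.I) * Complex.exp (t * τ * Complex.I) := by
    rw [← Complex.exp_add]
    push_cast
    ring_nf
  simp only [testFun, hexp]
  ring

lemma zeroSum_eq_sum_filter (hT : 0 < T) (S : Finset ℝ) (m : ℝ → ℕ) (v : ℝ) :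
    zeroSum S m T v = ∑ γ ∈ S with |γ| ≤ T, m γ * testFun (1 / 2) T v γ := by
  refine (Finset.sum_filter_of_ne fun γ _ hne ↦ ?_).symm
  by_contra! hγ
  exact hne (by rw [testFun_of_le_abs hT hγ.le, mul_zero])

lemma norm_zeroSum_add_sub_le {δ τ : ℝ} (hT : 0 < T) (hδ : 0 ≤ δ)
    (hS : ∑ γ ∈ S with |γ| ≤ T, m γ / (1 / 4 + γ ^ 2) ≤ C) (v : ℝ)
    (hτ : ∀ γ ∈ S.filter fun γ ↦ |γ| ≤ T, ‖Complex.exp (γ * τ * Complex.I) - 1‖ ≤ δ) :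
    ‖zeroSum S m T (v + τ) - zeroSum S m T v‖ ≤ δ * (T + 1) * C := by
  simp only [zeroSum_eq_sum_filter hT, ← Finset.sum_sub_distrib, ← mul_sub,
    testFun_add_sub_testFun]
  calc ‖∑ γ ∈ S with |γ| ≤ T, (m γ : ℂ) * (testFun (1 / 2) T v γ *
        (Complex.exp (γ * τ * Complex.I) - 1))‖
      ≤ ∑ γ ∈ S with |γ| ≤ T, m γ * ((T + 1) / (1 / 4 + γ ^ 2) * δ) := by
        refine norm_sum_le_of_le _ fun γ hγ ↦ ?_
        rw [norm_mul, norm_mul, Complex.norm_natCast]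
        gcongr
        · exact norm_testFun_half_le hT (Finset.mem_filter.1 hγ).2 v
        · exact hτ γ hγ
    _ = δ * (T + 1) * ∑ γ ∈ S with |γ| ≤ T, m γ / (1 / 4 + γ ^ 2) := by
        rw [Finset.mul_sum]
        exact Finset.sum_congr rfl fun γ _ ↦ by ring
    _ ≤ δ * (T + 1) * C := by gcongr

lemma exists_norm_zeroSum_sub_le {Q : ℕ} (hQ : 8 ≤ Q) (hC : 0 ≤ C)
    (hS : ∑ γ ∈ S with |γ| ≤ (Q : ℝ), m γ / (1 / 4 + γ ^ 2) ≤ C)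
    (hv₀ : |v₀| ≤ 1) :
    ∃ v, (Q : ℝ) ^ 2 ≤ v ∧ v ≤ (Q : ℝ) ^ ((S.filter fun γ ↦ |γ| ≤ (Q : ℝ)).card + 4) ∧
      ‖zeroSum S m Q v - zeroSum S m Q v₀‖ ≤ 4 * Real.pi * C := by
  obtain ⟨n, hn, hnQ, hexp⟩ := exists_norm_cexp_sub_one_le (S.filter fun γ ↦ |γ| ≤ (Q : ℝ))
    (show 0 < Q by omega) (2 * (Q : ℝ) ^ 2)
  set N := (S.filter fun γ ↦ |γ| ≤ (Q : ℝ)).card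
  have hn' : (1 : ℝ) ≤ n := by exact_mod_cast hn
  have hnQ' : (n : ℝ) ≤ (Q : ℝ) ^ N := by exact_mod_cast hnQ
  have hQ' : (8 : ℝ) ≤ Q := by exact_mod_cast hQ
  obtain ⟨hv₀l, hv₀u⟩ := abs_le.1 hv₀
  refine ⟨v₀ + n * (2 * (Q : ℝ) ^ 2), by nlinarith, ?_, ?_⟩
  · calc v₀ + n * (2 * (Q : ℝ) ^ 2) ≤ 1 * 1 + (Q : ℝ) ^ N * (2 * (Q : ℝ) ^ 2) := by
          rw [one_mul]; gcongr
      _ ≤ (Q : ℝ) ^ N * 1 + (Q : ℝ) ^ N * (2 * (Q : ℝ) ^ 2) := by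
          gcongr
          exact one_le_pow₀ (by linarith)
      _ = (Q : ℝ) ^ N * (1 + 2 * (Q : ℝ) ^ 2) := by ring
      _ ≤ (Q : ℝ) ^ N * (Q : ℝ) ^ 4 := by
          gcongr
          nlinarith [show (64 : ℝ) ≤ (Q : ℝ) ^ 2 by nlinarith]
      _ = (Q : ℝ) ^ (N + 4) := by rw [pow_add]
  · calc ‖zeroSum S m Q (v₀ + n * (2 * (Q : ℝ) ^ 2)) - zeroSum S m Q v₀‖
        ≤ 2 * Real.pi / Q * (Q + 1) * C :=
          norm_zeroSum_add_sub_le (by linarith) (by positivity) hS v₀ hexp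
      _ ≤ 4 * Real.pi * C := by
          refine mul_le_mul_of_nonneg_right ?_ hC
          rw [div_mul_eq_mul_div, div_le_iff₀ (by linarith)]
          nlinarith [Real.pi_pos]

lemma neg_norm_le_mul_re (hη : |η| = 1) (z : ℂ) : -‖z‖ ≤ η * z.re := by
  have habs : |η * z.re| ≤ ‖z‖ := by
    rw [abs_mul, hη, one_mul]
    exact Complex.abs_re_le_norm z
  linarith [neg_abs_le (η * z.re)]

namespace ExplicitFormulaBound

lemma neg_mul_re_gammaSide_le (h : ExplicitFormulaBound η C T S m) (hη : |η| = 1)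
    (hv₀ : |v₀| ≤ 1) (hv : 1 ≤ v) {L : ℝ} (hL : 0 ≤ L)
    (hle : ∀ u, 0 < u → η * scaledR u ≤ L + √|u - v|)
    (hzeros : ‖zeroSum S m T v - zeroSum S m T v₀‖ ≤ D) :
    -η * (gammaSide T v₀).re ≤ 8 * L + 2 * C + Real.pi * D + ‖gammaSide T v‖ := by
  have hsplit : (gammaSide T v - Real.pi * zeroSum S m T v).re =
      (gammaSide T v).re + (gammaSide T v₀ - Real.pi * zeroSum S m T v₀).re -
        (gammaSide T v₀).re + (-(Real.pi * (zeroSum S m T v - zeroSum S m T v₀))).re := by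
    rw [← Complex.add_re, ← Complex.sub_re, ← Complex.add_re]
    congr 1
    ring
  have hzeros' : ‖-(Real.pi * (zeroSum S m T v - zeroSum S m T v₀))‖ ≤ Real.pi * D := by
    rw [norm_neg, norm_mul, Complex.norm_real, Real.norm_of_nonneg Real.pi_pos.le]
    gcongr
  have hv_le := h.re_le v hv L hL hle
  have hv₀_le := h.norm_le v₀ hv₀
  rw [hsplit] at hv_le
  linarith [neg_norm_le_mul_re hη (gammaSide T v),
    neg_norm_le_mul_re hη (gammaSide T v₀ - Real.pi * zeroSum S m T v₀),
    neg_norm_le_mul_re hη (-(Real.pi * (zeroSum S m T v - zeroSum S m T v₀)))]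

end ExplicitFormulaBound

lemma exists_log_natCast_le_of_le_log_log {c u₀ : ℝ} (hη : η = 1 ∨ η = -1) (hc : 0 ≤ c)
    (hc2 : c ≤ 1 / 2) (hu₀ : 3 ≤ u₀)
    (hle : ∀ u, u₀ ≤ u → η * scaledR u ≤ c * Real.log (Real.log u)) :
    ∃ K, ∀ Q : ℕ, 8 ≤ Q → Real.log Q / 128 ≤ 24 * c * Real.log Q + K := by
  obtain ⟨A, hA, hlocal⟩ := exists_oneSidedBound_of_le_log_log hη hc hc2 hu₀ hle
  obtain ⟨C, hC, hformula⟩ := hA.exists_explicitFormulaBound_sum_le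
  obtain ⟨C₁, hlower⟩ := exists_log_le_mul_re_gammaSide
  obtain ⟨C₂, -, hupper⟩ := exists_norm_gammaSide_le
  refine ⟨C₁ + 8 * (A + c * Real.log (C + 4)) + 2 * C + Real.pi * (4 * Real.pi * C) + C₂,
    fun Q hQ ↦ ?_⟩
  have hQ' : (8 : ℝ) ≤ Q := by exact_mod_cast hQ
  obtain ⟨S, m, hsum, hcard, hbound⟩ := hformula Q (by linarith)
  have hv₀ : |-η / Q| ≤ 1 := by
    rw [abs_div, abs_neg, hA.abs_sign, Nat.abs_cast, div_le_one (by linarith)]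
    linarith
  obtain ⟨v, hQv, hvQ, hzeros⟩ := exists_norm_zeroSum_sub_le hQ hC hsum hv₀
  have hv : 3 ≤ v := by nlinarith
  have hloglog : c * Real.log (Real.log v) ≤ c * (Real.log (C + 4) + 3 * Real.log Q) := by
    gcongr
    exact log_log_le_of_le_pow (by linarith) hC hv hcard hvQ
  have htransfer := hbound.neg_mul_re_gammaSide_le hA.abs_sign hv₀ (by linarith)
    (add_nonneg hA.nonneg (mul_nonneg hc (log_log_nonneg_of_three_le hv))) (hlocal v hv) hzeros
  have hlarge := hlower Q hQ' (-η) (by rcases hη with rfl | rfl <;> simp)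
  linarith [hupper Q (by linarith) v hQv]

theorem exists_log_log_lt_mul_scaledR (hη : η = 1 ∨ η = -1) {u₀ : ℝ} (hu₀ : 3 ≤ u₀) :
    ∃ u, u₀ ≤ u ∧ 1 / 10000 * Real.log (Real.log u) < η * scaledR u := by
  by_contra! hle
  obtain ⟨K, hK⟩ := exists_log_natCast_le_of_le_log_log hη (by norm_num) (by norm_num) hu₀ hle
  obtain ⟨Q, hQ, hlogQ⟩ := ((eventually_ge_atTop 8).and
    ((Real.tendsto_log_atTop.comp tendsto_natCast_atTop_atTop).eventually_gt_atTop
      (200 * |K|))).exists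
  rw [Function.comp_apply] at hlogQ
  linarith [hK Q hQ, le_abs_self K, abs_nonneg K]

theorem exists_log_log_log_lt_mul_Rfun (hη : η = 1 ∨ η = -1) (X : ℝ) :
    ∃ x, X ≤ x ∧ 1 / 10000 * Real.log (Real.log (Real.log x)) / √x < η * Rfun x := by
  obtain ⟨u, hu, hlt⟩ := exists_log_log_lt_mul_scaledR hη (le_max_left 3 X)
  refine ⟨Real.exp u, by linarith [le_max_right 3 X, Real.add_one_le_exp u], ?_⟩
  rw [Real.log_exp, ← Real.exp_half, div_lt_iff₀ (Real.exp_pos _)]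
  calc 1 / 10000 * Real.log (Real.log u) < η * scaledR u := hlt
    _ = η * Rfun (Real.exp u) * Real.exp (u / 2) := by
      rw [scaledR]
      ring

end Contradiction

end RfunOmega

/-- Unconditionally, `R(x) = Ω_±(x^{-1/2} log log log x)`. -/
theorem Rfun_omega_pm :
    ∃ c : ℝ, 0 < c ∧
      (∀ X : ℝ, ∃ x : ℝ, X ≤ x ∧
        c * Real.log (Real.log (Real.log x)) / Real.sqrt x < Rfun x) ∧
      (∀ X : ℝ, ∃ x : ℝ, X ≤ x ∧
        Rfun x < -(c * Real.log (Real.log (Real.log x)) / Real.sqrt x)) := by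
  refine ⟨1 / 10000, by norm_num, fun X ↦ ?_, fun X ↦ ?_⟩
  · obtain ⟨x, hx, h⟩ := RfunOmega.exists_log_log_log_lt_mul_Rfun (.inl rfl) X
    exact ⟨x, hx, by rwa [one_mul] at h⟩
  · obtain ⟨x, hx, h⟩ := RfunOmega.exists_log_log_log_lt_mul_Rfun (.inr rfl) X
    exact ⟨x, hx, by linarith⟩
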